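/- Let 1 ≤ i₁, i₂ ≤ n²/2 and j₁, j₂ ∈ {0,1} with 2i₁−1 < n²−2i₂+1. Then: (c) if i₁ ≤ i₂, S_{2i₁,j₁}⊗S_{2i₂,j₂} ≅ ⊕_{l=0}^{2i₁−2} S_{n²+2i₁−2i₂−2l, \overline{j₁+j₂+l}} ⊕ ⊕_{l=0}^{n²/2−i₁−i₂} P_{n²−2i₁−2i₂+2−2l, \overline{j₁+j₂+l−1}}; (d) if i₁ > i₂, S_{2i₁,j₁}⊗S_{2i₂,j₂} ≅ ⊕_{l=0}^{2i₂−2} S_{n²−2i₁+2i₂−2l, \overline{j₁+j₂+l}} ⊕ ⊕_{l=0}^{n²/2−i₁−i₂} P_{n²−2i₁−2i₂+2−2l, \overline{j₁+j₂+l−1}}. -/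

import Mathlib

noncomputable section

open scoped TensorProduct

namespace QFL

/-- The defining relations of the quasi-Frobenius-Lusztig kernel `ũ_q(sl₂)`,
on the free algebra on four generators `K = ι 0`, `K̂ = ι 1`, `E = ι 2`, `F = ι 3`. -/
inductive Rel (k : Type) [Field k] (n : ℕ) (q : k) :
    FreeAlgebra k (Fin 4) → FreeAlgebra k (Fin 4) → Prop
  | Kord : Rel k n q (FreeAlgebra.ι k (0 : Fin 4) ^ n) 1
  | Khord : Rel k n q (FreeAlgebra.ι k (1 : Fin 4) ^ n)
      ((FreeAlgebra.ι k (0 : Fin 4) ^ (n - 1)) ^ 2)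
  | KKh : Rel k n q (FreeAlgebra.ι k (0 : Fin 4) * FreeAlgebra.ι k (1 : Fin 4))
      (FreeAlgebra.ι k (1 : Fin 4) * FreeAlgebra.ι k (0 : Fin 4))
  | KE : Rel k n q
      (FreeAlgebra.ι k (0 : Fin 4) * FreeAlgebra.ι k (2 : Fin 4) *
        FreeAlgebra.ι k (0 : Fin 4) ^ (n - 1))
      (q ^ n • FreeAlgebra.ι k (2 : Fin 4))
  | KF : Rel k n q
      (FreeAlgebra.ι k (0 : Fin 4) * FreeAlgebra.ι k (3 : Fin 4) *
        FreeAlgebra.ι k (0 : Fin 4) ^ (n - 1))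
      ((q ^ n)⁻¹ • FreeAlgebra.ι k (3 : Fin 4))
  | KhE : Rel k n q
      (FreeAlgebra.ι k (1 : Fin 4) * FreeAlgebra.ι k (2 : Fin 4) *
        FreeAlgebra.ι k (1 : Fin 4) ^ (n ^ 2 - 1))
      ((q ^ n * (q ^ 2)⁻¹) • FreeAlgebra.ι k (2 : Fin 4))
  | KhF : Rel k n q
      (FreeAlgebra.ι k (1 : Fin 4) * FreeAlgebra.ι k (3 : Fin 4) *
        FreeAlgebra.ι k (1 : Fin 4) ^ (n ^ 2 - 1))
      (((q ^ n)⁻¹ * q ^ 2) • FreeAlgebra.ι k (3 : Fin 4))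
  | Enil : Rel k n q (FreeAlgebra.ι k (2 : Fin 4) ^ n ^ 2) 0
  | Fnil : Rel k n q (FreeAlgebra.ι k (3 : Fin 4) ^ n ^ 2) 0
  | EF : Rel k n q
      (FreeAlgebra.ι k (3 : Fin 4) * FreeAlgebra.ι k (2 : Fin 4) -
        q⁻¹ • (FreeAlgebra.ι k (2 : Fin 4) * FreeAlgebra.ι k (3 : Fin 4)))
      (1 - FreeAlgebra.ι k (0 : Fin 4) ^ (n - 1) * FreeAlgebra.ι k (1 : Fin 4))

/-- The algebra `ũ_q(sl₂)` as the quotient of the free algebra by the defining relations. -/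
abbrev U (k : Type) [Field k] (n : ℕ) (q : k) := RingQuot (Rel k n q)

variable (k : Type) [Field k] (n : ℕ) (q : k)

def K : U k n q := RingQuot.mkAlgHom k (Rel k n q) (FreeAlgebra.ι k (0 : Fin 4))
def Kh : U k n q := RingQuot.mkAlgHom k (Rel k n q) (FreeAlgebra.ι k (1 : Fin 4))
def E : U k n q := RingQuot.mkAlgHom k (Rel k n q) (FreeAlgebra.ι k (2 : Fin 4))
def F : U k n q := RingQuot.mkAlgHom k (Rel k n q) (FreeAlgebra.ι k (3 : Fin 4))

/-- `K⁻¹ = K^(n-1)`. -/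
def Kinv : U k n q := K k n q ^ (n - 1)
/-- `K̂⁻¹ = K̂^(n²-1)`. -/
def Khinv : U k n q := Kh k n q ^ (n ^ 2 - 1)

/-- `φ_{2i} = (2/n²) Σ_{t<n²/2} q^{-2it} (K⁻¹K̂)^t`. -/
def phi (i : ℕ) : U k n q :=
  ((n ^ 2 : k)⁻¹ * 2) • ∑ t ∈ Finset.range (n ^ 2 / 2),
    (q⁻¹ ^ (2 * i * t)) • (Kinv k n q * Kh k n q) ^ t

/-- `𝟙₀ = (1/2)(1 + KK̂^(n/2))` and `𝟙₁ = (1/2)(1 - KK̂^(n/2))`. -/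
def oneJ (j : ℕ) : U k n q :=
  if j = 0 then (2 : k)⁻¹ • (1 + K k n q * Kh k n q ^ (n / 2))
  else (2 : k)⁻¹ • (1 - K k n q * Kh k n q ^ (n / 2))

/-- The idempotent `e_{2i,j} = φ_{2i} 𝟙_j`. -/
def eIdem (i j : ℕ) : U k n q := phi k n q i * oneJ k n q j

/-- `α_{2i,j} = F^(n²-1) e_{2i,j}`. -/
def alpha (i j : ℕ) : U k n q := F k n q ^ (n ^ 2 - 1) * eIdem k n q i j

/-- `β_{2i,j} = E^(2i-2) α_{2i,j}`. -/
def beta (i j : ℕ) : U k n q := E k n q ^ (2 * i - 2) * alpha k n q i j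

/-- The Gaussian number `s_q = 1 + q + ⋯ + q^(s-1)`. -/
def gauss (x : k) (s : ℕ) : k := ∑ t ∈ Finset.range s, x ^ t

/-- The span of the PBW-type monomials `F^a K^c K̂^d E^b` with `a ≤ n²-2`, `b ≤ n²-1`,
`c ≤ n-1`, `d ≤ n²-1`. -/
def pbw : Submodule k (U k n q) :=
  Submodule.span k {x | ∃ a b c d : ℕ, a ≤ n ^ 2 - 2 ∧ b ≤ n ^ 2 - 1 ∧ c ≤ n - 1 ∧
    d ≤ n ^ 2 - 1 ∧ x = F k n q ^ a * K k n q ^ c * Kh k n q ^ d * E k n q ^ b}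

/-- `γ_{2i,j}`: the unique element of the PBW span with `F·γ = β_{2i,j}`. -/
def gam (i j : ℕ) : U k n q :=
  @dite _ (∃! x, x ∈ pbw k n q ∧ F k n q * x = beta k n q i j)
    (Classical.propDecidable _) (fun h => h.choose) (fun _ => 0)

/-- The left ideal `P_{2i,j} = u·γ_{2i,j}`. -/
def P (i j : ℕ) : Submodule (U k n q) (U k n q) :=
  Submodule.span (U k n q) {gam k n q i j}

/-- `S_{2i,j} = Soc(P_{2i,j})`, the sum of all simple submodules of `P_{2i,j}`. -/
def S (i j : ℕ) : Submodule (U k n q) (U k n q) :=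
  sSup {N : Submodule (U k n q) (U k n q) | N ≤ P k n q i j ∧ IsSimpleModule (U k n q) N}

end QFL

namespace QFL

variable (k : Type) [Field k] (n : ℕ) (q : k)

/-- `1_r = (1/n) Σ_{t<n} q̄^{(n-r)t} K^t`. -/
def oneIdem (r : ℕ) : U k n q :=
  (n : k)⁻¹ • ∑ t ∈ Finset.range n, ((q ^ n) ^ ((n - r) * t)) • K k n q ^ t

/-- `♭ = Σ_{r<n} q^{-r} 1_r` (an invertible element of `u`). -/
def flat : U k n q := ∑ r ∈ Finset.range n, (q⁻¹ ^ r) • oneIdem k n q r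

/-- The property that `Δ` is the comultiplication of `ũ_q(sl₂)` (which exists and is the
unique algebra map with these values on the generators). -/
def IsComul (Δ : U k n q →ₐ[k] (U k n q ⊗[k] U k n q)) : Prop :=
  Δ (K k n q) = K k n q ⊗ₜ[k] K k n q ∧
  Δ (Kh k n q) = Kh k n q ⊗ₜ[k] Kh k n q ∧
  Δ (E k n q) = (E k n q ⊗ₜ[k] Ring.inverse (flat k n q)) +
    (Kinv k n q ⊗ₜ[k] (oneIdem k n q 0 * E k n q)) +
    ((1 : U k n q) ⊗ₜ[k] ((∑ r ∈ Finset.Icc 1 (n - 1), oneIdem k n q r) * E k n q)) ∧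
  Δ (F k n q) = (F k n q ⊗ₜ[k] flat k n q) +
    ((Kinv k n q * Kh k n q) ⊗ₜ[k]
      (F k n q * ∑ r ∈ Finset.Icc 1 (n - 1), oneIdem k n q r)) +
    (Kh k n q ⊗ₜ[k] (F k n q * oneIdem k n q 0))

instance (N : Submodule (U k n q) (U k n q)) : SMulCommClass (U k n q) k N := by
  constructor
  intro a b m
  ext
  show a • b • (m : U k n q) = b • a • (m : U k n q)
  rw [smul_comm]

/-- The `u`-module structure on `M ⊗[k] N` obtained from left `u`-modules `M`, `N` by letting
`u` act through the comultiplication `Δ`. -/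
def tensorModule (Δ : U k n q →ₐ[k] (U k n q ⊗[k] U k n q))
    (M N : Type) [AddCommGroup M] [Module k M] [Module (U k n q) M]
    [IsScalarTower k (U k n q) M] [SMulCommClass (U k n q) k M]
    [AddCommGroup N] [Module k N] [Module (U k n q) N]
    [IsScalarTower k (U k n q) N] [SMulCommClass (U k n q) k N] :
    Module (U k n q) (M ⊗[k] N) :=
  Module.compHom (M ⊗[k] N)
    ((Module.endTensorEndAlgHom (R := k) (S := k) (A := k) (M := M) (N := N)).comp
      ((Algebra.TensorProduct.map (Algebra.lsmul k k M) (Algebra.lsmul k k N)).comp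
        Δ)).toRingHom

end QFL

/-!
On a lowest weight vector `v` with `K⁻¹K̂`-eigenvalue `a` one has
`F E^s v = lowerCoeff q s a • E^(s-1) v`, where the scalar vanishes for at most one `s` with
`0 < s < n²`. The simple module `S_{2i,j}` is the `E`-string of length `n² - 2i + 1` ending just
before this zero, whereas `P_{2i,j}` is glued from the full string of `α` and the string of `γ`
along `F γ = E^(2i-2) α`. That `α` generates a full string and that `γ` exists is seen in an
auxiliary representation on the monomials `F^a E^b`, which replaces the Poincaré–Birkhoff–Witt
theorem.

The tensor product of two simple modules is a grid of vectors `E^a v ⊗ E^b w`, on which `E` and `F`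
move one index at a time with nonzero coefficients. In each degree below the length of the shorter
side such a grid contains one lowest weight vector up to scalar, and there are no others. Each of
them generates a simple summand, or else lies, as the `E^(2i-1) α` or the `α` of some
`P_{2i,j}`, in a projective one. The resulting map from the direct sum is injective because it is so
on the kernel of `F`, which meets every nonzero submodule; it is bijective by a dimension count.
-/

namespace QFL

section QCommutation

variable {k A : Type*} [CommRing k] [Ring A] [Algebra k A] {c c' : k} {x x' y : A}

/-- `x` and `y` commute up to the scalar `c`: `x y = c y x`. -/
def QCommute (c : k) (x y : A) : Prop := x * y = c • (y * x)

namespace QCommute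

theorem mul_left (h : QCommute c x y) (h' : QCommute c' x' y) : QCommute (c * c') (x * x') y := by
  rw [QCommute, mul_assoc, h', mul_smul_comm, ← mul_assoc, h, smul_mul_assoc, smul_smul, mul_assoc,
    mul_comm]

theorem mul_right (h : QCommute c x y) (h' : QCommute c' x x') :
    QCommute (c * c') x (y * x') := by
  rw [QCommute, ← mul_assoc, h, smul_mul_assoc, mul_assoc, h', mul_smul_comm, smul_smul, mul_assoc]

theorem pow_left (h : QCommute c x y) (m : ℕ) : QCommute (c ^ m) (x ^ m) y := by
  induction m with
  | zero => simp [QCommute]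
  | succ m ih => simpa only [pow_succ] using ih.mul_left h

theorem pow_right (h : QCommute c x y) (m : ℕ) : QCommute (c ^ m) x (y ^ m) := by
  induction m with
  | zero => simp [QCommute]
  | succ m ih => simpa only [pow_succ] using ih.mul_right h

theorem iff_mul_mul_pow {m : ℕ} (hm : 0 < m) (hx : x ^ m = 1) :
    x * y * x ^ (m - 1) = c • y ↔ QCommute c x y := by
  have hl : x ^ (m - 1) * x = 1 := by rw [← pow_succ, Nat.sub_add_cancel hm, hx]
  have hr : x * x ^ (m - 1) = 1 := by rw [← pow_succ', Nat.sub_add_cancel hm, hx]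
  constructor
  · intro h
    rw [QCommute, ← smul_mul_assoc, ← h, mul_assoc, hl, mul_one]
  · intro h
    rw [h, smul_mul_assoc, mul_assoc, hr, mul_one]

end QCommute

theorem QCommute.symm {k A : Type*} [Field k] [Ring A] [Algebra k A] {c : k} {x y : A}
    (hc : c ≠ 0) (h : QCommute c x y) : QCommute c⁻¹ y x := by
  rw [QCommute, h, inv_smul_smul₀ hc]

end QCommutation

theorem mul_pow_succ_of_mul_eq {k A : Type*} [CommRing k] [Ring A] [Algebra k A] {c d : k}
    {e f g : A} (hfe : f * e = c • (e * f) + d • (1 - g)) (hge : QCommute (c ^ 2) g e) (s : ℕ) :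
    f * e ^ (s + 1) = c ^ (s + 1) • (e ^ (s + 1) * f)
      + (d * ∑ t ∈ Finset.range (s + 1), c ^ t) • (e ^ s * (1 - c ^ s • g)) := by
  induction s with
  | zero => simp [hfe]
  | succ s ih =>
    have hsum : ∑ t ∈ Finset.range (s + 2), c ^ t
        = c * ∑ t ∈ Finset.range (s + 1), c ^ t + 1 := by
      rw [Finset.sum_range_succ', Finset.mul_sum, pow_zero]
      simp only [pow_succ']
    have hsum' : ∑ t ∈ Finset.range (s + 2), c ^ t
        = ∑ t ∈ Finset.range (s + 1), c ^ t + c ^ (s + 1) := Finset.sum_range_succ _ _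
    have hge' : e ^ s * g * e = c ^ 2 • (e ^ (s + 1) * g) := by
      rw [mul_assoc, hge, mul_smul_comm, ← mul_assoc, ← pow_succ]
    have hfe' : e ^ (s + 1) * f * e
        = c • (e ^ (s + 2) * f) + d • (e ^ (s + 1) - e ^ (s + 1) * g) := by
      rw [mul_assoc, hfe, mul_add, mul_smul_comm, ← mul_assoc, ← pow_succ, mul_smul_comm, mul_sub,
        mul_one]
    calc f * e ^ (s + 2)
        = f * e ^ (s + 1) * e := by rw [pow_succ, mul_assoc]
      _ = c ^ (s + 1) • (c • (e ^ (s + 2) * f) + d • (e ^ (s + 1) - e ^ (s + 1) * g))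
          + (d * ∑ t ∈ Finset.range (s + 1), c ^ t) •
            (e ^ (s + 1) - (c ^ s * c ^ 2) • (e ^ (s + 1) * g)) := by
        rw [ih, add_mul, smul_mul_assoc, smul_mul_assoc, hfe', mul_sub, mul_one, sub_mul,
          mul_smul_comm, smul_mul_assoc, hge', smul_smul, ← pow_succ]
      _ = c ^ (s + 2) • (e ^ (s + 2) * f) + (d * ∑ t ∈ Finset.range (s + 2), c ^ t) • e ^ (s + 1)
          - (d * (c ^ (s + 1) * (c * ∑ t ∈ Finset.range (s + 1), c ^ t + 1))) •
            (e ^ (s + 1) * g) := by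
        rw [hsum']; module
      _ = _ := by rw [← hsum, mul_sub, mul_one, mul_smul_comm]; module

section Relations

variable (k : Type) [Field k] (n : ℕ) (q : k)

/-- The standing hypotheses on `n` and `q`. -/
structure Admissible : Prop where
  pos : 0 < n
  four_dvd : 4 ∣ n
  isPrimitiveRoot : IsPrimitiveRoot q (n ^ 2)

/-- The grouplike element `K⁻¹K̂`, which occurs in `FE - q⁻¹EF` and in `φ_{2i}`. -/
def G : U k n q := Kinv k n q * Kh k n q

/-- The involution `K K̂^(n/2)`, which occurs in `𝟙₀` and `𝟙₁`. -/
def H : U k n q := K k n q * Kh k n q ^ (n / 2)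

variable {k n q}

theorem K_pow : K k n q ^ n = 1 := by
  simpa [K, map_pow] using RingQuot.mkAlgHom_rel k (Rel.Kord (k := k) (n := n) (q := q))

theorem Kh_pow : Kh k n q ^ n = Kinv k n q ^ 2 := by
  simpa [K, Kh, Kinv, map_pow] using
    RingQuot.mkAlgHom_rel k (Rel.Khord (k := k) (n := n) (q := q))

theorem commute_K_Kh : Commute (K k n q) (Kh k n q) := by
  simpa [commute_iff_eq, K, Kh, map_mul] using
    RingQuot.mkAlgHom_rel k (Rel.KKh (k := k) (n := n) (q := q))

theorem E_pow_sq : E k n q ^ n ^ 2 = 0 := by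
  simpa [E, map_pow] using RingQuot.mkAlgHom_rel k (Rel.Enil (k := k) (n := n) (q := q))

theorem F_pow_sq : F k n q ^ n ^ 2 = 0 := by
  simpa [F, map_pow] using RingQuot.mkAlgHom_rel k (Rel.Fnil (k := k) (n := n) (q := q))

theorem E_pow_eq_zero {s : ℕ} (hs : n ^ 2 ≤ s) : E k n q ^ s = 0 := pow_eq_zero_of_le hs E_pow_sq

theorem F_mul_E : F k n q * E k n q = q⁻¹ • (E k n q * F k n q) + (1 - G k n q) := by
  have h := RingQuot.mkAlgHom_rel k (Rel.EF (k := k) (n := n) (q := q))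
  simp only [map_sub, map_mul, map_smul, map_one, map_pow] at h
  rw [G, Kinv, K, Kh, F, E, ← h]
  abel

theorem Kh_pow_sq : Kh k n q ^ n ^ 2 = 1 := by
  rw [sq, pow_mul, Kh_pow, Kinv, ← pow_mul, ← pow_mul,
    show (n - 1) * (2 * n) = n * ((n - 1) * 2) by ring, pow_mul, K_pow, one_pow]

theorem commute_Kinv_Kh : Commute (Kinv k n q) (Kh k n q) := commute_K_Kh.pow_left _

theorem commute_K_Kinv : Commute (K k n q) (Kinv k n q) := (Commute.refl _).pow_right _

theorem commute_G_K : Commute (G k n q) (K k n q) := commute_K_Kinv.symm.mul_left commute_K_Kh.symm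

theorem commute_G_H : Commute (G k n q) (H k n q) :=
  commute_G_K.mul_right ((commute_Kinv_Kh.mul_left (Commute.refl _)).pow_right _)

namespace Admissible

variable (hnq : Admissible k n q)
include hnq

theorem sixteen_dvd : 16 ∣ n ^ 2 := pow_dvd_pow_of_dvd hnq.four_dvd 2

theorem sixteen_le : 16 ≤ n ^ 2 := Nat.le_of_dvd (pow_pos hnq.pos 2) hnq.sixteen_dvd

theorem two_dvd : 2 ∣ n := dvd_trans (by norm_num) hnq.four_dvd

theorem two_dvd_sq : 2 ∣ n ^ 2 := dvd_pow hnq.two_dvd two_ne_zero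

theorem q_ne_zero : q ≠ 0 := hnq.isPrimitiveRoot.ne_zero (pow_pos hnq.pos 2).ne'

theorem q_ne_one : q ≠ 1 := hnq.isPrimitiveRoot.ne_one (by have := hnq.sixteen_le; omega)

theorem q_pow_sq : q ^ n ^ 2 = 1 := hnq.isPrimitiveRoot.pow_eq_one

theorem isPrimitiveRoot_q_pow : IsPrimitiveRoot (q ^ n) n :=
  hnq.isPrimitiveRoot.pow (pow_pos hnq.pos 2) (sq n)

theorem isPrimitiveRoot_q_sq : IsPrimitiveRoot (q ^ 2) (n ^ 2 / 2) :=
  hnq.isPrimitiveRoot.pow (pow_pos hnq.pos 2) (Nat.mul_div_cancel' hnq.two_dvd_sq).symm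

theorem q_pow_half : q ^ (n ^ 2 / 2) = -1 :=
  (hnq.isPrimitiveRoot.pow (pow_pos hnq.pos 2)
    (Nat.div_mul_cancel hnq.two_dvd_sq).symm).eq_neg_one_of_two_right

theorem q_pow_pow_pred : (q ^ n) ^ (n - 1) = (q ^ n)⁻¹ := by
  apply eq_inv_of_mul_eq_one_left
  rw [← pow_succ, Nat.sub_add_cancel hnq.pos, hnq.isPrimitiveRoot_q_pow.pow_eq_one]

theorem K_mul_Kinv : K k n q * Kinv k n q = 1 := by
  rw [Kinv, ← pow_succ', Nat.sub_add_cancel hnq.pos, K_pow]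

theorem Kinv_mul_K : Kinv k n q * K k n q = 1 := by
  rw [commute_K_Kinv.symm.eq, hnq.K_mul_Kinv]

theorem qcommute_K_E : QCommute (q ^ n) (K k n q) (E k n q) := by
  rw [← QCommute.iff_mul_mul_pow hnq.pos K_pow]
  simpa only [K, E, map_mul, map_pow, map_smul] using
    RingQuot.mkAlgHom_rel k (Rel.KE (k := k) (n := n) (q := q))

theorem qcommute_K_F : QCommute (q ^ n)⁻¹ (K k n q) (F k n q) := by
  rw [← QCommute.iff_mul_mul_pow hnq.pos K_pow]
  simpa only [K, F, map_mul, map_pow, map_smul] using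
    RingQuot.mkAlgHom_rel k (Rel.KF (k := k) (n := n) (q := q))

theorem qcommute_Kh_E : QCommute (q ^ n * (q ^ 2)⁻¹) (Kh k n q) (E k n q) := by
  rw [← QCommute.iff_mul_mul_pow (pow_pos hnq.pos 2) Kh_pow_sq]
  simpa only [Kh, E, map_mul, map_pow, map_smul] using
    RingQuot.mkAlgHom_rel k (Rel.KhE (k := k) (n := n) (q := q))

theorem qcommute_Kh_F : QCommute ((q ^ n)⁻¹ * q ^ 2) (Kh k n q) (F k n q) := by
  rw [← QCommute.iff_mul_mul_pow (pow_pos hnq.pos 2) Kh_pow_sq]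
  simpa only [Kh, F, map_mul, map_pow, map_smul] using
    RingQuot.mkAlgHom_rel k (Rel.KhF (k := k) (n := n) (q := q))

theorem qcommute_G_E : QCommute (q⁻¹ ^ 2) (G k n q) (E k n q) := by
  have hq := hnq.q_ne_zero
  have hc : q⁻¹ ^ 2 = (q ^ n) ^ (n - 1) * (q ^ n * (q ^ 2)⁻¹) := by
    rw [hnq.q_pow_pow_pred]
    field_simp
  rw [hc]
  exact (hnq.qcommute_K_E.pow_left (n - 1)).mul_left hnq.qcommute_Kh_E

theorem qcommute_G_F : QCommute (q ^ 2) (G k n q) (F k n q) := by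
  have hq := hnq.q_ne_zero
  have hc : q ^ 2 = (q ^ n)⁻¹ ^ (n - 1) * ((q ^ n)⁻¹ * q ^ 2) := by
    rw [inv_pow, hnq.q_pow_pow_pred]
    field_simp
  rw [hc]
  exact (hnq.qcommute_K_F.pow_left (n - 1)).mul_left hnq.qcommute_Kh_F

theorem q_pow_mul_pow_half : q ^ n * (q ^ n * (q ^ 2)⁻¹) ^ (n / 2) = -1 := by
  have hq := hnq.q_ne_zero
  have hn : 2 * (n / 2) = n := Nat.mul_div_cancel' hnq.two_dvd
  have hn2 : n * (n / 2) = n ^ 2 / 2 := by rw [sq, Nat.mul_div_assoc _ hnq.two_dvd]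
  rw [mul_pow, inv_pow, ← pow_mul, ← pow_mul, hn, hn2, hnq.q_pow_half]
  field_simp

theorem qcommute_H_E : QCommute (-1 : k) (H k n q) (E k n q) := by
  rw [← hnq.q_pow_mul_pow_half]
  exact hnq.qcommute_K_E.mul_left (hnq.qcommute_Kh_E.pow_left (n / 2))

theorem qcommute_H_F : QCommute (-1 : k) (H k n q) (F k n q) := by
  have hc := congrArg (·⁻¹) hnq.q_pow_mul_pow_half
  simp only [mul_inv, ← inv_pow (q ^ n * _), inv_inv, inv_neg, inv_one] at hc
  rw [← hc]
  exact hnq.qcommute_K_F.mul_left (hnq.qcommute_Kh_F.pow_left (n / 2))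

theorem H_sq : H k n q ^ 2 = 1 := by
  rw [H, (commute_K_Kh.pow_right _).mul_pow, ← pow_mul, Nat.div_mul_cancel hnq.two_dvd, Kh_pow,
    ← commute_K_Kinv.mul_pow, hnq.K_mul_Kinv, one_pow]

theorem G_pow : G k n q ^ (n ^ 2 / 2) = 1 := by
  have hn2 : n ^ 2 / 2 = n * (n / 2) := by rw [sq, Nat.mul_div_assoc _ hnq.two_dvd]
  rw [G, commute_Kinv_Kh.mul_pow, hn2, pow_mul (Kh k n q), Kh_pow, ← pow_mul,
    Nat.mul_div_cancel' hnq.two_dvd, ← pow_add, Kinv, ← pow_mul,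
    show (n - 1) * (n * (n / 2) + n) = n * ((n / 2 + 1) * (n - 1)) by ring, pow_mul, K_pow, one_pow]

theorem G_pow_mul_K_pow : G k n q ^ (n / 2) * K k n q ^ (1 + n / 2) = H k n q :=
  calc G k n q ^ (n / 2) * K k n q ^ (1 + n / 2)
      = (G k n q * K k n q) ^ (n / 2) * K k n q := by
        rw [commute_G_K.mul_pow, add_comm, pow_succ, mul_assoc]
    _ = Kh k n q ^ (n / 2) * K k n q := by
        rw [G, mul_assoc, commute_K_Kh.symm.eq, ← mul_assoc, hnq.Kinv_mul_K, one_mul]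
    _ = H k n q := (commute_K_Kh.pow_right _).symm.eq

theorem K_pow_pow : (K k n q ^ (1 + n / 2)) ^ (1 + n / 2) = K k n q := by
  obtain ⟨m, rfl⟩ := hnq.four_dvd
  rw [show 4 * m / 2 = 2 * m by omega, ← pow_mul,
    show (1 + 2 * m) * (1 + 2 * m) = 4 * m * (1 + m) + 1 by ring, pow_succ, pow_mul, K_pow, one_pow,
    one_mul]

theorem G_mul_K : G k n q * K k n q = Kh k n q := by
  rw [G, mul_assoc, commute_K_Kh.symm.eq, ← mul_assoc, hnq.Kinv_mul_K, one_mul]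

theorem E_mul_F : E k n q * F k n q = q • (F k n q * E k n q) + (-q) • (1 - G k n q) := by
  have hgeneral : ∀ {A : Type} [Ring A] [Algebra k A] {e f g : A},
      f * e = q⁻¹ • (e * f) + (1 - g) → e * f = q • (f * e) + (-q) • (1 - g) := by
    intro A _ _ e f g h
    rw [h, smul_add, smul_inv_smul₀ hnq.q_ne_zero, neg_smul, add_neg_cancel_right]
  exact hgeneral F_mul_E

end Admissible

end Relations

theorem QCommute.smul_smul_eq {k A M : Type*} [CommRing k] [Ring A] [Algebra k A] [AddCommGroup M]
    [Module k M] [Module A M] [IsScalarTower k A M] {a c : k} {x y : A} {v : M}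
    (h : QCommute c x y) (hv : x • v = a • v) : x • y • v = (a * c) • y • v := by
  rw [← mul_smul, h, smul_assoc, mul_smul, hv, smul_comm y, smul_smul, mul_comm]

theorem pow_smul_of_smul_eq {k A M : Type*} [CommSemiring k] [Semiring A] [Algebra k A]
    [AddCommMonoid M] [Module k M] [Module A M] [IsScalarTower k A M] {a : k} {x : A} {v : M}
    (h : x • v = a • v) (m : ℕ) : x ^ m • v = a ^ m • v := by
  induction m with
  | zero => simp
  | succ m ih => rw [pow_succ, mul_smul, h, smul_comm, ih, smul_smul, pow_succ']

section SpectralIdempotent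

variable {k : Type*} [Field k]

theorem geom_sum_eq_zero_of_pow_eq_one {N : ℕ} {y : k} (h : y ^ N = 1) (h1 : y ≠ 1) :
    ∑ t ∈ Finset.range N, y ^ t = 0 := by
  have h2 := geom_sum_mul y N
  rw [h, sub_self] at h2
  exact (mul_eq_zero.mp h2).resolve_right (sub_ne_zero.mpr h1)

variable {A : Type*} [Ring A] [Algebra k A] {N : ℕ} {z : k} {x : A} {r : ℕ}

/-- The projection onto the `z ^ r`-eigenspace of an element `x` with `x ^ N = 1`, where `z` is a
primitive `N`-th root of unity. The `φ_{2i}`, `𝟙_j` and `1_r` are all of this form. -/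
def spectralIdempotent (N : ℕ) (z : k) (x : A) (r : ℕ) : A :=
  (N : k)⁻¹ • ∑ t ∈ Finset.range N, (z⁻¹ ^ r • x) ^ t

theorem mul_spectralIdempotent (hz : z ^ N = 1) (hz0 : z ≠ 0) (hx : x ^ N = 1) :
    x * spectralIdempotent N z x r = z ^ r • spectralIdempotent N z x r := by
  set y := z⁻¹ ^ r • x with hy
  have hy1 : y ^ N = 1 := by
    rw [hy, smul_pow, hx, ← pow_mul, mul_comm, pow_mul, inv_pow, hz, inv_one, one_pow, one_smul]
  have hxy : x = z ^ r • y := by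
    rw [hy, smul_smul, inv_pow, mul_inv_cancel₀ (pow_ne_zero _ hz0), one_smul]
  have hsum := mul_geom_sum y N
  rw [hy1, sub_self, sub_mul, one_mul, sub_eq_zero] at hsum
  rw [spectralIdempotent, ← hy, hxy, mul_smul_comm, smul_mul_assoc, hsum, smul_comm]

theorem commute_spectralIdempotent {y : A} (h : Commute y x) (N : ℕ) (z : k) (r : ℕ) :
    Commute y (spectralIdempotent N z x r) :=
  (Commute.sum_right _ _ _ fun _ _ => (h.smul_right _).pow_right _).smul_right _

theorem sum_spectralIdempotent (hN : (N : k) ≠ 0) (hz : IsPrimitiveRoot z N) (x : A) (r₀ : ℕ) :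
    ∑ r ∈ Finset.range N, spectralIdempotent N z x (r₀ + r) = 1 := by
  have hN0 : 0 < N := Nat.pos_of_ne_zero fun h => hN (by rw [h, Nat.cast_zero])
  have horth : ∀ t ∈ Finset.range N, ∑ r ∈ Finset.range N, (z⁻¹ ^ (r₀ + r) • x) ^ t
      = if t = 0 then (N : k) • (1 : A) else 0 := by
    intro t ht
    split_ifs with h0
    · simp [h0, Nat.cast_smul_eq_nsmul]
    · have hgeom : ∑ r ∈ Finset.range N, (z⁻¹ ^ t) ^ r = 0 := by
        apply geom_sum_eq_zero_of_pow_eq_one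
        · rw [← pow_mul, mul_comm, pow_mul, hz.inv.pow_eq_one, one_pow]
        · exact hz.inv.pow_ne_one_of_pos_of_lt h0 (Finset.mem_range.mp ht)
      have hterm : ∀ r, (z⁻¹ ^ (r₀ + r) • x) ^ t = (z⁻¹ ^ t) ^ r • (z⁻¹ ^ (r₀ * t) • x ^ t) := by
        intro r
        rw [smul_pow, smul_smul, ← pow_mul, ← pow_mul, ← pow_add]
        ring_nf
      simp only [hterm, ← Finset.sum_smul, hgeom, zero_smul]
  simp only [spectralIdempotent]
  rw [← Finset.smul_sum, Finset.sum_comm, Finset.sum_congr rfl horth, Finset.sum_ite_eq',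
    if_pos (Finset.mem_range.mpr hN0), inv_smul_smul₀ hN]

section Module

variable {M : Type*} [AddCommGroup M] [Module k M] [Module A M] [IsScalarTower k A M] {v : M}

theorem spectralIdempotent_smul {a : k} (hv : x • v = a • v) :
    spectralIdempotent N z x r • v
      = ((N : k)⁻¹ * ∑ t ∈ Finset.range N, (z⁻¹ ^ r * a) ^ t) • v := by
  have hy : (z⁻¹ ^ r • x) • v = (z⁻¹ ^ r * a) • v := by rw [smul_assoc, hv, smul_smul]
  simp only [spectralIdempotent, smul_assoc, Finset.sum_smul, pow_smul_of_smul_eq hy, mul_smul]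

theorem spectralIdempotent_smul_of_eq (hN : (N : k) ≠ 0) (hz : z ≠ 0) (hv : x • v = z ^ r • v) :
    spectralIdempotent N z x r • v = v := by
  rw [spectralIdempotent_smul hv, ← mul_pow, inv_mul_cancel₀ hz]
  simp [hN]

theorem spectralIdempotent_smul_of_ne {a : k} (hz : z ^ N = 1) (hz0 : z ≠ 0) (ha : a ^ N = 1)
    (hne : a ≠ z ^ r) (hv : x • v = a • v) : spectralIdempotent N z x r • v = 0 := by
  rw [spectralIdempotent_smul hv, geom_sum_eq_zero_of_pow_eq_one, mul_zero, zero_smul]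
  · rw [mul_pow, ha, ← pow_mul, mul_comm r, pow_mul, inv_pow, hz, inv_one, one_pow, one_mul]
  · rwa [inv_pow, ne_eq, inv_mul_eq_one₀ (pow_ne_zero _ hz0), eq_comm]

end Module

theorem spectralIdempotent_mul_spectralIdempotent (hN : (N : k) ≠ 0) (hz : IsPrimitiveRoot z N)
    (hx : x ^ N = 1) {s : ℕ} (hr : r < N) (hs : s < N) :
    spectralIdempotent N z x r * spectralIdempotent N z x s
      = if r = s then spectralIdempotent N z x s else 0 := by
  have hz0 : z ≠ 0 := hz.ne_zero (by omega)
  have hxs : x • spectralIdempotent N z x s = z ^ s • spectralIdempotent N z x s :=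
    mul_spectralIdempotent hz.pow_eq_one hz0 hx
  split_ifs with h
  · rw [h]
    exact spectralIdempotent_smul_of_eq hN hz0 hxs
  · refine spectralIdempotent_smul_of_ne hz.pow_eq_one hz0 ?_ ?_ hxs
    · rw [← pow_mul, mul_comm, pow_mul, hz.pow_eq_one, one_pow]
    · exact fun e => h (hz.pow_inj hs hr e).symm

theorem sum_smul_spectralIdempotent_mul_eq_one (hN : (N : k) ≠ 0) (hz : IsPrimitiveRoot z N)
    (hx : x ^ N = 1) {c d : ℕ → k} (hcd : ∀ r, c r * d r = 1) :
    (∑ r ∈ Finset.range N, c r • spectralIdempotent N z x r) *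
      (∑ r ∈ Finset.range N, d r • spectralIdempotent N z x r) = 1 := by
  have hone := sum_spectralIdempotent hN hz x 0
  simp only [zero_add] at hone
  rw [Finset.sum_mul_sum, ← hone]
  refine Finset.sum_congr rfl fun r hr => ?_
  have hr' := Finset.mem_range.mp hr
  rw [Finset.sum_eq_single r, smul_mul_smul_comm,
    spectralIdempotent_mul_spectralIdempotent hN hz hx hr' hr', if_pos rfl, hcd, one_smul]
  · intro s hs hsr
    rw [smul_mul_smul_comm,
      spectralIdempotent_mul_spectralIdempotent hN hz hx hr' (Finset.mem_range.mp hs),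
      if_neg hsr.symm, smul_zero]
  · exact fun h => absurd hr h

theorem isUnit_sum_smul_spectralIdempotent (hN : (N : k) ≠ 0) (hz : IsPrimitiveRoot z N)
    (hx : x ^ N = 1) {c : ℕ → k} (hc : ∀ r, c r ≠ 0) :
    IsUnit (∑ r ∈ Finset.range N, c r • spectralIdempotent N z x r) :=
  isUnit_iff_exists.mpr ⟨∑ r ∈ Finset.range N, (c r)⁻¹ • spectralIdempotent N z x r,
    sum_smul_spectralIdempotent_mul_eq_one hN hz hx fun r => mul_inv_cancel₀ (hc r),
    sum_smul_spectralIdempotent_mul_eq_one hN hz hx fun r => inv_mul_cancel₀ (hc r)⟩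

end SpectralIdempotent

section Weights

variable {k : Type} [Field k] {n : ℕ} {q : k} {M : Type*} [AddCommGroup M] [Module (U k n q) M]

/-- `x` is a weight vector of weight `(a, b)`, these being its eigenvalues for `K⁻¹K̂` and for the
involution `K K̂^(n/2)`. Both `K` and `K̂` are words in these two elements. -/
structure IsWeight (n : ℕ) (q a b : k) [Module k M] [Module (U k n q) M] (x : M) : Prop where
  G_smul : G k n q • x = a • x
  H_smul : H k n q • x = b • x

/-- The eigenvalue of `K` on vectors of weight `(a, b)`. -/
def eigenvalueK (n : ℕ) (a b : k) : k := ((a ^ (n / 2))⁻¹ * b) ^ (1 + n / 2)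

/-- The scalar in `F E^s x = q⁻ˢ E^s F x + lowerCoeff q s a E^(s-1) x`, for `x` with
`K⁻¹K̂`-eigenvalue `a`. -/
def lowerCoeff (q : k) (s : ℕ) (a : k) : k := gauss k q⁻¹ s * (1 - q * q⁻¹ ^ s * a)

/-- The scalar in `E F^s x = q^s F^s E x + raiseCoeff q s a F^(s-1) x`, for `x` with
`K⁻¹K̂`-eigenvalue `a`. -/
def raiseCoeff (q : k) (s : ℕ) (a : k) : k := q * gauss k q s * (a * q ^ s * q⁻¹ - 1)

theorem lowerCoeff_zero (a : k) : lowerCoeff q 0 a = 0 := by simp [lowerCoeff, gauss]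

theorem raiseCoeff_zero (a : k) : raiseCoeff q 0 a = 0 := by simp [raiseCoeff, gauss]

theorem neg_one_pow_sq (j : ℕ) : ((-1 : k) ^ j) ^ 2 = 1 := by
  rw [← pow_mul, mul_comm, pow_mul, neg_one_sq, one_pow]

theorem raiseCoeff_sub_raiseCoeff_succ (hq : q ≠ 0) (s : ℕ) (a : k) :
    raiseCoeff q s a - q⁻¹ * raiseCoeff q (s + 1) a = 1 - a * q ^ (2 * s) := by
  have hsucc : gauss k q (s + 1) = q * gauss k q s + 1 := by
    rw [gauss, Finset.sum_range_succ', gauss, Finset.mul_sum, pow_zero]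
    simp only [pow_succ']
  have hgeom : gauss k q s * (q - 1) = q ^ s - 1 := geom_sum_mul q s
  rw [raiseCoeff, raiseCoeff, hsucc, pow_succ, mul_comm 2 s, pow_mul q s 2]
  field_simp
  linear_combination -a * q ^ s * hgeom

namespace Admissible

variable (hnq : Admissible k n q) {a b : k}
include hnq

theorem gauss_sq : gauss k q (n ^ 2) = 0 :=
  geom_sum_eq_zero_of_pow_eq_one hnq.q_pow_sq hnq.q_ne_one

theorem gauss_inv_sq : gauss k q⁻¹ (n ^ 2) = 0 :=
  geom_sum_eq_zero_of_pow_eq_one (by rw [inv_pow, hnq.q_pow_sq, inv_one])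
    (inv_ne_one.mpr hnq.q_ne_one)

theorem lowerCoeff_eq_zero_iff {s e : ℕ} :
    lowerCoeff q s (q ^ e) = 0 ↔ n ^ 2 ∣ s ∨ q ^ s = q ^ (e + 1) := by
  have hq := hnq.q_ne_zero
  have hq1 : q⁻¹ - 1 ≠ 0 := sub_ne_zero.mpr (inv_ne_one.mpr hnq.q_ne_one)
  have hgauss : gauss k q⁻¹ s = 0 ↔ n ^ 2 ∣ s := by
    rw [gauss, ← mul_eq_zero_iff_right hq1, geom_sum_mul, sub_eq_zero, inv_pow, inv_eq_one,
      hnq.isPrimitiveRoot.pow_eq_one_iff_dvd]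
  have hfactor : 1 - q * q⁻¹ ^ s * q ^ e = 0 ↔ q ^ s = q ^ (e + 1) := by
    rw [sub_eq_zero, inv_pow, mul_right_comm, ← pow_succ', eq_comm,
      mul_inv_eq_one₀ (pow_ne_zero s hq), eq_comm]
  rw [lowerCoeff, mul_eq_zero, hgauss, hfactor]

theorem pow_half_mul_half : n / 2 * n = n ^ 2 / 2 := by
  rw [mul_comm, sq, Nat.mul_div_assoc _ hnq.two_dvd]

theorem ne_zero_of_pow_half_sq (ha : a ^ (n ^ 2 / 2) = 1) : a ≠ 0 := by
  rintro rfl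
  rw [zero_pow (by have := hnq.sixteen_le; omega)] at ha
  exact zero_ne_one ha

theorem inv_pow_half_mul_pow (ha : a ^ (n ^ 2 / 2) = 1) (hb : b ^ 2 = 1) :
    ((a ^ (n / 2))⁻¹ * b) ^ n = 1 := by
  have hbn : b ^ n = 1 := by rw [← Nat.mul_div_cancel' hnq.two_dvd, pow_mul, hb, one_pow]
  rw [mul_pow, inv_pow, ← pow_mul, hnq.pow_half_mul_half, ha, hbn, inv_one, one_mul]

theorem eigenvalueK_pow (ha : a ^ (n ^ 2 / 2) = 1) (hb : b ^ 2 = 1) :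
    eigenvalueK n a b ^ n = 1 := by
  rw [eigenvalueK, pow_right_comm, hnq.inv_pow_half_mul_pow ha hb, one_pow]

theorem eigenvalueK_pow_one_add_half (ha : a ^ (n ^ 2 / 2) = 1) (hb : b ^ 2 = 1) :
    eigenvalueK n a b ^ (1 + n / 2) = (a ^ (n / 2))⁻¹ * b := by
  have hpow := hnq.inv_pow_half_mul_pow ha hb
  rw [eigenvalueK]
  generalize (a ^ (n / 2))⁻¹ * b = y at hpow ⊢
  obtain ⟨m, rfl⟩ := hnq.four_dvd
  rw [show 4 * m / 2 = 2 * m by omega, ← pow_mul,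
    show (1 + 2 * m) * (1 + 2 * m) = 4 * m * (1 + m) + 1 by ring, pow_succ, pow_mul, hpow, one_pow,
    one_mul]

theorem mul_eigenvalueK_pow (ha : a ^ (n ^ 2 / 2) = 1) (hb : b ^ 2 = 1) :
    (a * eigenvalueK n a b) ^ n = (eigenvalueK n a b ^ (n - 1)) ^ 2 := by
  have hκ := hnq.eigenvalueK_pow ha hb
  have hsq : a ^ n * eigenvalueK n a b ^ 2 = 1 := by
    have han : a ^ n = (a ^ (n / 2)) ^ 2 := by rw [← pow_mul, Nat.div_mul_cancel hnq.two_dvd]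
    have hκ2 : eigenvalueK n a b ^ 2 = (eigenvalueK n a b ^ (1 + n / 2)) ^ 2 := by
      rw [← pow_mul, show (1 + n / 2) * 2 = 2 + n by have := hnq.two_dvd; omega, pow_add, hκ,
        mul_one]
    have ha0 : a ^ (n / 2) ≠ 0 := pow_ne_zero _ (hnq.ne_zero_of_pow_half_sq ha)
    rw [hκ2, hnq.eigenvalueK_pow_one_add_half ha hb, han, ← mul_pow, mul_inv_cancel_left₀ ha0, hb]
  have hinv : eigenvalueK n a b ^ (n - 1) * eigenvalueK n a b = 1 := by
    rw [← pow_succ, Nat.sub_add_cancel hnq.pos, hκ]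
  rw [mul_pow, hκ, mul_one, ← mul_one (a ^ n), ← one_pow (M := k) 2, ← hinv, mul_pow, mul_left_comm,
    hsq, mul_one]

theorem eigenvalueK_mul_pow (ha : a ^ (n ^ 2 / 2) = 1) (hb : b ^ 2 = 1) :
    eigenvalueK n a b * (a * eigenvalueK n a b) ^ (n / 2) = b := by
  have ha0 : a ^ (n / 2) ≠ 0 := pow_ne_zero _ (hnq.ne_zero_of_pow_half_sq ha)
  rw [mul_pow, mul_left_comm, ← pow_succ', add_comm, hnq.eigenvalueK_pow_one_add_half ha hb,
    mul_inv_cancel_left₀ ha0]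

end Admissible

variable [Module k M] [IsScalarTower k (U k n q) M]

namespace Admissible

variable (hnq : Admissible k n q) {a b : k} {x : M}
include hnq

theorem K_smul (ha : a ≠ 0) (hx : IsWeight n q a b x) :
    K k n q • x = eigenvalueK n a b • x := by
  have hpow : K k n q ^ (1 + n / 2) • x = ((a ^ (n / 2))⁻¹ * b) • x := by
    have h := hx.H_smul
    rw [← hnq.G_pow_mul_K_pow, (commute_G_K.pow_pow _ _).eq, mul_smul,
      pow_smul_of_smul_eq hx.G_smul, smul_comm] at h
    rw [mul_smul, ← h, inv_smul_smul₀ (pow_ne_zero _ ha)]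
  have h := pow_smul_of_smul_eq hpow (1 + n / 2)
  rwa [hnq.K_pow_pow] at h

theorem Kh_smul (ha : a ≠ 0) (hx : IsWeight n q a b x) :
    Kh k n q • x = (a * eigenvalueK n a b) • x := by
  rw [← hnq.G_mul_K, mul_smul, hnq.K_smul ha hx, smul_comm, hx.G_smul, smul_smul, mul_comm]

theorem isWeight_E_pow_smul (hx : IsWeight n q a b x) (s : ℕ) :
    IsWeight n q (a * q⁻¹ ^ (2 * s)) ((-1) ^ s * b) (E k n q ^ s • x) where
  G_smul := by
    rw [(hnq.qcommute_G_E.pow_right s).smul_smul_eq hx.G_smul, ← pow_mul]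
  H_smul := by
    rw [(hnq.qcommute_H_E.pow_right s).smul_smul_eq hx.H_smul, mul_comm b]

theorem isWeight_F_pow_smul (hx : IsWeight n q a b x) (s : ℕ) :
    IsWeight n q (a * q ^ (2 * s)) ((-1) ^ s * b) (F k n q ^ s • x) where
  G_smul := by
    rw [(hnq.qcommute_G_F.pow_right s).smul_smul_eq hx.G_smul, ← pow_mul]
  H_smul := by
    rw [(hnq.qcommute_H_F.pow_right s).smul_smul_eq hx.H_smul, mul_comm b]

theorem F_smul_E_pow_smul (hx : IsWeight n q a b x) (s : ℕ) :
    F k n q • E k n q ^ s • x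
      = q⁻¹ ^ s • E k n q ^ s • F k n q • x + lowerCoeff q s a • E k n q ^ (s - 1) • x := by
  cases s with
  | zero => simp [lowerCoeff_zero]
  | succ s =>
    have hcoeff : lowerCoeff q (s + 1) a = gauss k q⁻¹ (s + 1) * (1 - q⁻¹ ^ s * a) := by
      rw [lowerCoeff, pow_succ', mul_inv_cancel_left₀ hnq.q_ne_zero]
    have hG : (1 - q⁻¹ ^ s • G k n q) • x = (1 - q⁻¹ ^ s * a) • x := by
      rw [sub_smul, one_smul, smul_assoc, hx.G_smul, smul_smul, sub_smul, one_smul]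
    have hFE : F k n q * E k n q = q⁻¹ • (E k n q * F k n q) + (1 : k) • (1 - G k n q) := by
      rw [one_smul, F_mul_E]
    rw [← mul_smul, mul_pow_succ_of_mul_eq hFE hnq.qcommute_G_E, one_mul, add_smul,
      smul_assoc, smul_assoc, mul_smul, mul_smul, hG, smul_comm (E k n q ^ s), hcoeff, mul_smul,
      gauss, Nat.add_sub_cancel]

theorem E_smul_F_pow_smul (hx : IsWeight n q a b x) (s : ℕ) :
    E k n q • F k n q ^ s • x
      = q ^ s • F k n q ^ s • E k n q • x + raiseCoeff q s a • F k n q ^ (s - 1) • x := by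
  cases s with
  | zero => simp [raiseCoeff_zero]
  | succ s =>
    have hcoeff : raiseCoeff q (s + 1) a = -q * gauss k q (s + 1) * (1 - q ^ s * a) := by
      rw [raiseCoeff, pow_succ, ← mul_assoc a, mul_inv_cancel_right₀ hnq.q_ne_zero]
      ring
    have hG : (1 - q ^ s • G k n q) • x = (1 - q ^ s * a) • x := by
      rw [sub_smul, one_smul, smul_assoc, hx.G_smul, smul_smul, sub_smul, one_smul]
    rw [← mul_smul, mul_pow_succ_of_mul_eq hnq.E_mul_F hnq.qcommute_G_F, add_smul, smul_assoc,
      smul_assoc, mul_smul, mul_smul _ (1 - _), hG, smul_comm (F k n q ^ s), hcoeff,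
      mul_smul _ (1 - _), gauss, Nat.add_sub_cancel]

end Admissible

theorem smul_mem_of_generators (A : Submodule k M) (hK : ∀ x ∈ A, K k n q • x ∈ A)
    (hKh : ∀ x ∈ A, Kh k n q • x ∈ A) (hE : ∀ x ∈ A, E k n q • x ∈ A)
    (hF : ∀ x ∈ A, F k n q • x ∈ A) (u : U k n q) : ∀ x ∈ A, u • x ∈ A := by
  obtain ⟨y, rfl⟩ := RingQuot.mkAlgHom_surjective k (Rel k n q) u
  induction y using FreeAlgebra.induction with
  | grade0 r =>
    intro x hx
    rw [AlgHom.commutes, algebraMap_smul]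
    exact A.smul_mem r hx
  | grade1 i =>
    fin_cases i
    · exact hK
    · exact hKh
    · exact hE
    · exact hF
  | mul a b ha hb =>
    intro x hx
    rw [map_mul, mul_smul]
    exact ha _ (hb _ hx)
  | add a b ha hb =>
    intro x hx
    rw [map_add, add_smul]
    exact A.add_mem (ha _ hx) (hb _ hx)

theorem map_smul_of_generators {M' : Type*} [AddCommGroup M'] [Module k M'] [Module (U k n q) M']
    [IsScalarTower k (U k n q) M'] (f : M →ₗ[k] M')
    (hK : ∀ x, f (K k n q • x) = K k n q • f x) (hKh : ∀ x, f (Kh k n q • x) = Kh k n q • f x)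
    (hE : ∀ x, f (E k n q • x) = E k n q • f x) (hF : ∀ x, f (F k n q • x) = F k n q • f x)
    (u : U k n q) : ∀ x, f (u • x) = u • f x := by
  obtain ⟨y, rfl⟩ := RingQuot.mkAlgHom_surjective k (Rel k n q) u
  induction y using FreeAlgebra.induction with
  | grade0 r => intro x; simp
  | grade1 i =>
    fin_cases i
    · exact hK
    · exact hKh
    · exact hE
    · exact hF
  | mul a b ha hb => intro x; rw [map_mul, mul_smul, ha, hb, mul_smul]
  | add a b ha hb => intro x; rw [map_add, add_smul, map_add, ha, hb, add_smul]

end Weights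

section Idempotents

variable {k : Type} [Field k] {n : ℕ} {q : k}

theorem oneJ_eq_spectralIdempotent {j : ℕ} (hj : j ≤ 1) :
    oneJ k n q j = spectralIdempotent 2 (-1 : k) (H k n q) j := by
  have hgeneral : ∀ {A : Type} [Ring A] [Algebra k A] (x : A),
      spectralIdempotent 2 (-1 : k) x 1 = (2 : k)⁻¹ • (1 - x) := by
    intro A _ _ x
    have hinv : (-1 : k)⁻¹ = -1 := inv_neg_one
    simp [spectralIdempotent, Finset.sum_range_succ, hinv, sub_eq_add_neg]
  interval_cases j
  · simp [oneJ, spectralIdempotent, Finset.sum_range_succ, H]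
  · rw [hgeneral, oneJ, if_neg one_ne_zero, H]

namespace Admissible

variable (hnq : Admissible k n q)
include hnq

theorem natCast_ne_zero : (n : k) ≠ 0 :=
  have := NeZero.of_pos hnq.pos
  hnq.isPrimitiveRoot_q_pow.neZero'.ne

theorem natCast_half_sq_ne_zero : ((n ^ 2 / 2 : ℕ) : k) ≠ 0 :=
  have : NeZero (n ^ 2 / 2) := ⟨by have := hnq.sixteen_le; omega⟩
  hnq.isPrimitiveRoot_q_sq.neZero'.ne

theorem two_ne_zero : (2 : k) ≠ 0 := by
  obtain ⟨m, rfl⟩ := hnq.two_dvd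
  exact fun h => hnq.natCast_ne_zero (by rw [Nat.cast_mul, Nat.cast_ofNat, h, zero_mul])

theorem isPrimitiveRoot_neg_one : IsPrimitiveRoot (-1 : k) 2 := by
  rw [← hnq.q_pow_half]
  exact hnq.isPrimitiveRoot.pow (pow_pos hnq.pos 2) (Nat.div_mul_cancel hnq.two_dvd_sq).symm

theorem phi_eq_spectralIdempotent (i : ℕ) :
    phi k n q i = spectralIdempotent (n ^ 2 / 2) (q ^ 2) (G k n q) i := by
  have hcast : (n ^ 2 : k)⁻¹ * 2 = ((n ^ 2 / 2 : ℕ) : k)⁻¹ := by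
    rw [← Nat.cast_pow, ← Nat.mul_div_cancel' hnq.two_dvd_sq, Nat.mul_div_cancel_left _ two_pos,
      Nat.cast_mul, Nat.cast_ofNat, mul_inv_rev, inv_mul_cancel_right₀ hnq.two_ne_zero]
  simp only [phi, spectralIdempotent, hcast, smul_pow, ← inv_pow q 2, ← pow_mul, G]

theorem oneIdem_eq_spectralIdempotent {r : ℕ} (hr : r ≤ n) :
    oneIdem k n q r = spectralIdempotent n (q ^ n) (K k n q) r := by
  have hpow : (q ^ n) ^ (n - r) = (q ^ n)⁻¹ ^ r := by
    rw [pow_sub₀ _ (pow_ne_zero _ hnq.q_ne_zero) hr, hnq.isPrimitiveRoot_q_pow.pow_eq_one, one_mul,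
      inv_pow]
  simp only [oneIdem, spectralIdempotent, pow_mul (q ^ n), hpow, smul_pow]

theorem isWeight_eIdem (i : ℕ) {j : ℕ} (hj : j ≤ 1) :
    IsWeight n q (q ^ (2 * i)) ((-1) ^ j) (eIdem k n q i j) where
  G_smul := by
    rw [smul_eq_mul, eIdem, hnq.phi_eq_spectralIdempotent, ← mul_assoc,
      mul_spectralIdempotent hnq.isPrimitiveRoot_q_sq.pow_eq_one (pow_ne_zero _ hnq.q_ne_zero)
        hnq.G_pow, smul_mul_assoc, ← pow_mul]
  H_smul := by
    have hcomm : Commute (H k n q) (phi k n q i) := by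
      rw [hnq.phi_eq_spectralIdempotent]
      exact commute_spectralIdempotent commute_G_H.symm _ _ _
    rw [smul_eq_mul, eIdem, ← mul_assoc, hcomm.eq, mul_assoc, oneJ_eq_spectralIdempotent hj,
      mul_spectralIdempotent hnq.isPrimitiveRoot_neg_one.pow_eq_one (by simp) hnq.H_sq,
      mul_smul_comm]

theorem q_pow_two_mul_pow_half (i : ℕ) : (q ^ (2 * i)) ^ (n ^ 2 / 2) = 1 := by
  rw [pow_mul, pow_right_comm, hnq.isPrimitiveRoot_q_sq.pow_eq_one, one_pow]

theorem eIdem_smul {M : Type*} [AddCommGroup M] [Module k M] [Module (U k n q) M]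
    [IsScalarTower k (U k n q) M] {i j : ℕ} (hj : j ≤ 1) {x : M}
    (hx : IsWeight n q (q ^ (2 * i)) ((-1) ^ j) x) : eIdem k n q i j • x = x := by
  rw [eIdem, mul_smul, oneJ_eq_spectralIdempotent hj, hnq.phi_eq_spectralIdempotent,
    spectralIdempotent_smul_of_eq (by exact_mod_cast hnq.two_ne_zero) (by simp) hx.H_smul,
    spectralIdempotent_smul_of_eq hnq.natCast_half_sq_ne_zero (pow_ne_zero _ hnq.q_ne_zero)
      (by rw [← pow_mul, hx.G_smul])]

theorem eq_zero_of_forall_mul_eIdem_eq_zero {x : U k n q}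
    (hx : ∀ i j, 1 ≤ i → i ≤ n ^ 2 / 2 → j ≤ 1 → x * eIdem k n q i j = 0) : x = 0 := by
  have hsumJ : oneJ k n q 0 + oneJ k n q 1 = 1 := by
    have h := sum_spectralIdempotent (by exact_mod_cast hnq.two_ne_zero)
      hnq.isPrimitiveRoot_neg_one (H k n q) 0
    simpa [Finset.sum_range_succ, oneJ_eq_spectralIdempotent] using h
  have hphi : ∀ r ∈ Finset.range (n ^ 2 / 2), x * phi k n q (1 + r) = 0 := by
    intro r hr
    have hr' := Finset.mem_range.mp hr
    rw [← mul_one (phi k n q (1 + r)), ← hsumJ, mul_add, mul_add, ← eIdem, ← eIdem,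
      hx _ 0 (by omega) (by omega) (by omega), hx _ 1 (by omega) (by omega) le_rfl, add_zero]
  rw [← mul_one x, ← sum_spectralIdempotent hnq.natCast_half_sq_ne_zero hnq.isPrimitiveRoot_q_sq
    (G k n q) 1, Finset.mul_sum]
  simpa only [hnq.phi_eq_spectralIdempotent] using Finset.sum_eq_zero hphi

end Admissible

end Idempotents

/-- The underlying space of the auxiliary representation that proves the Poincaré–Birkhoff–Witt
independence: it has a basis indexed by the monomials `F^a E^b` with `a, b < n²`. -/
abbrev PBWModule (k : Type) [Field k] (n : ℕ) : Type := (Fin (n ^ 2) × Fin (n ^ 2)) →₀ k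

namespace PBWModule

variable {k : Type} [Field k] {n : ℕ} {q : k}

/-- The basis vector standing for `F^a E^b`, with value `0` unless `a, b < n²`. -/
def monomial (n a b : ℕ) : PBWModule k n :=
  if h : a < n ^ 2 ∧ b < n ^ 2 then Finsupp.single (⟨a, h.1⟩, ⟨b, h.2⟩) 1 else 0

theorem monomial_eq_zero_left {a : ℕ} (h : n ^ 2 ≤ a) (b : ℕ) :
    monomial (k := k) n a b = 0 := dif_neg (by omega)

theorem monomial_eq_zero_right {b : ℕ} (h : n ^ 2 ≤ b) (a : ℕ) :
    monomial (k := k) n a b = 0 := dif_neg (by omega)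

theorem monomial_eq_single (p : Fin (n ^ 2) × Fin (n ^ 2)) :
    monomial (k := k) n p.1 p.2 = Finsupp.single p 1 := dif_pos ⟨p.1.2, p.2.2⟩

section Lift

variable {X : Type*} [AddCommGroup X] [Module k X]

theorem hom_ext_monomial {f g : PBWModule k n →ₗ[k] X}
    (h : ∀ a b, f (monomial n a b) = g (monomial n a b)) : f = g := by
  apply Finsupp.lhom_ext'
  intro p
  ext
  simp only [LinearMap.comp_apply, Finsupp.lsingle_apply]
  rw [← monomial_eq_single, h]

/-- The linear map with prescribed values on the basis. -/
def lift (f : ℕ → ℕ → X) : PBWModule k n →ₗ[k] X :=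
  Finsupp.linearCombination k fun p => f p.1 p.2

theorem lift_monomial {f : ℕ → ℕ → X} (hf : ∀ a b, (n ^ 2 ≤ a ∨ n ^ 2 ≤ b) → f a b = 0)
    (a b : ℕ) : lift f (monomial (k := k) n a b) = f a b := by
  by_cases h : a < n ^ 2 ∧ b < n ^ 2
  · rw [monomial, dif_pos h, lift, Finsupp.linearCombination_single, one_smul]
  · rw [hf a b (by omega), monomial, dif_neg h, map_zero]

end Lift

/-- The action of `F`. -/
def opF (n : ℕ) : Module.End k (PBWModule k n) := lift fun a b => monomial n (a + 1) b

/-- The diagonal operator with eigenvalue `x y^a z^b` on the monomial `F^a E^b`; `K` and `K̂` act in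
this way. -/
def opDiag (n : ℕ) (x y z : k) : Module.End k (PBWModule k n) :=
  lift fun a b => (x * y ^ a * z ^ b) • monomial n a b

/-- The action of `E`, if `K⁻¹K̂` acts on the cyclic vector by `lam`. -/
def opE (n : ℕ) (q lam : k) : Module.End k (PBWModule k n) :=
  lift fun a b => q ^ a • monomial n a (b + 1)
    + raiseCoeff q a (lam * q⁻¹ ^ (2 * b)) • monomial n (a - 1) b

theorem opF_monomial (a b : ℕ) : opF n (monomial (k := k) n a b) = monomial n (a + 1) b := by
  refine lift_monomial ?_ a b
  rintro a b (h | h)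
  · exact monomial_eq_zero_left (by omega) _
  · exact monomial_eq_zero_right h _

theorem opDiag_monomial (x y z : k) (a b : ℕ) :
    opDiag n x y z (monomial n a b) = (x * y ^ a * z ^ b) • monomial n a b := by
  refine lift_monomial (f := fun a b => (x * y ^ a * z ^ b) • monomial n a b) ?_ a b
  rintro a b (h | h)
  · rw [monomial_eq_zero_left h, smul_zero]
  · rw [monomial_eq_zero_right h, smul_zero]

theorem opDiag_mul (x y z x' y' z' : k) :
    opDiag n x y z * opDiag n x' y' z' = opDiag n (x * x') (y * y') (z * z') := by
  apply hom_ext_monomial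
  intro a b
  rw [Module.End.mul_apply, opDiag_monomial, map_smul, opDiag_monomial, opDiag_monomial, smul_smul]
  congr 1
  ring

theorem opDiag_one : opDiag n (1 : k) 1 1 = 1 :=
  hom_ext_monomial fun a b => by simp [opDiag_monomial]

theorem opDiag_pow (x y z : k) (m : ℕ) :
    opDiag n x y z ^ m = opDiag n (x ^ m) (y ^ m) (z ^ m) := by
  induction m with
  | zero => simp [opDiag_one]
  | succ m ih => rw [pow_succ (opDiag n x y z), ih, opDiag_mul, pow_succ x, pow_succ y, pow_succ z]

theorem opF_pow_monomial (s a b : ℕ) :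
    (opF n ^ s) (monomial (k := k) n a b) = monomial n (a + s) b := by
  induction s with
  | zero => simp
  | succ s ih => rw [pow_succ' (opF n), Module.End.mul_apply, ih, opF_monomial, add_assoc]

theorem opF_pow_sq : opF (k := k) n ^ n ^ 2 = 0 :=
  hom_ext_monomial fun a b => by
    rw [opF_pow_monomial, monomial_eq_zero_left (by omega), LinearMap.zero_apply]

theorem qcommute_opDiag_opF (x y z : k) : QCommute y (opDiag n x y z) (opF n) := by
  apply hom_ext_monomial
  intro a b
  rw [LinearMap.smul_apply, Module.End.mul_apply, Module.End.mul_apply, opF_monomial,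
    opDiag_monomial, opDiag_monomial, map_smul, opF_monomial, smul_smul]
  congr 1
  ring

theorem raiseCoeff_smul_monomial_pred_succ (x : k) (a b : ℕ) :
    raiseCoeff q a x • monomial (k := k) n (a - 1 + 1) b = raiseCoeff q a x • monomial n a b := by
  cases a with
  | zero => simp [raiseCoeff_zero]
  | succ a => rfl

section Admissible

variable (hnq : Admissible k n q) (lam : k)
include hnq

theorem opE_monomial (a b : ℕ) : opE n q lam (monomial n a b)
    = q ^ a • monomial n a (b + 1)
      + raiseCoeff q a (lam * q⁻¹ ^ (2 * b)) • monomial n (a - 1) b := by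
  refine lift_monomial (f := fun a b => q ^ a • monomial n a (b + 1)
    + raiseCoeff q a (lam * q⁻¹ ^ (2 * b)) • monomial n (a - 1) b) ?_ a b
  rintro a b (h | h)
  · rw [monomial_eq_zero_left h, smul_zero, zero_add]
    rcases h.eq_or_lt with rfl | h
    · rw [raiseCoeff, hnq.gauss_sq, mul_zero, zero_mul, zero_smul]
    · rw [monomial_eq_zero_left (by omega), smul_zero]
  · rw [monomial_eq_zero_right h, monomial_eq_zero_right (by omega), smul_zero, smul_zero, add_zero]

theorem opE_pow_monomial_zero (s b : ℕ) :
    (opE n q lam ^ s) (monomial n 0 b) = monomial n 0 (b + s) := by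
  induction s with
  | zero => rfl
  | succ s ih =>
    rw [pow_succ' (opE n q lam), Module.End.mul_apply, ih, opE_monomial hnq, raiseCoeff_zero,
      pow_zero, one_smul, zero_smul, add_zero, add_assoc]

theorem qcommute_opDiag_opE (x : k) {y z : k} (hyz : y * z = 1) :
    QCommute z (opDiag n x y z) (opE n q lam) := by
  apply hom_ext_monomial
  intro a b
  simp only [LinearMap.smul_apply, Module.End.mul_apply, opE_monomial hnq, map_add, map_smul,
    opDiag_monomial, smul_add, smul_smul]
  congr 2
  · ring
  · cases a with
    | zero => simp only [raiseCoeff_zero, zero_mul, mul_zero]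
    | succ a =>
      rw [Nat.add_sub_cancel]
      linear_combination (-raiseCoeff q (a + 1) (lam * q⁻¹ ^ (2 * b)) * x * y ^ a * z ^ b) * hyz

theorem opF_mul_opE : opF n * opE n q lam
    = q⁻¹ • (opE n q lam * opF n) + (1 - opDiag n lam (q ^ 2) (q⁻¹ ^ 2)) := by
  apply hom_ext_monomial
  intro a b
  have hdiag : lam * (q ^ 2) ^ a * (q⁻¹ ^ 2) ^ b
      = 1 - (raiseCoeff q a (lam * q⁻¹ ^ (2 * b))
        - q⁻¹ * raiseCoeff q (a + 1) (lam * q⁻¹ ^ (2 * b))) := by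
    rw [raiseCoeff_sub_raiseCoeff_succ hnq.q_ne_zero, ← pow_mul, ← pow_mul]
    ring
  have hpow : q⁻¹ * q ^ (a + 1) = q ^ a := by
    rw [pow_succ', inv_mul_cancel_left₀ hnq.q_ne_zero]
  simp only [LinearMap.add_apply, LinearMap.smul_apply, LinearMap.sub_apply, Module.End.mul_apply,
    Module.End.one_apply, opE_monomial hnq, opF_monomial, opDiag_monomial, map_add, map_smul,
    raiseCoeff_smul_monomial_pred_succ, hdiag, smul_add, smul_smul, hpow, Nat.add_sub_cancel]
  module

theorem opE_pow_sq : opE n q lam ^ n ^ 2 = 0 := by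
  have hone : q ^ 2 * q⁻¹ ^ 2 = 1 := by rw [inv_pow, mul_inv_cancel₀ (pow_ne_zero _ hnq.q_ne_zero)]
  have hcomm : opF n * opE n q lam ^ n ^ 2 = opE n q lam ^ n ^ 2 * opF n := by
    have hFE : opF n * opE n q lam = q⁻¹ • (opE n q lam * opF n)
        + (1 : k) • (1 - opDiag n lam (q ^ 2) (q⁻¹ ^ 2)) := by rw [one_smul, opF_mul_opE hnq]
    have h := mul_pow_succ_of_mul_eq hFE (qcommute_opDiag_opE hnq lam lam hone) (n ^ 2 - 1)
    rwa [Nat.sub_add_cancel (by have := hnq.sixteen_le; omega), ← gauss, hnq.gauss_inv_sq,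
      mul_zero, zero_smul, add_zero, inv_pow, hnq.q_pow_sq, inv_one, one_smul] at h
  apply hom_ext_monomial
  intro a b
  rw [LinearMap.zero_apply]
  induction a with
  | zero => rw [opE_pow_monomial_zero hnq, monomial_eq_zero_right (by omega)]
  | succ a ih =>
    rw [← opF_monomial, ← Module.End.mul_apply, ← hcomm, Module.End.mul_apply, ih, map_zero]

end Admissible

/-- The action of `K`, if `K` acts on the cyclic vector by `kap`. -/
def opK (n : ℕ) (q kap : k) : Module.End k (PBWModule k n) := opDiag n kap (q ^ n)⁻¹ (q ^ n)

/-- The action of `K̂`, if `K` and `K⁻¹K̂` act on the cyclic vector by `kap` and `lam`. -/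
def opKh (n : ℕ) (q lam kap : k) : Module.End k (PBWModule k n) :=
  opDiag n (lam * kap) ((q ^ n)⁻¹ * q ^ 2) (q ^ n * (q ^ 2)⁻¹)

section Representation

variable (hnq : Admissible k n q) {lam kap : k} (hkap : kap ^ n = 1)
  (hlam : (lam * kap) ^ n = (kap ^ (n - 1)) ^ 2)

theorem opK_mul_opKh : opK n q kap * opKh n q lam kap = opKh n q lam kap * opK n q kap := by
  simp only [opK, opKh, opDiag_mul, mul_comm]

include hnq hkap in
theorem opK_pow : opK n q kap ^ n = 1 := by
  have hqn := hnq.isPrimitiveRoot_q_pow.pow_eq_one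
  rw [opK, opDiag_pow, hkap, inv_pow, hqn, inv_one, opDiag_one]

include hnq hlam in
theorem opKh_pow : opKh n q lam kap ^ n = (opK n q kap ^ (n - 1)) ^ 2 := by
  have hqn := hnq.isPrimitiveRoot_q_pow.pow_eq_one
  rw [opK, opKh, opDiag_pow, opDiag_pow, opDiag_pow, hlam]
  congr 1
  · rw [mul_pow, inv_pow, hqn, inv_pow, hnq.q_pow_pow_pred, inv_inv, inv_one, one_mul, ← pow_mul,
      ← pow_mul, mul_comm]
  · rw [mul_pow, hqn, hnq.q_pow_pow_pred, one_mul, inv_pow, inv_pow, ← pow_mul, ← pow_mul, mul_comm]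

include hnq hkap hlam in
theorem opKh_pow_sq : opKh n q lam kap ^ n ^ 2 = 1 := by
  rw [(congrArg (opKh n q lam kap ^ ·) (sq n)).trans (pow_mul _ n n), opKh_pow hnq hlam, ← pow_mul,
    ← pow_mul, show (n - 1) * (2 * n) = n * ((n - 1) * 2) by ring, pow_mul, opK_pow hnq hkap,
    one_pow]

include hnq hkap in
theorem opK_pow_pred_mul_opKh :
    opK n q kap ^ (n - 1) * opKh n q lam kap = opDiag n lam (q ^ 2) (q⁻¹ ^ 2) := by
  have hqn : q ^ n ≠ 0 := pow_ne_zero n hnq.q_ne_zero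
  rw [opK, opKh, opDiag_pow, opDiag_mul]
  congr 1
  · rw [mul_left_comm, ← pow_succ, Nat.sub_add_cancel hnq.pos, hkap, mul_one]
  · rw [inv_pow, hnq.q_pow_pow_pred, inv_inv, mul_inv_cancel_left₀ hqn]
  · rw [hnq.q_pow_pow_pred, inv_mul_cancel_left₀ hqn, inv_pow]

/-- The action of the free algebra on `PBWModule k n`. -/
def freeAction (n : ℕ) (q lam kap : k) :
    FreeAlgebra k (Fin 4) →ₐ[k] Module.End k (PBWModule k n) :=
  FreeAlgebra.lift k ![opK n q kap, opKh n q lam kap, opE n q lam, opF n]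

include hnq hkap hlam in
theorem freeAction_eq_of_rel ⦃x y : FreeAlgebra k (Fin 4)⦄ (hxy : Rel k n q x y) :
    freeAction n q lam kap x = freeAction n q lam kap y := by
  have hqn : q ^ n ≠ 0 := pow_ne_zero n hnq.q_ne_zero
  have hq2 : q ^ 2 ≠ 0 := pow_ne_zero 2 hnq.q_ne_zero
  have hK := opK_pow hnq hkap
  have hKh := opKh_pow_sq hnq hkap hlam
  have hn2 : 0 < n ^ 2 := pow_pos hnq.pos 2
  cases hxy <;> simp only [freeAction, map_mul, map_pow, map_sub, map_smul, map_one, map_zero,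
    FreeAlgebra.lift_ι_apply, Matrix.cons_val]
  case Kord => exact hK
  case Khord => exact opKh_pow hnq hlam
  case KKh => exact opK_mul_opKh
  case KE =>
    exact (QCommute.iff_mul_mul_pow hnq.pos hK).mpr
      (qcommute_opDiag_opE hnq _ _ (inv_mul_cancel₀ hqn))
  case KF => exact (QCommute.iff_mul_mul_pow hnq.pos hK).mpr (qcommute_opDiag_opF _ _ _)
  case KhE =>
    refine (QCommute.iff_mul_mul_pow hn2 hKh).mpr (qcommute_opDiag_opE hnq _ _ ?_)
    rw [mul_mul_mul_comm, inv_mul_cancel₀ hqn, mul_inv_cancel₀ hq2, one_mul]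
  case KhF => exact (QCommute.iff_mul_mul_pow hn2 hKh).mpr (qcommute_opDiag_opF _ _ _)
  case Enil => exact opE_pow_sq hnq lam
  case Fnil => exact opF_pow_sq
  case EF =>
    rw [sub_eq_iff_eq_add', opK_pow_pred_mul_opKh hnq hkap]
    exact opF_mul_opE hnq lam

/-- The action of `u` on `PBWModule k n` in which `K` and `K⁻¹K̂` act on the cyclic vector by `kap`
and `lam`. -/
def action (hnq : Admissible k n q) (hkap : kap ^ n = 1)
    (hlam : (lam * kap) ^ n = (kap ^ (n - 1)) ^ 2) :
    U k n q →ₐ[k] Module.End k (PBWModule k n) :=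
  RingQuot.liftAlgHom k ⟨freeAction n q lam kap, freeAction_eq_of_rel hnq hkap hlam⟩

theorem action_K : action hnq hkap hlam (K k n q) = opK n q kap := by
  rw [K, action, RingQuot.liftAlgHom_mkAlgHom_apply, freeAction, FreeAlgebra.lift_ι_apply]
  rfl

theorem action_Kh : action hnq hkap hlam (Kh k n q) = opKh n q lam kap := by
  rw [Kh, action, RingQuot.liftAlgHom_mkAlgHom_apply, freeAction, FreeAlgebra.lift_ι_apply]
  rfl

theorem action_E : action hnq hkap hlam (E k n q) = opE n q lam := by
  rw [E, action, RingQuot.liftAlgHom_mkAlgHom_apply, freeAction, FreeAlgebra.lift_ι_apply]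
  rfl

theorem action_F : action hnq hkap hlam (F k n q) = opF n := by
  rw [F, action, RingQuot.liftAlgHom_mkAlgHom_apply, freeAction, FreeAlgebra.lift_ι_apply]
  rfl

end Representation
end PBWModule

section PBWSpan

variable {k : Type} [Field k] {n : ℕ} {q : k}

variable (k n q) in
/-- The commutative subalgebra generated by the group-like elements `K` and `K̂`. -/
def torus : Subalgebra k (U k n q) := Algebra.adjoin k {K k n q, Kh k n q}

theorem K_mem_torus : K k n q ∈ torus k n q := Algebra.subset_adjoin (by simp)

theorem Kh_mem_torus : Kh k n q ∈ torus k n q := Algebra.subset_adjoin (by simp)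

theorem G_mem_torus : G k n q ∈ torus k n q :=
  mul_mem (pow_mem K_mem_torus _) Kh_mem_torus

theorem H_mem_torus : H k n q ∈ torus k n q :=
  mul_mem K_mem_torus (pow_mem Kh_mem_torus _)

theorem eIdem_mem_torus (i j : ℕ) : eIdem k n q i j ∈ torus k n q := by
  refine mul_mem (Subalgebra.smul_mem _ (sum_mem fun t _ => Subalgebra.smul_mem _
    (pow_mem G_mem_torus t) _) _) ?_
  rw [oneJ]
  split_ifs
  · exact Subalgebra.smul_mem _ (add_mem (one_mem _) H_mem_torus) _
  · exact Subalgebra.smul_mem _ (sub_mem (one_mem _) H_mem_torus) _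

theorem pbw_le {p : Submodule k (U k n q)}
    (h : ∀ a b c d, a ≤ n ^ 2 - 2 →
      F k n q ^ a * K k n q ^ c * Kh k n q ^ d * E k n q ^ b ∈ p) :
    pbw k n q ≤ p := by
  apply Submodule.span_le.mpr
  rintro x ⟨a, b, c, d, ha, -, -, -, rfl⟩
  exact h a b c d ha

namespace Admissible

variable (hnq : Admissible k n q)
include hnq

theorem monomial_mem_pbw {a : ℕ} (ha : a ≤ n ^ 2 - 2) (c d b : ℕ) :
    F k n q ^ a * K k n q ^ c * Kh k n q ^ d * E k n q ^ b ∈ pbw k n q := by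
  have hn2 : 0 < n ^ 2 := pow_pos hnq.pos 2
  by_cases hb : b < n ^ 2
  · apply Submodule.subset_span
    refine ⟨a, b, c % n, d % n ^ 2, ha, Nat.le_pred_of_lt hb, Nat.le_pred_of_lt (c.mod_lt hnq.pos),
      Nat.le_pred_of_lt (d.mod_lt hn2), ?_⟩
    rw [← pow_eq_pow_mod c K_pow, ← pow_eq_pow_mod d Kh_pow_sq]
  · rw [E_pow_eq_zero (not_lt.mp hb), mul_zero]
    exact zero_mem _

theorem mul_mem_pbw_of_mem_torus {x t : U k n q} (hx : x ∈ pbw k n q) (ht : t ∈ torus k n q) :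
    x * t ∈ pbw k n q := by
  induction ht using Algebra.adjoin_induction generalizing x with
  | algebraMap r =>
    rw [← Algebra.commutes, ← Algebra.smul_def]
    exact Submodule.smul_mem _ r hx
  | add t t' _ _ iht iht' =>
    rw [mul_add]
    exact add_mem (iht hx) (iht' hx)
  | mul t t' _ _ iht iht' =>
    rw [← mul_assoc]
    exact iht' (iht hx)
  | mem t ht =>
    refine pbw_le (p := (pbw k n q).comap (LinearMap.mulRight k t)) (fun a b c d ha => ?_) hx
    rw [Submodule.mem_comap, LinearMap.mulRight_apply]
    obtain rfl | rfl := ht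
    · have hc : (q ^ n) ^ b ≠ 0 := pow_ne_zero _ (pow_ne_zero _ hnq.q_ne_zero)
      rw [mul_assoc, (hnq.qcommute_K_E.pow_right b).symm hc, mul_smul_comm, ← mul_assoc,
        mul_assoc _ (Kh k n q ^ d), (commute_K_Kh.pow_right d).symm.eq, ← mul_assoc,
        mul_assoc _ _ (K k n q), ← pow_succ]
      exact Submodule.smul_mem _ _ (hnq.monomial_mem_pbw ha _ _ _)
    · have hc : (q ^ n * (q ^ 2)⁻¹) ^ b ≠ 0 := pow_ne_zero _
        (mul_ne_zero (pow_ne_zero _ hnq.q_ne_zero) (inv_ne_zero (pow_ne_zero _ hnq.q_ne_zero)))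
      rw [mul_assoc, (hnq.qcommute_Kh_E.pow_right b).symm hc, mul_smul_comm, ← mul_assoc,
        mul_assoc _ (Kh k n q ^ d), ← pow_succ]
      exact Submodule.smul_mem _ _ (hnq.monomial_mem_pbw ha _ _ _)

theorem torus_mul_mem_pbw {x t : U k n q} (ht : t ∈ torus k n q) (hx : x ∈ pbw k n q) :
    t * x ∈ pbw k n q := by
  induction ht using Algebra.adjoin_induction generalizing x with
  | algebraMap r =>
    rw [← Algebra.smul_def]
    exact Submodule.smul_mem _ r hx
  | add t t' _ _ iht iht' =>
    rw [add_mul]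
    exact add_mem (iht hx) (iht' hx)
  | mul t t' _ _ iht iht' =>
    rw [mul_assoc]
    exact iht (iht' hx)
  | mem t ht =>
    refine pbw_le (p := (pbw k n q).comap (LinearMap.mulLeft k t)) (fun a b c d ha => ?_) hx
    rw [Submodule.mem_comap, LinearMap.mulLeft_apply, ← mul_assoc, ← mul_assoc, ← mul_assoc]
    obtain rfl | rfl := ht
    · rw [hnq.qcommute_K_F.pow_right a, smul_mul_assoc, smul_mul_assoc, smul_mul_assoc,
        mul_assoc _ (K k n q), ← pow_succ']
      exact Submodule.smul_mem _ _ (hnq.monomial_mem_pbw ha _ _ _)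
    · rw [hnq.qcommute_Kh_F.pow_right a, smul_mul_assoc, smul_mul_assoc, smul_mul_assoc,
        mul_assoc _ (Kh k n q), (commute_K_Kh.pow_left c).symm.eq, ← mul_assoc,
        mul_assoc _ (Kh k n q), ← pow_succ']
      exact Submodule.smul_mem _ _ (hnq.monomial_mem_pbw ha _ _ _)

end Admissible

end PBWSpan

namespace PBWModule

variable {k : Type} [Field k] {n : ℕ} {q : k}

/-- The comparison map from the auxiliary representation to the left ideal `u e_{2i,j}`. -/
def toLeftIdeal (n : ℕ) (q : k) (i j : ℕ) : PBWModule k n →ₗ[k] U k n q :=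
  lift fun a b => F k n q ^ a * (E k n q ^ b * eIdem k n q i j)

theorem toLeftIdeal_monomial (i j a b : ℕ) : toLeftIdeal n q i j (monomial n a b)
    = F k n q ^ a * (E k n q ^ b * eIdem k n q i j) := by
  refine lift_monomial (f := fun a b => F k n q ^ a * (E k n q ^ b * eIdem k n q i j)) ?_ a b
  rintro a b (h | h)
  · rw [pow_eq_zero_of_le h F_pow_sq, zero_mul]
  · rw [E_pow_eq_zero h, zero_mul, mul_zero]

variable (hnq : Admissible k n q) (i : ℕ) {j : ℕ} (hj : j ≤ 1)

/-- The auxiliary representation whose cyclic vector has the weight of `e_{2i,j}`. -/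
def idemAction (j : ℕ) : U k n q →ₐ[k] Module.End k (PBWModule k n) :=
  action hnq (hnq.eigenvalueK_pow (hnq.q_pow_two_mul_pow_half i) (neg_one_pow_sq j))
    (hnq.mul_eigenvalueK_pow (hnq.q_pow_two_mul_pow_half i) (neg_one_pow_sq j))

include hj in
theorem idemAction_eIdem_monomial_zero :
    idemAction hnq i j (eIdem k n q i j) (monomial n 0 0) = monomial n 0 0 := by
  have hone : ((-1 : k) ^ j) ^ 2 = 1 := neg_one_pow_sq j
  have hlam := hnq.q_pow_two_mul_pow_half i
  let _ : Module (U k n q) (PBWModule k n) := Module.compHom _ (idemAction hnq i j).toRingHom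
  have hsmul : ∀ u w, idemAction hnq i j u w = u • w := fun u w => rfl
  have : IsScalarTower k (U k n q) (PBWModule k n) := ⟨fun c u w => by
    rw [← hsmul, ← hsmul, map_smul, LinearMap.smul_apply]⟩
  refine (hsmul _ _).trans (hnq.eIdem_smul hj ⟨?_, ?_⟩)
  · rw [← hsmul, G, Kinv, map_mul, map_pow, idemAction, action_K, action_Kh,
      opK_pow_pred_mul_opKh hnq (hnq.eigenvalueK_pow hlam hone), opDiag_monomial, pow_zero,
      pow_zero, mul_one, mul_one]
  · rw [← hsmul, H, map_mul, map_pow, idemAction, action_K, action_Kh, opK, opKh, opDiag_pow,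
      opDiag_mul, opDiag_monomial, pow_zero, pow_zero, mul_one, mul_one,
      hnq.eigenvalueK_mul_pow hlam hone]

include hj in
theorem toLeftIdeal_idemAction (u : U k n q) (w : PBWModule k n) :
    toLeftIdeal n q i j (idemAction hnq i j u w) = u * toLeftIdeal n q i j w := by
  let _ : Module (U k n q) (PBWModule k n) := Module.compHom _ (idemAction hnq i j).toRingHom
  have hsmul : ∀ u w, idemAction hnq i j u w = u • w := fun u w => rfl
  have : IsScalarTower k (U k n q) (PBWModule k n) := ⟨fun c u w => by
    rw [← hsmul, ← hsmul, map_smul, LinearMap.smul_apply]⟩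
  have hext : ∀ u, (∀ a b, toLeftIdeal n q i j (idemAction hnq i j u (monomial n a b))
      = u • F k n q ^ a • E k n q ^ b • eIdem k n q i j) →
        ∀ w, toLeftIdeal n q i j (u • w) = u • toLeftIdeal n q i j w := by
    intro u hu w
    have heq : toLeftIdeal n q i j ∘ₗ idemAction hnq i j u
        = LinearMap.mulLeft k u ∘ₗ toLeftIdeal n q i j := by
      apply hom_ext_monomial
      intro a b
      rw [LinearMap.comp_apply, LinearMap.comp_apply, hu, LinearMap.mulLeft_apply,
        toLeftIdeal_monomial]
      rfl
    exact LinearMap.congr_fun heq w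
  have hwt := hnq.isWeight_eIdem i hj
  have ha : q ^ (2 * i) ≠ 0 := pow_ne_zero _ hnq.q_ne_zero
  refine map_smul_of_generators (toLeftIdeal n q i j) (hext _ ?_) (hext _ ?_) (hext _ ?_)
    (hext _ ?_) u w <;> intro a b
  · rw [(hnq.qcommute_K_F.pow_right a).smul_smul_eq
      ((hnq.qcommute_K_E.pow_right b).smul_smul_eq (hnq.K_smul ha hwt)), idemAction, action_K, opK,
      opDiag_monomial, map_smul, toLeftIdeal_monomial, mul_right_comm]
    rfl
  · rw [(hnq.qcommute_Kh_F.pow_right a).smul_smul_eq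
      ((hnq.qcommute_Kh_E.pow_right b).smul_smul_eq (hnq.Kh_smul ha hwt)), idemAction, action_Kh,
      opKh, opDiag_monomial, map_smul, toLeftIdeal_monomial, mul_right_comm]
    rfl
  · rw [hnq.E_smul_F_pow_smul (hnq.isWeight_E_pow_smul hwt b), idemAction, action_E,
      opE_monomial hnq, map_add, map_smul, map_smul, toLeftIdeal_monomial, toLeftIdeal_monomial,
      ← mul_smul (E k n q), ← pow_succ']
    rfl
  · rw [idemAction, action_F, opF_monomial, toLeftIdeal_monomial, pow_succ', mul_assoc]
    rfl

end PBWModule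

namespace PBWModule

variable {k : Type} [Field k] {n : ℕ} {q : k}

variable (k n) in
/-- The span of the monomials `F^a E^b` with `a ≤ n² - 2`, on which `F` is injective. -/
def lowRows : Submodule k (PBWModule k n) :=
  Submodule.span k {w | ∃ a b, a ≤ n ^ 2 - 2 ∧ w = monomial n a b}

variable (k n) in
/-- The span of the monomials `F^a E^b` with `r ≤ a`. -/
def rowsFrom (r : ℕ) : Submodule k (PBWModule k n) :=
  Submodule.span k {w | ∃ a b, r ≤ a ∧ w = monomial n a b}

/-- The coefficient of `F^(n²-1) E^s`. -/
def topRowCoeff (n s : ℕ) : PBWModule k n →ₗ[k] k :=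
  lift fun a b => if a = n ^ 2 - 1 ∧ b = s then 1 else 0

theorem monomial_mem_lowRows {a : ℕ} (h : a ≤ n ^ 2 - 2) (b : ℕ) :
    monomial n a b ∈ lowRows k n := Submodule.subset_span ⟨a, b, h, rfl⟩

theorem monomial_mem_rowsFrom {a r : ℕ} (h : r ≤ a) (b : ℕ) :
    monomial n a b ∈ rowsFrom k n r := Submodule.subset_span ⟨a, b, h, rfl⟩

section Admissible

variable (hnq : Admissible k n q)
include hnq

theorem topRowCoeff_monomial {s : ℕ} (hs : s < n ^ 2) (a b : ℕ) :
    topRowCoeff n s (monomial (k := k) n a b) = if a = n ^ 2 - 1 ∧ b = s then 1 else 0 := by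
  have hn2 := hnq.sixteen_le
  exact lift_monomial (f := fun a b => if a = n ^ 2 - 1 ∧ b = s then (1 : k) else 0)
    (fun a b h => if_neg (by omega)) a b

theorem topRowCoeff_succ_opE {s : ℕ} (hs : s + 1 < n ^ 2) (lam : k) (w : PBWModule k n) :
    topRowCoeff n (s + 1) (opE n q lam w) = q ^ (n ^ 2 - 1) * topRowCoeff n s w := by
  have hn2 := hnq.sixteen_le
  suffices topRowCoeff n (s + 1) ∘ₗ opE n q lam = q ^ (n ^ 2 - 1) • topRowCoeff n s from
    LinearMap.congr_fun this w
  apply hom_ext_monomial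
  intro a b
  rcases lt_or_ge a (n ^ 2) with ha | ha
  · simp only [LinearMap.comp_apply, LinearMap.smul_apply, opE_monomial hnq, map_add, map_smul,
      topRowCoeff_monomial hnq hs, topRowCoeff_monomial hnq (Nat.lt_of_succ_lt hs)]
    rw [if_neg (by omega : ¬ (a - 1 = n ^ 2 - 1 ∧ b = s + 1)), smul_zero, add_zero]
    simp only [Nat.add_right_cancel_iff]
    split_ifs with h
    · rw [h.1]
    · rw [smul_zero, smul_zero]
  · rw [monomial_eq_zero_left ha, map_zero, map_zero]

theorem topRowCoeff_opE_pow {s : ℕ} (hs : s < n ^ 2) (lam : k) (w : PBWModule k n) :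
    topRowCoeff n s ((opE n q lam ^ s) w) = (q ^ (n ^ 2 - 1)) ^ s * topRowCoeff n 0 w := by
  induction s with
  | zero => rw [pow_zero, pow_zero, one_mul, Module.End.one_apply]
  | succ s ih =>
    rw [pow_succ' (opE n q lam), Module.End.mul_apply, topRowCoeff_succ_opE hnq hs,
      ih (Nat.lt_of_succ_lt hs), pow_succ' (q ^ _), mul_assoc]

theorem eq_zero_of_opF_eq_zero {w : PBWModule k n} (hw : w ∈ lowRows k n) (h : opF n w = 0) :
    w = 0 := by
  have hn2 := hnq.sixteen_le
  have hinv : Set.EqOn (lift (fun a b => monomial n (a - 1) b) ∘ₗ opF n)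
      (LinearMap.id : PBWModule k n →ₗ[k] PBWModule k n) (lowRows k n) := by
    apply LinearMap.eqOn_span
    rintro _ ⟨a, b, ha, rfl⟩
    rw [LinearMap.comp_apply, opF_monomial, LinearMap.id_apply]
    by_cases hb : b < n ^ 2
    · rw [← Fin.val_mk (n := n ^ 2) (show a + 1 < n ^ 2 by omega), ← Fin.val_mk hb,
        monomial_eq_single (_, _), lift, Finsupp.linearCombination_single, one_smul,
        Nat.add_sub_cancel]
    · rw [monomial_eq_zero_right (by omega), monomial_eq_zero_right (by omega), map_zero]
  have hzero := hinv hw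
  rw [LinearMap.comp_apply, h, map_zero] at hzero
  exact hzero.symm

theorem opE_mem_rowsFrom (lam : k) {r : ℕ} {w : PBWModule k n} (hw : w ∈ rowsFrom k n r) :
    opE n q lam w ∈ rowsFrom k n (r - 1) := by
  suffices rowsFrom k n r ≤ (rowsFrom k n (r - 1)).comap (opE n q lam) from this hw
  apply Submodule.span_le.mpr
  rintro _ ⟨a, b, ha, rfl⟩
  rw [SetLike.mem_coe, Submodule.mem_comap, opE_monomial hnq]
  exact add_mem (Submodule.smul_mem _ _ (monomial_mem_rowsFrom (by omega) _))
    (Submodule.smul_mem _ _ (monomial_mem_rowsFrom (by omega) _))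

theorem opE_pow_mem_rowsFrom (lam : k) (s : ℕ) {r : ℕ} {w : PBWModule k n}
    (hw : w ∈ rowsFrom k n r) : (opE n q lam ^ s) w ∈ rowsFrom k n (r - s) := by
  induction s with
  | zero => exact hw
  | succ s ih =>
    rw [pow_succ' (opE n q lam), Module.End.mul_apply, ← Nat.sub_sub]
    exact opE_mem_rowsFrom hnq lam ih

theorem rowsFrom_one_le_map_opF : rowsFrom k n 1 ≤ (lowRows k n).map (opF n) := by
  have hn2 := hnq.sixteen_le
  apply Submodule.span_le.mpr
  rintro _ ⟨a, b, ha, rfl⟩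
  rcases lt_or_ge a (n ^ 2) with h | h
  · refine ⟨monomial n (a - 1) b, monomial_mem_lowRows (by omega) b, ?_⟩
    rw [opF_monomial, Nat.sub_add_cancel ha]
  · rw [monomial_eq_zero_left h]
    exact zero_mem _

theorem idemAction_monomial_zero_mem_lowRows (i j : ℕ) {u : U k n q} (hu : u ∈ pbw k n q) :
    idemAction hnq i j u (monomial n 0 0) ∈ lowRows k n := by
  refine pbw_le (p := (lowRows k n).comap
    (LinearMap.applyₗ (monomial n 0 0) ∘ₗ (idemAction hnq i j).toLinearMap))
    (fun a b c d ha => ?_) hu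
  change idemAction hnq i j _ (monomial n 0 0) ∈ lowRows k n
  rw [map_mul, map_mul, map_mul, map_pow, map_pow, map_pow, map_pow, idemAction, action_K,
    action_Kh, action_E, action_F, Module.End.mul_apply, Module.End.mul_apply,
    Module.End.mul_apply, opE_pow_monomial_zero hnq, opK, opKh, opDiag_pow, opDiag_pow,
    opDiag_monomial, map_smul, opDiag_monomial, map_smul, map_smul, opF_pow_monomial, zero_add,
    zero_add]
  exact Submodule.smul_mem _ _ (Submodule.smul_mem _ _ (monomial_mem_lowRows ha _))

theorem toLeftIdeal_mem_pbw (i j : ℕ) {w : PBWModule k n} (hw : w ∈ lowRows k n) :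
    toLeftIdeal n q i j w ∈ pbw k n q := by
  suffices lowRows k n ≤ (pbw k n q).comap (toLeftIdeal n q i j) from this hw
  apply Submodule.span_le.mpr
  rintro _ ⟨a, b, ha, rfl⟩
  rw [SetLike.mem_coe, Submodule.mem_comap, toLeftIdeal_monomial, ← mul_assoc]
  apply hnq.mul_mem_pbw_of_mem_torus _ (eIdem_mem_torus i j)
  simpa using hnq.monomial_mem_pbw ha 0 0 b

theorem idemAction_E_pow (i j s : ℕ) :
    idemAction hnq i j (E k n q ^ s) = opE n q (q ^ (2 * i)) ^ s := by
  rw [map_pow, idemAction, action_E]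

theorem idemAction_F (i j : ℕ) : idemAction hnq i j (F k n q) = opF n := by
  rw [idemAction, action_F]

theorem idemAction_alpha_monomial_zero (i : ℕ) {j : ℕ} (hj : j ≤ 1) :
    idemAction hnq i j (alpha k n q i j) (monomial n 0 0) = monomial n (n ^ 2 - 1) 0 := by
  rw [alpha, map_mul, map_pow, idemAction_F, Module.End.mul_apply,
    idemAction_eIdem_monomial_zero hnq i hj, opF_pow_monomial, zero_add]

end Admissible

end PBWModule

namespace Admissible

variable {k : Type} [Field k] {n : ℕ} {q : k} (hnq : Admissible k n q)
include hnq

open PBWModule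

theorem eq_zero_of_F_mul_eq_zero {x : U k n q} (hx : x ∈ pbw k n q) (h : F k n q * x = 0) :
    x = 0 := by
  apply hnq.eq_zero_of_forall_mul_eIdem_eq_zero
  intro i j _ _ hj
  have hzero : idemAction hnq i j x (monomial n 0 0) = 0 := by
    apply eq_zero_of_opF_eq_zero hnq (idemAction_monomial_zero_mem_lowRows hnq i j hx)
    rw [← idemAction_F hnq i j, ← Module.End.mul_apply, ← map_mul, h, map_zero,
      LinearMap.zero_apply]
  have hmul := toLeftIdeal_idemAction hnq i hj x (monomial n 0 0)
  rw [hzero, map_zero, toLeftIdeal_monomial, pow_zero, pow_zero, one_mul, one_mul] at hmul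
  exact hmul.symm

theorem exists_mem_pbw_F_mul_eq_beta {i j : ℕ} (hi : i ≤ n ^ 2 / 2) (hj : j ≤ 1) :
    ∃ x ∈ pbw k n q, F k n q * x = beta k n q i j := by
  have hn2 := hnq.sixteen_le
  have hrows : (opE n q (q ^ (2 * i)) ^ (2 * i - 2)) (monomial n (n ^ 2 - 1) 0)
      ∈ rowsFrom k n 1 := by
    have htop := opE_pow_mem_rowsFrom hnq (q ^ (2 * i)) (2 * i - 2)
      (monomial_mem_rowsFrom (k := k) (le_refl (n ^ 2 - 1)) 0)
    refine Submodule.span_mono ?_ htop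
    rintro _ ⟨a, b, ha, rfl⟩
    exact ⟨a, b, by omega, rfl⟩
  obtain ⟨w, hw, hFw⟩ := rowsFrom_one_le_map_opF hnq hrows
  refine ⟨toLeftIdeal n q i j w, toLeftIdeal_mem_pbw hnq i j hw, ?_⟩
  rw [← toLeftIdeal_idemAction hnq i hj, idemAction_F, hFw, ← idemAction_E_pow hnq i j,
    toLeftIdeal_idemAction hnq i hj, toLeftIdeal_monomial, beta, alpha, pow_zero, one_mul]

theorem gam_mem_pbw_and_F_mul_gam {i j : ℕ} (hi : i ≤ n ^ 2 / 2) (hj : j ≤ 1) :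
    gam k n q i j ∈ pbw k n q ∧ F k n q * gam k n q i j = beta k n q i j := by
  have hunique : ∃! x, x ∈ pbw k n q ∧ F k n q * x = beta k n q i j := by
    obtain ⟨x, hx, hFx⟩ := hnq.exists_mem_pbw_F_mul_eq_beta hi hj
    refine ⟨x, ⟨hx, hFx⟩, fun y ⟨hy, hFy⟩ => sub_eq_zero.mp ?_⟩
    apply hnq.eq_zero_of_F_mul_eq_zero (sub_mem hy hx)
    rw [mul_sub, hFy, hFx, sub_self]
  rw [gam, dif_pos hunique]
  exact hunique.choose_spec.1

theorem E_pow_mul_alpha_ne_zero (i : ℕ) {j : ℕ} (hj : j ≤ 1) :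
    E k n q ^ (n ^ 2 - 1) * alpha k n q i j ≠ 0 := by
  have hn2 := hnq.sixteen_le
  intro h
  have hcoeff := topRowCoeff_opE_pow hnq (show n ^ 2 - 1 < n ^ 2 by omega) (q ^ (2 * i))
    (monomial n (n ^ 2 - 1) 0)
  rw [← idemAction_E_pow hnq i j, ← idemAction_alpha_monomial_zero hnq i hj,
    ← Module.End.mul_apply, ← map_mul, h, map_zero, LinearMap.zero_apply, map_zero,
    idemAction_alpha_monomial_zero hnq i hj, topRowCoeff_monomial hnq (by omega),
    if_pos ⟨rfl, rfl⟩, mul_one] at hcoeff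
  exact pow_ne_zero _ (pow_ne_zero _ hnq.q_ne_zero) hcoeff.symm

theorem F_mul_alpha (i j : ℕ) : F k n q * alpha k n q i j = 0 := by
  have hn2 := hnq.sixteen_le
  rw [alpha, ← mul_assoc, ← pow_succ', Nat.sub_add_cancel (by omega), F_pow_sq, zero_mul]

theorem isWeight_alpha {i j : ℕ} (hi : 1 ≤ i) (hj : j ≤ 1) :
    IsWeight n q (q ^ (2 * i - 2)) (-(-1) ^ j) (alpha k n q i j) := by
  have hn2 := hnq.sixteen_le
  have hwt := hnq.isWeight_F_pow_smul (hnq.isWeight_eIdem i hj) (n ^ 2 - 1)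
  have hpow : q ^ (2 * i) * q ^ (2 * (n ^ 2 - 1)) = q ^ (2 * i - 2) := by
    rw [← pow_add, show 2 * i + 2 * (n ^ 2 - 1) = n ^ 2 * 2 + (2 * i - 2) by omega, pow_add,
      pow_mul, hnq.q_pow_sq, one_pow, one_mul]
  have hodd : Odd (n ^ 2 - 1) := by
    have := hnq.two_dvd_sq
    rw [Nat.odd_iff]
    omega
  rwa [smul_eq_mul, ← alpha, hpow, hodd.neg_one_pow, neg_one_mul] at hwt

theorem isWeight_of_F_mul {x : U k n q} (hx : x ∈ pbw k n q) {a b : k}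
    (hFx : IsWeight n q (a * q ^ 2) (-b) (F k n q * x)) : IsWeight n q a b x where
  G_smul := by
    rw [smul_eq_mul, ← sub_eq_zero]
    apply hnq.eq_zero_of_F_mul_eq_zero
      (sub_mem (hnq.torus_mul_mem_pbw G_mem_torus hx) (Submodule.smul_mem _ a hx))
    have hG := hFx.G_smul
    rw [smul_eq_mul, ← mul_assoc, hnq.qcommute_G_F, smul_mul_assoc, mul_assoc, mul_comm a,
      mul_smul] at hG
    rw [mul_sub, mul_smul_comm, sub_eq_zero]
    exact smul_right_injective _ (pow_ne_zero 2 hnq.q_ne_zero) hG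
  H_smul := by
    rw [smul_eq_mul, ← sub_eq_zero]
    apply hnq.eq_zero_of_F_mul_eq_zero
      (sub_mem (hnq.torus_mul_mem_pbw H_mem_torus hx) (Submodule.smul_mem _ b hx))
    have hH := hFx.H_smul
    rw [smul_eq_mul, ← mul_assoc, hnq.qcommute_H_F, smul_mul_assoc, mul_assoc, ← neg_one_mul b,
      mul_smul] at hH
    rw [mul_sub, mul_smul_comm, sub_eq_zero]
    exact smul_right_injective _ (neg_ne_zero.mpr one_ne_zero) hH

theorem isWeight_gam {i j : ℕ} (hi : 1 ≤ i) (hi' : i ≤ n ^ 2 / 2) (hj : j ≤ 1) :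
    IsWeight n q (q⁻¹ ^ (2 * i)) ((-1) ^ j) (gam k n q i j) := by
  have hq := hnq.q_ne_zero
  obtain ⟨hmem, hFgam⟩ := hnq.gam_mem_pbw_and_F_mul_gam hi' hj
  apply hnq.isWeight_of_F_mul hmem
  have hbeta := hnq.isWeight_E_pow_smul (hnq.isWeight_alpha hi hj) (2 * i - 2)
  have heven : Even (2 * i - 2) := ⟨i - 1, by omega⟩
  have hpow : q ^ (2 * i - 2) * q⁻¹ ^ (2 * (2 * i - 2)) = q⁻¹ ^ (2 * i) * q ^ 2 := by
    obtain ⟨i, rfl⟩ := Nat.exists_eq_add_of_le' hi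
    rw [show 2 * (i + 1) - 2 = 2 * i by omega, inv_pow, inv_pow]
    field_simp
    ring
  rwa [smul_eq_mul, ← beta, hpow, heven.neg_one_pow, one_mul, ← hFgam] at hbeta

end Admissible

section Strings

variable {k : Type} [Field k] {n : ℕ} {q : k} {M : Type*} [AddCommGroup M] [Module (U k n q) M]

theorem exists_mem_ne_zero_F_smul_eq_zero {W : Submodule (U k n q) M} (hW : W ≠ ⊥) :
    ∃ x ∈ W, x ≠ 0 ∧ F k n q • x = 0 := by
  classical
  obtain ⟨y, hy, hy0⟩ := Submodule.exists_mem_ne_zero_of_ne_bot hW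
  have hex : ∃ s, F k n q ^ s • y = 0 := ⟨n ^ 2, by rw [F_pow_sq, zero_smul]⟩
  obtain ⟨s, hs⟩ : ∃ s, Nat.find hex = s + 1 := by
    refine Nat.exists_eq_add_one_of_ne_zero fun h => hy0 ?_
    simpa [h] using Nat.find_spec hex
  refine ⟨F k n q ^ s • y, W.smul_mem _ hy, Nat.find_min hex (by omega), ?_⟩
  rw [← mul_smul, ← pow_succ', ← hs]
  exact Nat.find_spec hex

theorem E_pow_smul_E_pow_smul (s t : ℕ) (v : M) :
    E k n q ^ s • E k n q ^ t • v = E k n q ^ (s + t) • v := by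
  rw [pow_add, mul_smul]

theorem E_pow_smul_eq_zero_of_le {v : M} {m s : ℕ} (hm : E k n q ^ m • v = 0) (hs : m ≤ s) :
    E k n q ^ s • v = 0 := by
  rw [← Nat.sub_add_cancel hs, pow_add, mul_smul, hm, smul_zero]

variable [Module k M]

variable (k n q) in
/-- The `E`-string of `v`: the `k`-span of the vectors `E^s v`. -/
def stringSpan (v : M) : Submodule k M := Submodule.span k (Set.range fun s : ℕ => E k n q ^ s • v)

/-- `v` is a weight vector killed by the lowering operator `F`. -/
structure IsLowestWeight (n : ℕ) (q a b : k) [Module (U k n q) M] (v : M) : Prop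
    extends IsWeight n q a b v where
  F_smul : F k n q • v = 0

/-- `v` is a lowest weight vector whose `E`-string is `v, E v, …, E^ℓ v`. -/
structure IsString (n : ℕ) (q a b : k) (ℓ : ℕ) [Module (U k n q) M] (v : M) : Prop
    extends IsLowestWeight n q a b v where
  E_pow_smul_ne_zero : E k n q ^ ℓ • v ≠ 0
  E_pow_succ_smul : E k n q ^ (ℓ + 1) • v = 0

theorem E_pow_smul_mem_stringSpan (v : M) (s : ℕ) : E k n q ^ s • v ∈ stringSpan k n q v :=
  Submodule.subset_span ⟨s, rfl⟩

theorem mem_stringSpan_self (v : M) : v ∈ stringSpan k n q v := by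
  simpa using E_pow_smul_mem_stringSpan (q := q) v 0

theorem exists_eq_sum_of_mem_stringSpan {v x : M} {m : ℕ} (hm : E k n q ^ m • v = 0)
    (hx : x ∈ stringSpan k n q v) :
    ∃ c : ℕ → k, x = ∑ s ∈ Finset.range m, c s • E k n q ^ s • v := by
  have hle : stringSpan k n q v ≤
      Submodule.span k ((fun s => E k n q ^ s • v) '' (Finset.range m : Set ℕ)) := by
    rw [stringSpan, Submodule.span_le]
    rintro _ ⟨s, rfl⟩
    by_cases hs : s < m
    · exact Submodule.subset_span ⟨s, by simpa using hs, rfl⟩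
    · simp only [E_pow_smul_eq_zero_of_le hm (not_lt.mp hs), SetLike.mem_coe, zero_mem]
  obtain ⟨c, hc, rfl⟩ := (Finsupp.mem_span_image_iff_linearCombination k).mp (hle hx)
  exact ⟨c, Finsupp.sum_of_support_subset c (Finset.coe_subset.mp hc) _ fun _ _ => zero_smul k _⟩

variable [IsScalarTower k (U k n q) M] {a b : k} {v w x : M} {ℓ m : ℕ}

theorem eq_zero_of_sum_E_pow_smul_eq_zero (hv : E k n q ^ ℓ • v ≠ 0)
    (hv' : E k n q ^ (ℓ + 1) • v = 0) {c : ℕ → k}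
    (hc : ∑ s ∈ Finset.range (ℓ + 1), c s • E k n q ^ s • v = 0) : ∀ s ≤ ℓ, c s = 0 := by
  intro s
  induction s using Nat.strong_induction_on with
  | _ s ih =>
    intro hs
    have hshift : ∑ t ∈ Finset.range (ℓ + 1), c t • E k n q ^ (ℓ - s + t) • v = 0 := by
      rw [← smul_zero (E k n q ^ (ℓ - s)), ← hc, Finset.smul_sum]
      exact Finset.sum_congr rfl fun t _ => by rw [smul_comm _ (c t), E_pow_smul_E_pow_smul]
    rw [Finset.sum_eq_single s, Nat.sub_add_cancel hs] at hshift
    · exact (smul_eq_zero.mp hshift).resolve_right hv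
    · intro t _ hts
      rcases lt_or_gt_of_ne hts with hlt | hgt
      · rw [ih t hlt (by omega), zero_smul]
      · rw [E_pow_smul_eq_zero_of_le hv' (by omega), smul_zero]
    · intro h
      exact absurd (Finset.mem_range.mpr (by omega)) h

theorem smul_mem_span_of_forall_mem {S : Set M} {A : Submodule k M} {u : U k n q}
    (h : ∀ x ∈ S, u • x ∈ A) : ∀ x ∈ Submodule.span k S, u • x ∈ A := by
  intro x hx
  have hle : Submodule.span k S ≤ A.comap (Algebra.lsmul k k M u) := Submodule.span_le.mpr h
  exact hle hx

namespace Admissible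

variable (hnq : Admissible k n q)
include hnq

theorem lowerCoeff_pow_ne_zero {s e : ℕ} (hs : 0 < s) (hsn : s < n ^ 2) (he : e + 1 < n ^ 2)
    (hse : s ≠ e + 1) : lowerCoeff q s (q ^ e) ≠ 0 := by
  rw [ne_eq, hnq.lowerCoeff_eq_zero_iff, not_or]
  exact ⟨fun hd => by have := Nat.le_of_dvd hs hd; omega,
    fun h => hse (hnq.isPrimitiveRoot.pow_inj hsn he h)⟩

theorem lowerCoeff_succ_pow (e : ℕ) : lowerCoeff q (e + 1) (q ^ e) = 0 :=
  hnq.lowerCoeff_eq_zero_iff.mpr (Or.inr rfl)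

theorem inv_pow_eq_pow_sub {e : ℕ} (he : e ≤ n ^ 2) : q⁻¹ ^ e = q ^ (n ^ 2 - e) := by
  rw [inv_pow, inv_eq_of_mul_eq_one_left]
  rw [← pow_add, Nat.sub_add_cancel he, hnq.q_pow_sq]

/-- For `F w = 0` the first sum vanishes; the shift of indices in the second one loses no term
because the coefficient of `E^(m-1) w` in `F E^m w = 0` vanishes. -/
theorem F_smul_sum_E_pow_smul (hw : IsWeight n q a b w) (hEw : E k n q ^ m • w = 0)
    (hEFw : E k n q ^ m • F k n q • w = 0) (c : ℕ → k) :
    F k n q • ∑ s ∈ Finset.range m, c s • E k n q ^ s • w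
      = ∑ s ∈ Finset.range m, (c s * q⁻¹ ^ s) • E k n q ^ s • F k n q • w
        + ∑ s ∈ Finset.range m, (c (s + 1) * lowerCoeff q (s + 1) a) • E k n q ^ s • w := by
  have hlast : lowerCoeff q m a • E k n q ^ (m - 1) • w = 0 := by
    simpa [hEw, hEFw] using (hnq.F_smul_E_pow_smul hw m).symm
  have hshift := Finset.sum_range_succ'
    (fun s => (c s * lowerCoeff q s a) • E k n q ^ (s - 1) • w) m
  rw [Finset.sum_range_succ, mul_smul (c m), hlast, smul_zero, add_zero, lowerCoeff_zero, mul_zero,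
    zero_smul, add_zero] at hshift
  simp only [Nat.add_sub_cancel] at hshift
  rw [← hshift, Finset.smul_sum, ← Finset.sum_add_distrib]
  refine Finset.sum_congr rfl fun s _ => ?_
  rw [smul_comm, hnq.F_smul_E_pow_smul hw, smul_add, smul_smul (c s),
    mul_smul (c s) (lowerCoeff q s a)]

end Admissible

namespace IsLowestWeight

variable (hnq : Admissible k n q)
include hnq

theorem F_smul_E_pow_smul (hv : IsLowestWeight n q a b v) (s : ℕ) :
    F k n q • E k n q ^ s • v = lowerCoeff q s a • E k n q ^ (s - 1) • v := by
  rw [hnq.F_smul_E_pow_smul hv.toIsWeight, hv.F_smul, smul_zero, smul_zero, zero_add]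

theorem smul_mem_stringSpan (ha : a ≠ 0) (hv : IsLowestWeight n q a b v) (u : U k n q) :
    ∀ x ∈ stringSpan k n q v, u • x ∈ stringSpan k n q v := by
  have hq := inv_ne_zero hnq.q_ne_zero
  have hwt := hnq.isWeight_E_pow_smul hv.toIsWeight
  have hne (s : ℕ) : a * q⁻¹ ^ (2 * s) ≠ 0 := mul_ne_zero ha (pow_ne_zero _ hq)
  refine smul_mem_of_generators _ ?_ ?_ ?_ ?_ u <;> apply smul_mem_span_of_forall_mem <;>
    rintro _ ⟨s, rfl⟩
  · change K k n q • E k n q ^ s • v ∈ _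
    rw [hnq.K_smul (hne s) (hwt s)]
    exact Submodule.smul_mem _ _ (E_pow_smul_mem_stringSpan v s)
  · change Kh k n q • E k n q ^ s • v ∈ _
    rw [hnq.Kh_smul (hne s) (hwt s)]
    exact Submodule.smul_mem _ _ (E_pow_smul_mem_stringSpan v s)
  · change E k n q • E k n q ^ s • v ∈ _
    rw [← mul_smul, ← pow_succ']
    exact E_pow_smul_mem_stringSpan v (s + 1)
  · change F k n q • E k n q ^ s • v ∈ _
    rw [hv.F_smul_E_pow_smul hnq]
    exact Submodule.smul_mem _ _ (E_pow_smul_mem_stringSpan v (s - 1))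

theorem restrictScalars_span (ha : a ≠ 0) (hv : IsLowestWeight n q a b v) :
    (Submodule.span (U k n q) {v}).restrictScalars k = stringSpan k n q v := by
  apply le_antisymm
  · intro x hx
    obtain ⟨u, rfl⟩ := Submodule.mem_span_singleton.mp hx
    exact hv.smul_mem_stringSpan hnq ha u v (mem_stringSpan_self v)
  · rw [stringSpan, Submodule.span_le]
    rintro _ ⟨s, rfl⟩
    exact Submodule.smul_mem _ _ (Submodule.mem_span_singleton_self v)

theorem exists_eq_sum (ha : a ≠ 0) (hv : IsLowestWeight n q a b v) (hEv : E k n q ^ m • v = 0)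
    (hx : x ∈ Submodule.span (U k n q) {v}) :
    ∃ c : ℕ → k, x = ∑ s ∈ Finset.range m, c s • E k n q ^ s • v :=
  exists_eq_sum_of_mem_stringSpan hEv ((hv.restrictScalars_span hnq ha).le hx)

theorem F_smul_sum (hv : IsLowestWeight n q a b v) (hEv : E k n q ^ m • v = 0) (c : ℕ → k) :
    F k n q • ∑ s ∈ Finset.range m, c s • E k n q ^ s • v
      = ∑ s ∈ Finset.range m, (c (s + 1) * lowerCoeff q (s + 1) a) • E k n q ^ s • v := by
  have hEFv : E k n q ^ m • F k n q • v = 0 := by rw [hv.F_smul, smul_zero]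
  rw [hnq.F_smul_sum_E_pow_smul hv.toIsWeight hEv hEFv]
  simp only [hv.F_smul, smul_zero, Finset.sum_const_zero, zero_add]

theorem E_pow_smul_mem_of_le (hv : IsLowestWeight n q a b v) {W : Submodule (U k n q) M}
    {r t : ℕ} (hrt : r ≤ t) (hW : E k n q ^ t • v ∈ W)
    (hne : ∀ s, r < s → s ≤ t → lowerCoeff q s a ≠ 0) : E k n q ^ r • v ∈ W := by
  induction t, hrt using Nat.le_induction with
  | base => exact hW
  | succ t hrt ih =>
    refine ih ?_ fun s hs hst => hne s hs (by omega)
    have hF := W.smul_mem (F k n q) hW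
    rw [hv.F_smul_E_pow_smul hnq] at hF
    exact ((W.restrictScalars k).smul_mem_iff (hne (t + 1) (by omega) le_rfl)).mp hF

end IsLowestWeight

namespace IsString

theorem eq_zero_of_sum_eq_zero (hv : IsString n q a b ℓ v) {c : ℕ → k}
    (hc : ∑ s ∈ Finset.range (ℓ + 1), c s • E k n q ^ s • v = 0) : ∀ s ≤ ℓ, c s = 0 :=
  eq_zero_of_sum_E_pow_smul_eq_zero hv.E_pow_smul_ne_zero hv.E_pow_succ_smul hc

theorem linearIndependent (hv : IsString n q a b ℓ v) :
    LinearIndependent k fun s : Fin (ℓ + 1) => E k n q ^ (s : ℕ) • v := by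
  rw [Fintype.linearIndependent_iff]
  intro c hc s
  have hzero := hv.eq_zero_of_sum_eq_zero
    (c := fun s => if hs : s < ℓ + 1 then c ⟨s, hs⟩ else 0) (by
      rw [Finset.sum_range, ← hc]
      exact Finset.sum_congr rfl fun s _ => by rw [dif_pos s.2])
  have hs := hzero s (Nat.lt_succ_iff.mp s.2)
  rwa [dif_pos s.2] at hs

variable (hnq : Admissible k n q)
include hnq

theorem exists_eq_sum_of_F_smul_eq (ha : a ≠ 0) (hv : IsString n q a b ℓ v)
    (hx : x ∈ Submodule.span (U k n q) {v}) {d : ℕ → k}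
    (hF : F k n q • x = ∑ s ∈ Finset.range (ℓ + 1), d s • E k n q ^ s • v) :
    ∃ c : ℕ → k, x = ∑ s ∈ Finset.range (ℓ + 1), c s • E k n q ^ s • v ∧
      ∀ s ≤ ℓ, d s = c (s + 1) * lowerCoeff q (s + 1) a := by
  obtain ⟨c, rfl⟩ := hv.exists_eq_sum hnq ha hv.E_pow_succ_smul hx
  rw [hv.F_smul_sum hnq hv.E_pow_succ_smul, ← sub_eq_zero, ← Finset.sum_sub_distrib] at hF
  simp only [← sub_smul] at hF
  exact ⟨c, rfl, fun s hs => (sub_eq_zero.mp (hv.eq_zero_of_sum_eq_zero hF s hs)).symm⟩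

theorem exists_eq_sum_of_F_smul_eq_zero (ha : a ≠ 0) (hv : IsString n q a b ℓ v)
    (hx : x ∈ Submodule.span (U k n q) {v}) (hF : F k n q • x = 0) :
    ∃ c : ℕ → k, x = ∑ s ∈ Finset.range (ℓ + 1), c s • E k n q ^ s • v ∧
      ∀ s ≤ ℓ, 0 < s → lowerCoeff q s a ≠ 0 → c s = 0 := by
  obtain ⟨c, hxc, hc⟩ := hv.exists_eq_sum_of_F_smul_eq hnq ha hx (d := 0) (by simpa using hF)
  refine ⟨c, hxc, fun s hs h0 hne => ?_⟩
  have h := hc (s - 1) (by omega)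
  rw [Nat.sub_add_cancel h0, Pi.zero_apply, zero_eq_mul] at h
  exact h.resolve_right hne

theorem E_pow_smul_mem_of_ne_bot (ha : a ≠ 0) (hv : IsString n q a b ℓ v)
    {W : Submodule (U k n q) M} (hW : W ≤ Submodule.span (U k n q) {v}) (hW0 : W ≠ ⊥) :
    E k n q ^ ℓ • v ∈ W := by
  classical
  obtain ⟨x, hxW, hx0⟩ := Submodule.exists_mem_ne_zero_of_ne_bot hW0
  obtain ⟨c, rfl⟩ := hv.exists_eq_sum hnq ha hv.E_pow_succ_smul (hW hxW)
  have hex : ∃ s, s ≤ ℓ ∧ c s ≠ 0 := by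
    by_contra! h
    refine hx0 (Finset.sum_eq_zero fun s hs => ?_)
    rw [h s (Nat.lt_succ_iff.mp (Finset.mem_range.mp hs)), zero_smul]
  obtain ⟨hr, hcr⟩ := Nat.find_spec hex
  have hmin (s : ℕ) (hs : s < Nat.find hex) : c s = 0 := by
    by_contra h
    exact Nat.find_min hex hs ⟨by omega, h⟩
  have hEx := W.smul_mem (E k n q ^ (ℓ - Nat.find hex)) hxW
  rw [Finset.smul_sum, Finset.sum_eq_single (Nat.find hex), smul_comm, E_pow_smul_E_pow_smul,
    Nat.sub_add_cancel hr] at hEx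
  · exact ((W.restrictScalars k).smul_mem_iff hcr).mp hEx
  · intro s _ hs
    rw [smul_comm, E_pow_smul_E_pow_smul]
    rcases lt_or_gt_of_ne hs with hlt | hgt
    · rw [hmin s hlt, zero_smul]
    · rw [E_pow_smul_eq_zero_of_le hv.E_pow_succ_smul (by omega), smul_zero]
  · intro h
    exact absurd (Finset.mem_range.mpr (by omega)) h

/-- A basis of the module generated by a string. -/
def basis (ha : a ≠ 0) (hv : IsString n q a b ℓ v) (htop : Submodule.span (U k n q) {v} = ⊤) :
    Module.Basis (Fin (ℓ + 1)) k M :=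
  Module.Basis.mk hv.linearIndependent (by
    intro x _
    obtain ⟨c, rfl⟩ := hv.exists_eq_sum hnq ha hv.E_pow_succ_smul (x := x)
      (htop ▸ Submodule.mem_top)
    rw [Finset.sum_range]
    exact Submodule.sum_mem _ fun s _ =>
      Submodule.smul_mem _ _ (Submodule.subset_span ⟨s, rfl⟩))

theorem basis_apply (ha : a ≠ 0) (hv : IsString n q a b ℓ v)
    (htop : Submodule.span (U k n q) {v} = ⊤) (s : Fin (ℓ + 1)) :
    hv.basis hnq ha htop s = E k n q ^ (s : ℕ) • v := by
  rw [basis, Module.Basis.mk_apply]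

end IsString

end Strings

section Generators

variable {k : Type} [Field k] {n : ℕ} {q : k} {M V : Type*}
  [AddCommGroup M] [Module k M] [Module (U k n q) M]
  [AddCommGroup V] [Module k V] [Module (U k n q) V]
  {a b : k} {i j ℓ : ℕ}

/-- If `(r • x, r • y) ↦ r • x` had a kernel, that kernel would contain `t`; so the span of
`(x, y)` is the graph of the desired map. -/
theorem exists_linearMap_apply_eq_of_graph {R A B : Type*} [Ring R] [AddCommGroup A] [Module R A]
    [AddCommGroup B] [Module R B] {x : A} {y : B} (hx : Submodule.span R {x} = ⊤) {t : A × B}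
    (ht : t.1 ≠ 0) (hmin : ∀ W ≤ Submodule.span R {(x, y)}, W ≠ ⊥ → t ∈ W) :
    ∃ f : A →ₗ[R] B, f x = y := by
  have hbot : Submodule.span R {(x, y)} ⊓ LinearMap.ker (LinearMap.fst R A B) = ⊥ := by
    by_contra h
    exact ht (hmin _ inf_le_left h).2
  have hle : LinearMap.ker (LinearMap.toSpanSingleton R A x) ≤
      LinearMap.ker (LinearMap.toSpanSingleton R B y) := by
    intro r hr
    have hmem : r • (x, y) ∈ Submodule.span R {(x, y)} ⊓ LinearMap.ker (LinearMap.fst R A B) :=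
      ⟨Submodule.smul_mem _ r (Submodule.mem_span_singleton_self _), hr⟩
    rw [hbot, Submodule.mem_bot] at hmem
    exact congrArg Prod.snd hmem
  have hsurj : Function.Surjective (LinearMap.toSpanSingleton R A x) := by
    rw [← LinearMap.range_eq_top, LinearMap.range_toSpanSingleton, hx]
  let e := LinearMap.quotKerEquivOfSurjective _ hsurj
  refine ⟨(Submodule.liftQ _ _ hle).comp e.symm.toLinearMap, ?_⟩
  have hex : e.symm x = Submodule.Quotient.mk 1 := e.symm_apply_eq.mpr (one_smul R x).symm
  rw [LinearMap.comp_apply, LinearEquiv.coe_coe, hex, Submodule.liftQ_apply,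
    LinearMap.toSpanSingleton_apply, one_smul]

theorem span_singleton_eq_top_of_map_subtype {R A : Type*} [Ring R] [AddCommGroup A] [Module R A]
    {W : Submodule R A} {x : W} (hx : W = Submodule.span R {(x : A)}) :
    Submodule.span R {x} = ⊤ := by
  apply Submodule.map_injective_of_injective W.injective_subtype
  rw [Submodule.map_span, Set.image_singleton, Submodule.map_top, Submodule.range_subtype,
    Submodule.subtype_apply, ← hx]

namespace Admissible

variable (hnq : Admissible k n q)
include hnq

theorem lowerCoeff_inv_pow_ne_zero {s : ℕ} (hi : 1 ≤ i) (hi' : 2 * i ≤ n ^ 2) (hs : 0 < s)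
    (hsn : s < n ^ 2) (hsi : s ≠ n ^ 2 - 2 * i + 1) : lowerCoeff q s (q⁻¹ ^ (2 * i)) ≠ 0 := by
  rw [hnq.inv_pow_eq_pow_sub hi']
  exact hnq.lowerCoeff_pow_ne_zero hs hsn (by omega) hsi

theorem lowerCoeff_inv_pow_eq_zero (hi' : 2 * i ≤ n ^ 2) :
    lowerCoeff q (n ^ 2 - 2 * i + 1) (q⁻¹ ^ (2 * i)) = 0 := by
  rw [hnq.inv_pow_eq_pow_sub hi', hnq.lowerCoeff_succ_pow]

theorem lowerCoeff_sq (e : ℕ) : lowerCoeff q (n ^ 2) (q ^ e) = 0 :=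
  hnq.lowerCoeff_eq_zero_iff.mpr (Or.inl dvd_rfl)

end Admissible

theorem IsWeight.prod {x : M} {y : V} (hx : IsWeight n q a b x) (hy : IsWeight n q a b y) :
    IsWeight n q a b (x, y) where
  G_smul := Prod.ext hx.G_smul hy.G_smul
  H_smul := Prod.ext hx.H_smul hy.H_smul

theorem IsLowestWeight.prod {x : M} {y : V} (hx : IsLowestWeight n q a b x)
    (hy : IsLowestWeight n q a b y) : IsLowestWeight n q a b (x, y) where
  toIsWeight := hx.toIsWeight.prod hy.toIsWeight
  F_smul := Prod.ext hx.F_smul hy.F_smul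

/-- The relations between the images of `α_{2i,j}` and `γ_{2i,j}` under a homomorphism out of
`P_{2i,j}`. -/
structure IsProjectivePair (n : ℕ) (q : k) (i j : ℕ) [Module (U k n q) M] (α γ : M) : Prop where
  one_le : 1 ≤ i
  two_mul_le : 2 * i ≤ n ^ 2
  isLowestWeight : IsLowestWeight n q (q ^ (2 * i - 2)) (-(-1) ^ j) α
  isWeight : IsWeight n q (q⁻¹ ^ (2 * i)) ((-1) ^ j) γ
  F_smul : F k n q • γ = E k n q ^ (2 * i - 2) • α

namespace IsProjectivePair

variable {α γ : M}

theorem prod {α' γ' : V} (h : IsProjectivePair n q i j α γ) (h' : IsProjectivePair n q i j α' γ') :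
    IsProjectivePair n q i j (α, α') (γ, γ') where
  one_le := h.one_le
  two_mul_le := h.two_mul_le
  isLowestWeight := h.isLowestWeight.prod h'.isLowestWeight
  isWeight := h.isWeight.prod h'.isWeight
  F_smul := Prod.ext h.F_smul h'.F_smul

variable (hnq : Admissible k n q) (h : IsProjectivePair n q i j α γ)
include hnq h

theorem lowerCoeff_ne_zero {s : ℕ} (hs : 0 < s) (hsn : s < n ^ 2) (hsi : s ≠ 2 * i - 1) :
    lowerCoeff q s (q ^ (2 * i - 2)) ≠ 0 := by
  have hi := h.one_le
  have hi' := h.two_mul_le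
  exact hnq.lowerCoeff_pow_ne_zero hs hsn (by omega) (by omega)

theorem lowerCoeff_eq_zero : lowerCoeff q (2 * i - 1) (q ^ (2 * i - 2)) = 0 := by
  have hi := h.one_le
  rw [show 2 * i - 1 = 2 * i - 2 + 1 by omega, hnq.lowerCoeff_succ_pow]

theorem isString (hα : E k n q ^ (n ^ 2 - 1) • α ≠ 0) :
    IsString n q (q ^ (2 * i - 2)) (-(-1) ^ j) (n ^ 2 - 1) α where
  toIsLowestWeight := h.isLowestWeight
  E_pow_smul_ne_zero := hα
  E_pow_succ_smul := by
    rw [Nat.sub_add_cancel (by have := hnq.sixteen_le; omega), E_pow_sq, zero_smul]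

end IsProjectivePair

variable [IsScalarTower k (U k n q) M] [IsScalarTower k (U k n q) V]

namespace IsWeight

theorem map {x : M} (hx : IsWeight n q a b x) (f : M →ₗ[U k n q] V) : IsWeight n q a b (f x) where
  G_smul := by rw [← map_smul, hx.G_smul, f.map_smul_of_tower]
  H_smul := by rw [← map_smul, hx.H_smul, f.map_smul_of_tower]

theorem of_map {x : M} {f : M →ₗ[U k n q] V} (hf : Function.Injective f)
    (hx : IsWeight n q a b (f x)) : IsWeight n q a b x where
  G_smul := hf (by rw [map_smul, hx.G_smul, f.map_smul_of_tower])
  H_smul := hf (by rw [map_smul, hx.H_smul, f.map_smul_of_tower])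

end IsWeight

namespace IsLowestWeight

theorem of_map {x : M} {f : M →ₗ[U k n q] V} (hf : Function.Injective f)
    (hx : IsLowestWeight n q a b (f x)) : IsLowestWeight n q a b x where
  toIsWeight := hx.toIsWeight.of_map hf
  F_smul := hf (by rw [map_smul, hx.F_smul, map_zero])

end IsLowestWeight

namespace IsString

variable {v : M} {w : V}

theorem of_map {f : M →ₗ[U k n q] V} (hf : Function.Injective f)
    (hv : IsString n q a b ℓ (f v)) : IsString n q a b ℓ v where
  toIsLowestWeight := hv.toIsLowestWeight.of_map hf
  E_pow_smul_ne_zero := fun h => hv.E_pow_smul_ne_zero (by rw [← map_smul, h, map_zero])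
  E_pow_succ_smul := hf (by rw [map_smul, hv.E_pow_succ_smul, map_zero])

variable (hnq : Admissible k n q)
include hnq

theorem exists_linearMap_apply_eq (ha : a ≠ 0) (hv : IsString n q a b ℓ v)
    (htop : Submodule.span (U k n q) {v} = ⊤) (hw : IsLowestWeight n q a b w)
    (hEw : E k n q ^ (ℓ + 1) • w = 0) : ∃ f : M →ₗ[U k n q] V, f v = w := by
  have hvw : IsString n q a b ℓ (v, w) :=
    { toIsLowestWeight := hv.toIsLowestWeight.prod hw
      E_pow_smul_ne_zero := fun h => hv.E_pow_smul_ne_zero (congrArg Prod.fst h)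
      E_pow_succ_smul := Prod.ext hv.E_pow_succ_smul hEw }
  exact exists_linearMap_apply_eq_of_graph htop (t := E k n q ^ ℓ • (v, w)) hv.E_pow_smul_ne_zero
    fun W => hvw.E_pow_smul_mem_of_ne_bot hnq ha

theorem finite (ha : a ≠ 0) (hv : IsString n q a b ℓ v)
    (htop : Submodule.span (U k n q) {v} = ⊤) : Module.Finite k M :=
  Module.Finite.of_basis (hv.basis hnq ha htop)

theorem finrank_eq (ha : a ≠ 0) (hv : IsString n q a b ℓ v)
    (htop : Submodule.span (U k n q) {v} = ⊤) : Module.finrank k M = ℓ + 1 := by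
  rw [Module.finrank_eq_card_basis (hv.basis hnq ha htop), Fintype.card_fin]

theorem exists_eq_add_of_F_smul_eq_zero {e : ℕ} (ha : a ≠ 0) (hv : IsString n q a b ℓ v)
    (he : 0 < e) (heℓ : e ≤ ℓ) (hne : ∀ s ≤ ℓ, 0 < s → s ≠ e → lowerCoeff q s a ≠ 0) {x : M}
    (hx : x ∈ Submodule.span (U k n q) {v}) (hF : F k n q • x = 0) :
    ∃ c₀ c₁ : k, x = c₀ • v + c₁ • E k n q ^ e • v := by
  obtain ⟨c, rfl, hc⟩ := hv.exists_eq_sum_of_F_smul_eq_zero hnq ha hx hF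
  refine ⟨c 0, c e, ?_⟩
  rw [Finset.sum_eq_add_of_mem 0 e (by simp) (by simpa using Nat.lt_succ_of_le heℓ) he.ne,
    pow_zero, one_smul]
  intro s hs hse
  rw [hc s (Nat.lt_succ_iff.mp (Finset.mem_range.mp hs)) (Nat.pos_of_ne_zero hse.1), zero_smul]
  exact hne s (Nat.lt_succ_iff.mp (Finset.mem_range.mp hs)) (Nat.pos_of_ne_zero hse.1) hse.2

end IsString

namespace IsProjectivePair

variable {α γ y : M}

theorem of_map {f : M →ₗ[U k n q] V} (hf : Function.Injective f)
    (h : IsProjectivePair n q i j (f α) (f γ)) : IsProjectivePair n q i j α γ where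
  one_le := h.one_le
  two_mul_le := h.two_mul_le
  isLowestWeight := h.isLowestWeight.of_map hf
  isWeight := h.isWeight.of_map hf
  F_smul := hf (by rw [map_smul, map_smul, h.F_smul])

theorem isLowestWeight_mk (h : IsProjectivePair n q i j α γ) :
    IsLowestWeight n q (q⁻¹ ^ (2 * i)) ((-1) ^ j)
    ((Submodule.span (U k n q) {α}).mkQ γ) where
  toIsWeight := h.isWeight.map _
  F_smul := by
    rw [← map_smul, h.F_smul, Submodule.mkQ_apply, Submodule.Quotient.mk_eq_zero]
    exact Submodule.smul_mem _ _ (Submodule.mem_span_singleton_self α)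

variable (hnq : Admissible k n q) (h : IsProjectivePair n q i j α γ)
include hnq h

theorem mem_of_mem {W : Submodule (U k n q) M} (hγ : γ ∈ W) : α ∈ W := by
  have hi' := h.two_mul_le
  have hmem : E k n q ^ (2 * i - 2) • α ∈ W := h.F_smul ▸ W.smul_mem _ hγ
  simpa using h.isLowestWeight.E_pow_smul_mem_of_le hnq (Nat.zero_le _) hmem fun s hs hsi =>
    h.lowerCoeff_ne_zero hnq hs (by omega) (by omega)

theorem isLowestWeight_E_pow_smul :
    IsLowestWeight n q (q⁻¹ ^ (2 * i)) ((-1) ^ j) (E k n q ^ (2 * i - 1) • α) where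
  toIsWeight := by
    have hi := h.one_le
    have hq := hnq.q_ne_zero
    have hwt := hnq.isWeight_E_pow_smul h.isLowestWeight.toIsWeight (2 * i - 1)
    have hodd : Odd (2 * i - 1) := ⟨i - 1, by omega⟩
    have hpow : q ^ (2 * i - 2) * q⁻¹ ^ (2 * (2 * i - 1)) = q⁻¹ ^ (2 * i) := by
      rw [show 2 * (2 * i - 1) = (2 * i - 2) + 2 * i by omega, pow_add, ← mul_assoc, ← mul_pow,
        mul_inv_cancel₀ hq, one_pow, one_mul]
    rwa [hpow, hodd.neg_one_pow, neg_mul_neg, one_mul] at hwt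
  F_smul := by
    rw [h.isLowestWeight.F_smul_E_pow_smul hnq, h.lowerCoeff_eq_zero hnq, zero_smul]

theorem F_smul_E_pow_smul_right : F k n q • E k n q ^ (n ^ 2 - 2 * i + 1) • γ
    = q⁻¹ ^ (n ^ 2 - 2 * i + 1) • E k n q ^ (n ^ 2 - 1) • α := by
  have hi := h.one_le
  have hi' := h.two_mul_le
  rw [hnq.F_smul_E_pow_smul h.isWeight, hnq.lowerCoeff_inv_pow_eq_zero hi', zero_smul, add_zero,
    h.F_smul, E_pow_smul_E_pow_smul,
    show n ^ 2 - 2 * i + 1 + (2 * i - 2) = n ^ 2 - 1 by omega]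

variable (hα : E k n q ^ (n ^ 2 - 1) • α ≠ 0)
include hα

theorem isString_E_pow_smul :
    IsString n q (q⁻¹ ^ (2 * i)) ((-1) ^ j) (n ^ 2 - 2 * i) (E k n q ^ (2 * i - 1) • α) where
  toIsLowestWeight := h.isLowestWeight_E_pow_smul hnq
  E_pow_smul_ne_zero := by
    have hi := h.one_le
    have hi' := h.two_mul_le
    rwa [E_pow_smul_E_pow_smul, show n ^ 2 - 2 * i + (2 * i - 1) = n ^ 2 - 1 by omega]
  E_pow_succ_smul := by
    have hi := h.one_le
    have hi' := h.two_mul_le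
    rw [E_pow_smul_E_pow_smul, show n ^ 2 - 2 * i + 1 + (2 * i - 1) = n ^ 2 by omega, E_pow_sq,
      zero_smul]

/-- Neither `E^(2i-2) α` nor `E^(n²-1) α` lies in the image of `F` on the string of `α`, because
the corresponding lowering coefficients vanish. -/
theorem eq_zero_of_F_smul_eq (hy : y ∈ Submodule.span (U k n q) {α}) {c₀ c₁ : k}
    (hF : F k n q • y = c₀ • E k n q ^ (2 * i - 2) • α + c₁ • E k n q ^ (n ^ 2 - 1) • α) :
    c₀ = 0 ∧ c₁ = 0 := by
  have hi := h.one_le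
  have hi' := h.two_mul_le
  obtain ⟨c, -, hc⟩ := (h.isString hnq hα).exists_eq_sum_of_F_smul_eq hnq
    (pow_ne_zero _ hnq.q_ne_zero) hy (d := Pi.single (2 * i - 2) c₀ + Pi.single (n ^ 2 - 1) c₁) (by
      have hsum (r : ℕ) (hr : r < n ^ 2 - 1 + 1) (c : k) :
          ∑ s ∈ Finset.range (n ^ 2 - 1 + 1), (Pi.single r c : ℕ → k) s • E k n q ^ s • α
            = c • E k n q ^ r • α := by
        rw [Finset.sum_eq_single_of_mem r (Finset.mem_range.mpr hr), Pi.single_eq_same]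
        intro s _ hs
        rw [Pi.single_eq_of_ne hs, zero_smul]
      simp only [Pi.add_apply, add_smul, Finset.sum_add_distrib]
      rw [hF, hsum _ (by omega), hsum _ (by omega)])
  have hc₀ := hc (2 * i - 2) (by omega)
  have hc₁ := hc (n ^ 2 - 1) le_rfl
  rw [show 2 * i - 2 + 1 = 2 * i - 1 by omega, h.lowerCoeff_eq_zero hnq, mul_zero, Pi.add_apply,
    Pi.single_eq_same, Pi.single_eq_of_ne (by omega), add_zero] at hc₀
  rw [Nat.sub_add_cancel (by omega), hnq.lowerCoeff_sq, mul_zero, Pi.add_apply,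
    Pi.single_eq_same, Pi.single_eq_of_ne (by omega), zero_add] at hc₁
  exact ⟨hc₀, hc₁⟩

theorem E_pow_smul_notMem_span :
    E k n q ^ (n ^ 2 - 1) • γ ∉ Submodule.span (U k n q) {α} := by
  have hi := h.one_le
  have hi' := h.two_mul_le
  intro hmem
  have hbot : E k n q ^ (n ^ 2 - 1) • (Submodule.span (U k n q) {α}).mkQ γ ∈
      (⊥ : Submodule (U k n q) (M ⧸ Submodule.span (U k n q) {α})) := by
    rwa [Submodule.mem_bot, ← map_smul, Submodule.mkQ_apply, Submodule.Quotient.mk_eq_zero]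
  have hdescend := (h.isLowestWeight_mk).E_pow_smul_mem_of_le hnq
    (r := n ^ 2 - 2 * i + 1) (by omega) hbot fun s hs hsn =>
      hnq.lowerCoeff_inv_pow_ne_zero hi hi' (by omega) (by omega) hs.ne'
  rw [Submodule.mem_bot, ← map_smul, Submodule.mkQ_apply, Submodule.Quotient.mk_eq_zero]
    at hdescend
  have hzero := h.eq_zero_of_F_smul_eq hnq hα hdescend (c₀ := 0) (c₁ := q⁻¹ ^ (n ^ 2 - 2 * i + 1))
    (by rw [zero_smul, zero_add, h.F_smul_E_pow_smul_right hnq])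
  exact pow_ne_zero _ (inv_ne_zero hnq.q_ne_zero) hzero.2

theorem isString_mk : IsString n q (q⁻¹ ^ (2 * i)) ((-1) ^ j) (n ^ 2 - 1)
    ((Submodule.span (U k n q) {α}).mkQ γ) where
  toIsLowestWeight := h.isLowestWeight_mk
  E_pow_smul_ne_zero := by
    rw [← map_smul, Submodule.mkQ_apply, ne_eq, Submodule.Quotient.mk_eq_zero]
    exact h.E_pow_smul_notMem_span hnq hα
  E_pow_succ_smul := by
    rw [Nat.sub_add_cancel (by have := hnq.sixteen_le; omega), E_pow_sq, zero_smul]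

theorem mem_span_of_F_smul_eq_zero (hy : y ∈ Submodule.span (U k n q) {γ})
    (hF : F k n q • y = 0) : y ∈ Submodule.span (U k n q) {α} := by
  have hi := h.one_le
  have hi' := h.two_mul_le
  set d := n ^ 2 - 2 * i + 1 with hd
  set π := (Submodule.span (U k n q) {α}).mkQ with hπ
  have hmap : π y ∈ Submodule.span (U k n q) {π γ} := by
    obtain ⟨u, rfl⟩ := Submodule.mem_span_singleton.mp hy
    exact map_smul π u γ ▸ Submodule.smul_mem _ u (Submodule.mem_span_singleton_self _)
  obtain ⟨c₀, c₁, hc⟩ := (h.isString_mk hnq hα).exists_eq_add_of_F_smul_eq_zero hnq (e := d)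
    (pow_ne_zero _ (inv_ne_zero hnq.q_ne_zero)) (by omega) (by omega)
    (fun s hs h0 hsd => hnq.lowerCoeff_inv_pow_ne_zero hi hi' h0 (by omega) hsd) hmap
    (by rw [← map_smul, hF, map_zero])
  have hmem : y - (c₀ • γ + c₁ • E k n q ^ d • γ) ∈ Submodule.span (U k n q) {α} := by
    rw [← Submodule.ker_mkQ (Submodule.span (U k n q) {α}), LinearMap.mem_ker, ← hπ, map_sub, hc,
      map_add, LinearMap.map_smul_of_tower, LinearMap.map_smul_of_tower, map_smul, sub_self]
  obtain ⟨hc₀, hc₁⟩ := h.eq_zero_of_F_smul_eq hnq hα hmem (c₀ := -c₀) (c₁ := -(c₁ * q⁻¹ ^ d)) (by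
    rw [smul_sub, hF, smul_add, smul_comm (F k n q) c₀, h.F_smul, smul_comm (F k n q) c₁, hd,
      h.F_smul_E_pow_smul_right hnq, smul_smul, zero_sub, neg_add, neg_smul, neg_smul])
  have hc₁' := (mul_eq_zero.mp (neg_eq_zero.mp hc₁)).resolve_right
    (pow_ne_zero _ (inv_ne_zero hnq.q_ne_zero))
  rwa [neg_eq_zero.mp hc₀, hc₁', zero_smul, zero_smul, add_zero, sub_zero] at hmem

theorem exists_eq_add_of_F_smul_eq_zero (hy : y ∈ Submodule.span (U k n q) {γ})
    (hF : F k n q • y = 0) : ∃ c₀ c₁ : k, y = c₀ • α + c₁ • E k n q ^ (2 * i - 1) • α := by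
  have hi := h.one_le
  have hi' := h.two_mul_le
  exact (h.isString hnq hα).exists_eq_add_of_F_smul_eq_zero hnq (pow_ne_zero _ hnq.q_ne_zero)
    (by omega) (by omega) (fun s hs h0 hsi => h.lowerCoeff_ne_zero hnq h0 (by omega) hsi)
    (h.mem_span_of_F_smul_eq_zero hnq hα hy hF) hF

theorem E_pow_smul_mem_of_ne_bot {W : Submodule (U k n q) M}
    (hW : W ≤ Submodule.span (U k n q) {γ}) (hW0 : W ≠ ⊥) : E k n q ^ (n ^ 2 - 1) • α ∈ W := by
  obtain ⟨x, hxW, hx0, hFx⟩ := exists_mem_ne_zero_F_smul_eq_zero hW0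
  have hx := h.mem_span_of_F_smul_eq_zero hnq hα (hW hxW) hFx
  have hne : W ⊓ Submodule.span (U k n q) {α} ≠ ⊥ :=
    (Submodule.ne_bot_iff _).mpr ⟨x, ⟨hxW, hx⟩, hx0⟩
  exact ((h.isString hnq hα).E_pow_smul_mem_of_ne_bot hnq (pow_ne_zero _ hnq.q_ne_zero)
    inf_le_right hne).1

theorem span_le_of_ne_bot {W : Submodule (U k n q) M}
    (hW : W ≤ Submodule.span (U k n q) {γ}) (hW0 : W ≠ ⊥) :
    Submodule.span (U k n q) {E k n q ^ (2 * i - 1) • α} ≤ W := by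
  have hi := h.one_le
  have hi' := h.two_mul_le
  rw [Submodule.span_singleton_le_iff_mem]
  exact h.isLowestWeight.E_pow_smul_mem_of_le hnq (by omega)
    (h.E_pow_smul_mem_of_ne_bot hnq hα hW hW0) fun s hs hsn =>
      h.lowerCoeff_ne_zero hnq (by omega) (by omega) hs.ne'

theorem sSup_isSimpleModule_eq :
    sSup {W : Submodule (U k n q) M |
        W ≤ Submodule.span (U k n q) {γ} ∧ IsSimpleModule (U k n q) W}
      = Submodule.span (U k n q) {E k n q ^ (2 * i - 1) • α} := by
  have hmin {W : Submodule (U k n q) M} (hW : W ≤ Submodule.span (U k n q) {γ}) (hW0 : W ≠ ⊥) :=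
    h.span_le_of_ne_bot hnq hα hW hW0
  have hle : Submodule.span (U k n q) {E k n q ^ (2 * i - 1) • α} ≤
      Submodule.span (U k n q) {γ} := by
    rw [Submodule.span_singleton_le_iff_mem]
    exact Submodule.smul_mem _ _ (h.mem_of_mem hnq (Submodule.mem_span_singleton_self γ))
  have hne : E k n q ^ (2 * i - 1) • α ≠ 0 := fun h0 =>
    (h.isString_E_pow_smul hnq hα).E_pow_smul_ne_zero (by rw [h0, smul_zero])
  apply le_antisymm
  · refine sSup_le fun W ⟨hW, hsimple⟩ => ?_
    rw [isSimpleModule_iff_isAtom] at hsimple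
    rcases hsimple.le_iff.mp (hmin hW hsimple.1) with h0 | h1
    · exact absurd (Submodule.span_singleton_eq_bot.mp h0) hne
    · exact h1.ge
  · refine le_sSup ⟨hle, ?_⟩
    rw [isSimpleModule_iff_isAtom]
    refine ⟨fun h0 => hne (Submodule.span_singleton_eq_bot.mp h0), fun W hW => ?_⟩
    by_contra hW0
    exact hW.not_ge (hmin (hW.le.trans hle) hW0)

theorem exists_linearMap_apply_eq (htop : Submodule.span (U k n q) {γ} = ⊤) {α' γ' : V}
    (h' : IsProjectivePair n q i j α' γ') : ∃ f : M →ₗ[U k n q] V, f α = α' ∧ f γ = γ' := by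
  have hp := h.prod h'
  obtain ⟨f, hf⟩ := exists_linearMap_apply_eq_of_graph htop
    (t := E k n q ^ (n ^ 2 - 1) • (α, α')) (y := γ') hα fun W hW hW0 =>
      hp.E_pow_smul_mem_of_ne_bot hnq (fun h0 => hα (congrArg Prod.fst h0)) hW hW0
  obtain ⟨u, hu⟩ := Submodule.mem_span_singleton.mp
    (hp.mem_of_mem hnq (Submodule.mem_span_singleton_self (γ, γ')))
  rw [Prod.smul_mk, Prod.mk.injEq] at hu
  exact ⟨f, by rw [← hu.1, map_smul, hf, hu.2], hf⟩

theorem finrank_eq (htop : Submodule.span (U k n q) {γ} = ⊤) :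
    Module.finrank k M = 2 * n ^ 2 := by
  have hn2 := hnq.sixteen_le
  have hq := hnq.q_ne_zero
  set A := Submodule.span (U k n q) {α} with hA
  have hsub : IsString n q (q ^ (2 * i - 2)) (-(-1) ^ j) (n ^ 2 - 1)
      (⟨α, Submodule.mem_span_singleton_self α⟩ : A) :=
    IsString.of_map A.injective_subtype (h.isString hnq hα)
  have hquot := h.isString_mk hnq hα
  have htop₁ := span_singleton_eq_top_of_map_subtype
    (x := ⟨α, Submodule.mem_span_singleton_self α⟩) hA
  have htop₂ : Submodule.span (U k n q) {A.mkQ γ} = ⊤ := by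
    rw [← Set.image_singleton, ← Submodule.map_span, htop, Submodule.map_top, Submodule.range_mkQ]
  have hfin₁ := hsub.finite hnq (pow_ne_zero _ hq) htop₁
  have hfin₂ := hquot.finite hnq (pow_ne_zero _ (inv_ne_zero hq)) htop₂
  have e := Submodule.Quotient.restrictScalarsEquiv k A
  have : Module.Finite k (M ⧸ A.restrictScalars k) := Module.Finite.equiv e.symm
  have : Module.Finite k (A.restrictScalars k) := hfin₁
  have : Module.Finite k M := Module.Finite.of_submodule_quotient (A.restrictScalars k)
  rw [← Submodule.finrank_quotient_add_finrank (A.restrictScalars k), e.finrank_eq,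
    hquot.finrank_eq hnq (pow_ne_zero _ (inv_ne_zero hq)) htop₂]
  change _ + Module.finrank k A = _
  rw [hsub.finrank_eq hnq (pow_ne_zero _ hq) htop₁]
  omega

end IsProjectivePair

end Generators

section Models

variable {k : Type} [Field k] {n : ℕ} {q : k} {i j : ℕ}

/-- `v` generates its module, which is then isomorphic to `S_{2i,j}`. -/
structure IsSimpleGenerator (n : ℕ) (q : k) (i j : ℕ) {M : Type*} [AddCommGroup M] [Module k M]
    [Module (U k n q) M] (v : M) : Prop where
  one_le : 1 ≤ i
  two_mul_le : 2 * i ≤ n ^ 2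
  isString : IsString n q (q⁻¹ ^ (2 * i)) ((-1) ^ j) (n ^ 2 - 2 * i) v
  span_eq_top : Submodule.span (U k n q) {v} = ⊤

/-- `γ` generates its module, which is then isomorphic to `P_{2i,j}`, the pair `α, γ` corresponding
to `α_{2i,j}, γ_{2i,j}`. -/
structure IsProjectiveGenerator (n : ℕ) (q : k) (i j : ℕ) {M : Type*} [AddCommGroup M] [Module k M]
    [Module (U k n q) M] (α γ : M) : Prop extends IsProjectivePair n q i j α γ where
  E_pow_smul_ne_zero : E k n q ^ (n ^ 2 - 1) • α ≠ 0
  span_eq_top : Submodule.span (U k n q) {γ} = ⊤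

theorem IsSimpleGenerator.lowerCoeff_ne_zero {M : Type*} [AddCommGroup M] [Module k M]
    [Module (U k n q) M] {v : M} (hnq : Admissible k n q) (hv : IsSimpleGenerator n q i j v)
    {s : ℕ} (hs : 0 < s) (hs' : s < n ^ 2 - 2 * i + 1) : lowerCoeff q s (q⁻¹ ^ (2 * i)) ≠ 0 := by
  have hi := hv.one_le
  have hi' := hv.two_mul_le
  exact hnq.lowerCoeff_inv_pow_ne_zero hi hi' hs (by omega) (by omega)

theorem IsSimpleGenerator.exists_eq_smul_of_F_smul_eq_zero {M : Type*} [AddCommGroup M]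
    [Module k M] [Module (U k n q) M] [IsScalarTower k (U k n q) M] {v : M}
    (hnq : Admissible k n q) (hv : IsSimpleGenerator n q i j v) {x : M} (hF : F k n q • x = 0) :
    ∃ c : k, x = c • v := by
  obtain ⟨c, rfl, hc⟩ := hv.isString.exists_eq_sum_of_F_smul_eq_zero hnq
    (pow_ne_zero _ (inv_ne_zero hnq.q_ne_zero)) (hv.span_eq_top ▸ Submodule.mem_top) hF
  refine ⟨c 0, ?_⟩
  rw [Finset.sum_eq_single_of_mem 0 (by simp), pow_zero, one_smul]
  intro s hs hs0
  rw [Finset.mem_range] at hs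
  have hs0 := Nat.pos_of_ne_zero hs0
  rw [hc s (by omega) hs0 (hv.lowerCoeff_ne_zero hnq hs0 hs), zero_smul]

namespace Admissible

variable (hnq : Admissible k n q)
include hnq

theorem isProjectivePair_alpha_gam (hi : 1 ≤ i) (hi' : i ≤ n ^ 2 / 2) (hj : j ≤ 1) :
    IsProjectivePair n q i j (alpha k n q i j) (gam k n q i j) where
  one_le := hi
  two_mul_le := by omega
  isLowestWeight := ⟨hnq.isWeight_alpha hi hj, hnq.F_mul_alpha i j⟩
  isWeight := hnq.isWeight_gam hi hi' hj
  F_smul := (hnq.gam_mem_pbw_and_F_mul_gam hi' hj).2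

theorem exists_isProjectiveGenerator (hi : 1 ≤ i) (hi' : i ≤ n ^ 2 / 2) (hj : j ≤ 1) :
    ∃ α γ : P k n q i j, IsProjectiveGenerator n q i j α γ := by
  have h := hnq.isProjectivePair_alpha_gam hi hi' hj
  have hγ : gam k n q i j ∈ P k n q i j := Submodule.mem_span_singleton_self _
  exact ⟨⟨_, h.mem_of_mem hnq hγ⟩, ⟨_, hγ⟩,
    { toIsProjectivePair := IsProjectivePair.of_map (P k n q i j).injective_subtype h
      E_pow_smul_ne_zero := fun h0 => hnq.E_pow_mul_alpha_ne_zero i hj (congrArg Subtype.val h0)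
      span_eq_top := span_singleton_eq_top_of_map_subtype rfl }⟩

theorem exists_isSimpleGenerator (hi : 1 ≤ i) (hi' : i ≤ n ^ 2 / 2) (hj : j ≤ 1) :
    ∃ v : S k n q i j, IsSimpleGenerator n q i j v := by
  have h := hnq.isProjectivePair_alpha_gam hi hi' hj
  have hα := hnq.E_pow_mul_alpha_ne_zero i hj
  have hS : S k n q i j = Submodule.span _ {E k n q ^ (2 * i - 1) • alpha k n q i j} :=
    h.sSup_isSimpleModule_eq hnq hα
  exact ⟨⟨_, hS ▸ Submodule.mem_span_singleton_self _⟩,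
    { one_le := hi
      two_mul_le := h.two_mul_le
      isString := IsString.of_map (S k n q i j).injective_subtype (h.isString_E_pow_smul hnq hα)
      span_eq_top := span_singleton_eq_top_of_map_subtype hS }⟩

end Admissible

end Models

section TensorGrids

variable {k : Type} [Field k] {n : ℕ} {q : k} {V : Type*} [AddCommGroup V] [Module k V]
  [Module (U k n q) V]

/-- A tensor grid: a basis `vec a b` (`a < s`, `b < t`) of weight vectors on which `E` raises, and
`F` lowers, one of the two indices at a time with nonzero coefficients. This is the shape of the
tensor product of two `E`-strings of lengths `s` and `t`; `vec` is extended by zero. -/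
structure TensorGrid (n : ℕ) (q : k) (V : Type*) [AddCommGroup V] [Module k V]
    [Module (U k n q) V] (s t : ℕ) (x y : k) where
  basis : Module.Basis (Fin s × Fin t) k V
  vec : ℕ → ℕ → V
  basis_apply : ∀ p : Fin s × Fin t, basis p = vec p.1 p.2
  vec_eq_zero : ∀ a b, s ≤ a ∨ t ≤ b → vec a b = 0
  raiseLeft : ℕ → ℕ → k
  raiseRight : ℕ → ℕ → k
  lowerLeft : ℕ → ℕ → k
  lowerRight : ℕ → ℕ → k
  E_smul_vec : ∀ a b, a < s → b < t →
    E k n q • vec a b = raiseLeft a b • vec (a + 1) b + raiseRight a b • vec a (b + 1)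
  F_smul_vec : ∀ a b, a < s → b < t →
    F k n q • vec a b = lowerLeft a b • vec (a - 1) b + lowerRight a b • vec a (b - 1)
  raiseLeft_ne_zero : ∀ a b, a < s → b < t → raiseLeft a b ≠ 0
  raiseRight_ne_zero : ∀ a b, a < s → b < t → raiseRight a b ≠ 0
  lowerLeft_ne_zero : ∀ a b, 0 < a → a < s → b < t → lowerLeft a b ≠ 0
  lowerRight_ne_zero : ∀ a b, 0 < b → a < s → b < t → lowerRight a b ≠ 0
  lowerLeft_zero : ∀ b, lowerLeft 0 b = 0
  lowerRight_zero : ∀ a, lowerRight a 0 = 0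
  isWeight_vec : ∀ a b, a < s → b < t →
    IsWeight n q (x * q⁻¹ ^ (2 * (a + b))) ((-1) ^ (a + b) * y) (vec a b)

namespace TensorGrid

variable {s t m : ℕ} {x y : k} (D : TensorGrid n q V s t x y) {v : V}

/-- The grid with its two indices exchanged. -/
def swap : TensorGrid n q V t s x y where
  basis := D.basis.reindex (Equiv.prodComm _ _)
  vec a b := D.vec b a
  basis_apply p := by rw [Module.Basis.reindex_apply, D.basis_apply]; rfl
  vec_eq_zero a b h := D.vec_eq_zero b a h.symm
  raiseLeft a b := D.raiseRight b a
  raiseRight a b := D.raiseLeft b a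
  lowerLeft a b := D.lowerRight b a
  lowerRight a b := D.lowerLeft b a
  E_smul_vec a b ha hb := by rw [D.E_smul_vec b a hb ha, add_comm]
  F_smul_vec a b ha hb := by rw [D.F_smul_vec b a hb ha, add_comm]
  raiseLeft_ne_zero a b ha hb := D.raiseRight_ne_zero b a hb ha
  raiseRight_ne_zero a b ha hb := D.raiseLeft_ne_zero b a hb ha
  lowerLeft_ne_zero a b h ha hb := D.lowerRight_ne_zero b a h hb ha
  lowerRight_ne_zero a b h ha hb := D.lowerLeft_ne_zero b a h hb ha
  lowerLeft_zero b := D.lowerRight_zero b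
  lowerRight_zero b := D.lowerLeft_zero b
  isWeight_vec a b ha hb := by rw [add_comm a b]; exact D.isWeight_vec b a hb ha

/-- The coordinate of a vector along `vec a b`, zero when `(a, b)` lies outside the grid. -/
def coord (a b : ℕ) : V →ₗ[k] k :=
  if h : a < s ∧ b < t then D.basis.coord (⟨a, h.1⟩, ⟨b, h.2⟩) else 0

theorem coord_eq_zero {a b : ℕ} (h : ¬(a < s ∧ b < t)) (v : V) : D.coord a b v = 0 := by
  rw [coord, dif_neg h, LinearMap.zero_apply]

theorem coord_vec {a' b' : ℕ} (ha' : a' < s) (hb' : b' < t) (a b : ℕ) :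
    D.coord a b (D.vec a' b') = if a = a' ∧ b = b' then 1 else 0 := by
  by_cases h : a < s ∧ b < t
  · rw [← D.basis_apply (⟨a', ha'⟩, ⟨b', hb'⟩), coord, dif_pos h, Module.Basis.coord_apply,
      Module.Basis.repr_self, Finsupp.single_apply]
    simp only [Prod.mk.injEq, Fin.mk.injEq, eq_comm]
  · rw [D.coord_eq_zero h, if_neg (by omega)]

theorem coord_vec_of_lt (a' b' : ℕ) {a b : ℕ} (ha : a < s) (hb : b < t) :
    D.coord a b (D.vec a' b') = if a = a' ∧ b = b' then 1 else 0 := by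
  by_cases h : a' < s ∧ b' < t
  · exact D.coord_vec h.1 h.2 a b
  · rw [D.vec_eq_zero a' b' (by omega), map_zero, if_neg (by omega)]

theorem eq_zero_of_forall_coord (h : ∀ a b, D.coord a b v = 0) : v = 0 := by
  refine D.basis.forall_coord_eq_zero_iff.mp fun p => ?_
  simpa only [coord, dif_pos (And.intro p.1.2 p.2.2)] using h p.1 p.2

theorem linearMap_ext {W : Type*} [AddCommGroup W] [Module k W] {f g : V →ₗ[k] W}
    (h : ∀ a b, a < s → b < t → f (D.vec a b) = g (D.vec a b)) : f = g :=
  D.basis.ext fun p => by rw [D.basis_apply]; exact h _ _ p.1.2 p.2.2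

/-- The vectors of degree `m`, where `vec a b` has degree `a + b`. -/
def homogeneous (m : ℕ) : Submodule k V :=
  Submodule.span k {v | ∃ a b, a < s ∧ b < t ∧ a + b = m ∧ D.vec a b = v}

theorem vec_mem_homogeneous (a b : ℕ) : D.vec a b ∈ D.homogeneous (a + b) := by
  by_cases h : a < s ∧ b < t
  · exact Submodule.subset_span ⟨a, b, h.1, h.2, rfl, rfl⟩
  · rw [D.vec_eq_zero a b (by omega)]
    exact zero_mem _

theorem homogeneous_le {W : Submodule k V}
    (hW : ∀ a b, a < s → b < t → a + b = m → D.vec a b ∈ W) : D.homogeneous m ≤ W := by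
  refine Submodule.span_le.mpr ?_
  rintro _ ⟨a, b, ha, hb, hm, rfl⟩
  exact hW a b ha hb hm

theorem coord_eq_zero_of_mem (hv : v ∈ D.homogeneous m) {a b : ℕ} (hab : a + b ≠ m) :
    D.coord a b v = 0 := by
  have hle : D.homogeneous m ≤ LinearMap.ker (D.coord a b) :=
    D.homogeneous_le fun a' b' ha' hb' hm => by
      rw [LinearMap.mem_ker, D.coord_vec ha' hb', if_neg (by omega)]
  exact hle hv

theorem linearIndependent_of_mem_homogeneous {ι : Type*} {v : ι → V} {d : ι → ℕ}
    (hd : Function.Injective d) (hv : ∀ i, v i ∈ D.homogeneous (d i)) (hv0 : ∀ i, v i ≠ 0) :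
    LinearIndependent k v := by
  refine linearIndependent_iff'.mpr fun s c hc i his => ?_
  refine (smul_eq_zero.mp (D.eq_zero_of_forall_coord fun a b => ?_)).resolve_right (hv0 i)
  have hmem : ∀ j, c j • v j ∈ D.homogeneous (d j) := fun j => Submodule.smul_mem _ _ (hv j)
  by_cases hab : a + b = d i
  · rw [← Finset.sum_eq_single (f := fun j => D.coord a b (c j • v j)) i
      (fun j _ hj => D.coord_eq_zero_of_mem (hmem j) fun he => hj (hd (he.symm.trans hab)))
      (absurd his), ← map_sum, hc, map_zero]
  · exact D.coord_eq_zero_of_mem (hmem i) hab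

variable [IsScalarTower k (U k n q) V]

theorem isWeight_of_mem (hv : v ∈ D.homogeneous m) :
    IsWeight n q (x * q⁻¹ ^ (2 * m)) ((-1) ^ m * y) v := by
  refine Submodule.span_induction ?_ ?_ ?_ ?_ hv
  · rintro _ ⟨a, b, ha, hb, rfl, rfl⟩
    exact D.isWeight_vec a b ha hb
  · exact ⟨by simp only [smul_zero], by simp only [smul_zero]⟩
  · rintro v w - - ⟨hGv, hHv⟩ ⟨hGw, hHw⟩
    exact ⟨by rw [smul_add, smul_add, hGv, hGw], by rw [smul_add, smul_add, hHv, hHw]⟩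
  · rintro c v - ⟨hG, hH⟩
    exact ⟨by rw [smul_comm, hG, smul_comm], by rw [smul_comm, hH, smul_comm]⟩

theorem E_smul_mem (hv : v ∈ D.homogeneous m) : E k n q • v ∈ D.homogeneous (m + 1) := by
  refine smul_mem_span_of_forall_mem ?_ v hv
  rintro _ ⟨a, b, ha, hb, rfl, rfl⟩
  rw [D.E_smul_vec a b ha hb]
  refine add_mem (Submodule.smul_mem _ _ ?_) (Submodule.smul_mem _ _ ?_)
  · rw [add_right_comm]
    exact D.vec_mem_homogeneous (a + 1) b
  · exact D.vec_mem_homogeneous a (b + 1)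

theorem E_pow_smul_mem (hv : v ∈ D.homogeneous m) (r : ℕ) :
    E k n q ^ r • v ∈ D.homogeneous (m + r) := by
  induction r with
  | zero => rwa [pow_zero, one_smul]
  | succ r ih => rw [pow_succ', mul_smul]; exact D.E_smul_mem ih

theorem F_smul_mem (hv : v ∈ D.homogeneous (m + 1)) : F k n q • v ∈ D.homogeneous m := by
  refine smul_mem_span_of_forall_mem ?_ v hv
  rintro _ ⟨a, b, ha, hb, hm, rfl⟩
  rw [D.F_smul_vec a b ha hb]
  refine add_mem ?_ ?_
  · rcases a with _ | a
    · rw [D.lowerLeft_zero, zero_smul]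
      exact zero_mem _
    · rw [show m = a + b by omega]
      exact Submodule.smul_mem _ _ (D.vec_mem_homogeneous a b)
  · rcases b with _ | b
    · rw [D.lowerRight_zero, zero_smul]
      exact zero_mem _
    · rw [show m = a + b by omega]
      exact Submodule.smul_mem _ _ (D.vec_mem_homogeneous a b)

theorem coord_E_smul {a b : ℕ} (ha : a + 1 < s) (hb : b < t) (v : V) :
    D.coord (a + 1) b (E k n q • v) = D.raiseLeft a b * D.coord a b v
      + if b = 0 then 0 else D.raiseRight (a + 1) (b - 1) * D.coord (a + 1) (b - 1) v := by
  have h : D.coord (a + 1) b ∘ₗ Algebra.lsmul k k V (E k n q) = D.raiseLeft a b • D.coord a b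
      + if b = 0 then 0 else D.raiseRight (a + 1) (b - 1) • D.coord (a + 1) (b - 1) := by
    refine D.linearMap_ext fun a' b' ha' hb' => ?_
    change D.coord (a + 1) b (E k n q • D.vec a' b') = _
    rw [D.E_smul_vec a' b' ha' hb', map_add, map_smul, map_smul, D.coord_vec_of_lt _ _ ha hb,
      D.coord_vec_of_lt _ _ ha hb]
    rcases b with _ | b
    · simp +contextual [D.coord_vec ha' hb', ite_and]
    · simp +contextual [D.coord_vec ha' hb', ite_and]
  have h' := LinearMap.congr_fun h v
  split_ifs at h' ⊢ <;> exact h'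

theorem coord_F_smul (a b : ℕ) (v : V) :
    D.coord a b (F k n q • v) = D.lowerLeft (a + 1) b * D.coord (a + 1) b v
      + D.lowerRight a (b + 1) * D.coord a (b + 1) v := by
  have h : D.coord a b ∘ₗ Algebra.lsmul k k V (F k n q)
      = D.lowerLeft (a + 1) b • D.coord (a + 1) b + D.lowerRight a (b + 1) • D.coord a (b + 1) := by
    refine D.linearMap_ext fun a' b' ha' hb' => ?_
    change D.coord a b (F k n q • D.vec a' b') = _
    rw [D.F_smul_vec a' b' ha' hb', map_add, map_smul, map_smul, D.coord_vec (by omega) hb',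
      D.coord_vec ha' (by omega)]
    rcases a' with _ | a' <;> rcases b' with _ | b' <;>
      simp +contextual [D.coord_vec ha' hb', D.lowerLeft_zero, D.lowerRight_zero, ite_and]
  exact LinearMap.congr_fun h v

theorem F_smul_eq_zero (hv : v ∈ D.homogeneous 0) : F k n q • v = 0 :=
  D.eq_zero_of_forall_coord fun a b => by
    rw [D.coord_F_smul, D.coord_eq_zero_of_mem hv (by omega), D.coord_eq_zero_of_mem hv (by omega),
      mul_zero, mul_zero, add_zero]

theorem eq_zero_of_F_smul_eq_zero (hm : t ≤ m) (hv : v ∈ D.homogeneous m)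
    (hF : F k n q • v = 0) : v = 0 := by
  refine D.eq_zero_of_forall_coord fun a => ?_
  induction a with
  | zero =>
    intro b
    by_cases hb : 0 + b = m
    · exact D.coord_eq_zero (by omega) v
    · exact D.coord_eq_zero_of_mem hv hb
  | succ a ih =>
    intro b
    by_cases hab : a + 1 < s ∧ b < t
    · have h := D.coord_F_smul a b v
      rw [hF, map_zero, ih, mul_zero, add_zero, zero_eq_mul] at h
      exact h.resolve_left (D.lowerLeft_ne_zero _ _ a.succ_pos hab.1 hab.2)
    · exact D.coord_eq_zero hab v

theorem eq_zero_of_E_smul_eq_zero (hm : m + 1 < s) (hv : v ∈ D.homogeneous m)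
    (hE : E k n q • v = 0) : v = 0 := by
  suffices h : ∀ b a, D.coord a b v = 0 from D.eq_zero_of_forall_coord fun a b => h b a
  intro b
  induction b with
  | zero =>
    intro a
    by_cases ha : a = m ∧ 0 < t
    · have h := D.coord_E_smul (a := a) (by omega) ha.2 v
      rw [hE, map_zero, if_pos rfl, add_zero, zero_eq_mul] at h
      exact h.resolve_left (D.raiseLeft_ne_zero _ _ (by omega) ha.2)
    · by_cases ht : 0 < t
      · exact D.coord_eq_zero_of_mem hv (by omega)
      · exact D.coord_eq_zero (by omega) v
  | succ b ih =>
    intro a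
    by_cases hab : a + (b + 1) = m ∧ b + 1 < t
    · have h := D.coord_E_smul (a := a) (by omega) hab.2 v
      rw [hE, map_zero, Nat.add_sub_cancel, ih, mul_zero, ite_self, add_zero, zero_eq_mul] at h
      exact h.resolve_left (D.raiseLeft_ne_zero _ _ (by omega) hab.2)
    · by_cases hb : b + 1 < t
      · exact D.coord_eq_zero_of_mem hv fun h => hab ⟨h, hb⟩
      · exact D.coord_eq_zero (by omega) v

theorem E_pow_smul_ne_zero {r : ℕ} (hm : m + r < s) (hv : v ∈ D.homogeneous m) (hv0 : v ≠ 0) :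
    E k n q ^ r • v ≠ 0 := by
  induction r with
  | zero => rwa [pow_zero, one_smul]
  | succ r ih =>
    rw [pow_succ', mul_smul]
    exact fun h => ih (by omega)
      (D.eq_zero_of_E_smul_eq_zero (m := m + r) (by omega) (D.E_pow_smul_mem hv r) h)

theorem exists_F_smul_eq (hm : m + 1 < t) {w : V} (hw : w ∈ D.homogeneous m) :
    ∃ v ∈ D.homogeneous (m + 1), D.coord (m + 1) 0 v = 0 ∧ F k n q • v = w := by
  let W : Submodule k V := (D.homogeneous (m + 1) ⊓ LinearMap.ker (D.coord (m + 1) 0)).map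
    (Algebra.lsmul k k V (F k n q))
  have hFW : ∀ a b, a < s → b + 1 < t → a + b = m → F k n q • D.vec a (b + 1) ∈ W := by
    rintro a b ha hb rfl
    refine ⟨_, ⟨D.vec_mem_homogeneous a (b + 1), ?_⟩, rfl⟩
    rw [SetLike.mem_coe, LinearMap.mem_ker, D.coord_vec ha hb, if_neg (by omega)]
  have hW : ∀ a b, a < s → b < t → a + b = m → D.vec a b ∈ W := by
    intro a
    induction a with
    | zero =>
      intro b ha _ hab
      have h := hFW 0 b ha (by omega) hab
      rw [D.F_smul_vec 0 (b + 1) ha (by omega), D.lowerLeft_zero, zero_smul, zero_add] at h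
      exact (W.smul_mem_iff (D.lowerRight_ne_zero 0 (b + 1) b.succ_pos ha (by omega))).mp h
    | succ a ih =>
      intro b ha hb hab
      have h := hFW (a + 1) b ha (by omega) hab
      rw [D.F_smul_vec (a + 1) (b + 1) ha (by omega), Nat.add_sub_cancel, Nat.add_sub_cancel,
        Submodule.add_mem_iff_right _
          (W.smul_mem _ (ih (b + 1) (by omega) (by omega) (by omega)))] at h
      exact (W.smul_mem_iff (D.lowerRight_ne_zero (a + 1) (b + 1) b.succ_pos ha (by omega))).mp h
  obtain ⟨v, ⟨hv, hv0⟩, hvw⟩ := D.homogeneous_le hW hw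
  exact ⟨v, hv, hv0, hvw⟩

theorem exists_ne_zero_F_smul_eq_zero (hms : m < s) (hmt : m < t) :
    ∃ v ∈ D.homogeneous m, v ≠ 0 ∧ F k n q • v = 0 := by
  have hcoord : D.coord m 0 (D.vec m 0) = 1 := by
    rw [D.coord_vec hms (by omega), if_pos ⟨rfl, rfl⟩]
  have hvec : D.vec m 0 ∈ D.homogeneous m := D.vec_mem_homogeneous m 0
  rcases m with _ | m
  · refine ⟨D.vec 0 0, hvec, fun h => ?_, D.F_smul_eq_zero hvec⟩
    rw [h, map_zero] at hcoord
    exact zero_ne_one hcoord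
  · obtain ⟨w, hw, hw0, hFw⟩ := D.exists_F_smul_eq hmt (D.F_smul_mem hvec)
    refine ⟨D.vec (m + 1) 0 - w, sub_mem hvec hw, fun h => ?_, by rw [smul_sub, hFw, sub_self]⟩
    rw [sub_eq_zero.mp h, hw0] at hcoord
    exact zero_ne_one hcoord

end TensorGrid

end TensorGrids

section Decomposition

variable {k : Type} [Field k] {n : ℕ} {q : k}

theorem injective_of_forall_F_smul_eq_zero {M V : Type*} [AddCommGroup M] [AddCommGroup V]
    [Module (U k n q) M] [Module (U k n q) V] {f : M →ₗ[U k n q] V}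
    (hf : ∀ x, F k n q • x = 0 → f x = 0 → x = 0) : Function.Injective f := by
  rw [← LinearMap.ker_eq_bot]
  by_contra h
  obtain ⟨x, hx, hx0, hF⟩ := exists_mem_ne_zero_F_smul_eq_zero h
  exact hx0 (hf x hF hx)

variable {V : Type*} [AddCommGroup V] [Module k V] [Module (U k n q) V]

section Summands

variable [IsScalarTower k (U k n q) V] {ι κ : Type*}
  {A : ι → Type*} [∀ l, AddCommGroup (A l)] [∀ l, Module k (A l)] [∀ l, Module (U k n q) (A l)]
  [∀ l, IsScalarTower k (U k n q) (A l)]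
  {C : κ → Type*} [∀ l, AddCommGroup (C l)] [∀ l, Module k (C l)] [∀ l, Module (U k n q) (C l)]
  [∀ l, IsScalarTower k (U k n q) (C l)]
  {i j : ι → ℕ} {i' j' : κ → ℕ} {s : ∀ l, A l} {α γ : ∀ l, C l} {v : ι → V} {z x : κ → V}

theorem exists_injective_linearMap [Finite ι] [Finite κ] (hnq : Admissible k n q)
    (hs : ∀ l, IsSimpleGenerator n q (i l) (j l) (s l))
    (hαγ : ∀ l, IsProjectiveGenerator n q (i' l) (j' l) (α l) (γ l))
    (hv : ∀ l, IsLowestWeight n q (q⁻¹ ^ (2 * i l)) ((-1) ^ j l) (v l))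
    (hEv : ∀ l, E k n q ^ (n ^ 2 - 2 * i l + 1) • v l = 0)
    (hzx : ∀ l, IsProjectivePair n q (i' l) (j' l) (z l) (x l))
    (hli : LinearIndependent k
      (Sum.elim v (Sum.elim z fun l => E k n q ^ (2 * i' l - 1) • z l))) :
    ∃ Φ : ((∀ l, A l) × (∀ l, C l)) →ₗ[U k n q] V, Function.Injective Φ := by
  cases nonempty_fintype ι
  cases nonempty_fintype κ
  have hq (m : ℕ) : q⁻¹ ^ m ≠ 0 := pow_ne_zero _ (inv_ne_zero hnq.q_ne_zero)
  choose f hf using fun l =>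
    (hs l).isString.exists_linearMap_apply_eq hnq (hq _) (hs l).span_eq_top (hv l) (hEv l)
  choose g hgα _ using fun l => (hαγ l).toIsProjectivePair.exists_linearMap_apply_eq hnq
    (hαγ l).E_pow_smul_ne_zero (hαγ l).span_eq_top (hzx l)
  refine ⟨LinearMap.coprod (∑ l, f l ∘ₗ LinearMap.proj l) (∑ l, g l ∘ₗ LinearMap.proj l),
    injective_of_forall_F_smul_eq_zero ?_⟩
  rintro ⟨y, w⟩ hF hΦ
  choose c hc using fun l =>
    (hs l).exists_eq_smul_of_F_smul_eq_zero hnq (congrFun (congrArg Prod.fst hF) l)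
  choose d e hde using fun l => (hαγ l).toIsProjectivePair.exists_eq_add_of_F_smul_eq_zero hnq
    (hαγ l).E_pow_smul_ne_zero ((hαγ l).span_eq_top ▸ Submodule.mem_top)
    (congrFun (congrArg Prod.snd hF) l)
  have hfy : ∀ l, f l (y l) = c l • v l := fun l => by
    rw [← hf l, ← LinearMap.map_smul_of_tower, ← hc l]
  have hgw : ∀ l, g l (w l) = d l • z l + e l • E k n q ^ (2 * i' l - 1) • z l := fun l =>
    (congrArg (g l) (hde l)).trans <| by
      rw [map_add, LinearMap.map_smul_of_tower, LinearMap.map_smul_of_tower, map_smul, hgα]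
  have hcde := Fintype.linearIndependent_iff.mp hli (Sum.elim c (Sum.elim d e)) <| by
    simpa only [Fintype.sum_sum_type, Sum.elim_inl, Sum.elim_inr, hfy, hgw,
      Finset.sum_add_distrib, LinearMap.coprod_apply, LinearMap.sum_apply, LinearMap.comp_apply,
      LinearMap.proj_apply] using hΦ
  refine Prod.ext (funext fun l => ?_) (funext fun l => ?_)
  · have hc0 : c l = 0 := hcde (Sum.inl l)
    exact (hc l).trans (by rw [hc0, zero_smul]; rfl)
  · have hd0 : d l = 0 := hcde (Sum.inr (Sum.inl l))
    have he0 : e l = 0 := hcde (Sum.inr (Sum.inr l))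
    exact (hde l).trans (by rw [hd0, he0, zero_smul, zero_smul, add_zero]; rfl)

variable [Fintype ι] [Fintype κ]

theorem finrank_pi_prod_pi (hnq : Admissible k n q)
    (hs : ∀ l, IsSimpleGenerator n q (i l) (j l) (s l))
    (hαγ : ∀ l, IsProjectiveGenerator n q (i' l) (j' l) (α l) (γ l)) :
    Module.finrank k ((∀ l, A l) × (∀ l, C l))
      = ∑ l, (n ^ 2 - 2 * i l + 1) + Fintype.card κ * (2 * n ^ 2) := by
  have hA : ∀ l, Module.Finite k (A l) := fun l =>
    (hs l).isString.finite hnq (pow_ne_zero _ (inv_ne_zero hnq.q_ne_zero)) (hs l).span_eq_top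
  have hC : ∀ l, Module.finrank k (C l) = 2 * n ^ 2 := fun l =>
    (hαγ l).toIsProjectivePair.finrank_eq hnq (hαγ l).E_pow_smul_ne_zero (hαγ l).span_eq_top
  have hCfin : ∀ l, Module.Finite k (C l) := fun l =>
    Module.finite_of_finrank_pos (by rw [hC l]; have := hnq.sixteen_le; omega)
  rw [Module.finrank_prod, Module.finrank_pi_fintype, Module.finrank_pi_fintype,
    Finset.sum_congr rfl fun l _ => (hs l).isString.finrank_eq hnq
      (pow_ne_zero _ (inv_ne_zero hnq.q_ne_zero)) (hs l).span_eq_top,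
    Finset.sum_congr rfl fun l _ => hC l, Finset.sum_const, Finset.card_univ, smul_eq_mul]

theorem nonempty_linearEquiv_of_linearIndependent [Module.Finite k V] (hnq : Admissible k n q)
    (hs : ∀ l, IsSimpleGenerator n q (i l) (j l) (s l))
    (hαγ : ∀ l, IsProjectiveGenerator n q (i' l) (j' l) (α l) (γ l))
    (hv : ∀ l, IsLowestWeight n q (q⁻¹ ^ (2 * i l)) ((-1) ^ j l) (v l))
    (hEv : ∀ l, E k n q ^ (n ^ 2 - 2 * i l + 1) • v l = 0)
    (hzx : ∀ l, IsProjectivePair n q (i' l) (j' l) (z l) (x l))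
    (hli : LinearIndependent k
      (Sum.elim v (Sum.elim z fun l => E k n q ^ (2 * i' l - 1) • z l)))
    (hdim : Module.finrank k V = ∑ l, (n ^ 2 - 2 * i l + 1) + Fintype.card κ * (2 * n ^ 2)) :
    Nonempty (V ≃ₗ[U k n q] (∀ l, A l) × (∀ l, C l)) := by
  obtain ⟨Φ, hΦ⟩ := exists_injective_linearMap hnq hs hαγ hv hEv hzx hli
  have hfin : Module.Finite k ((∀ l, A l) × (∀ l, C l)) :=
    Module.Finite.of_injective (Φ.restrictScalars k) hΦ
  have hsurj : Function.Surjective Φ :=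
    (LinearMap.injective_iff_surjective_of_finrank_eq_finrank (f := Φ.restrictScalars k)
      ((finrank_pi_prod_pi hnq hs hαγ).trans hdim.symm)).mp hΦ
  exact ⟨(LinearEquiv.ofBijective Φ ⟨hΦ, hsurj⟩).symm⟩

end Summands

theorem sum_range_add_two_mul (c m : ℕ) :
    ∑ l ∈ Finset.range m, (c + 2 * l) + m = m * (c + m) := by
  induction m with
  | zero => simp
  | succ m ih =>
    rw [Finset.sum_range_succ, show ∀ a b : ℕ, a + b + (m + 1) = a + m + (b + 1) by omega, ih]
    ring

theorem sum_finrank_add_card_mul {N p r : ℕ} (hp : 1 ≤ p) (hpr : p ≤ r) (hN : p + r ≤ N) :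
    ∑ l : Fin (2 * p - 1), (2 * N - 2 * (N + p - r - l) + 1) + (N - p - r + 1) * (2 * (2 * N))
      = (2 * N - 2 * p + 1) * (2 * N - 2 * r + 1) := by
  obtain ⟨p, rfl⟩ := Nat.exists_eq_add_of_le' hp
  obtain ⟨r, rfl⟩ := Nat.exists_eq_add_of_le hpr
  obtain ⟨N, rfl⟩ := Nat.exists_eq_add_of_le hN
  have hsum : ∑ l : Fin (2 * (p + 1) - 1),
      (2 * (p + 1 + (p + 1 + r) + N)
        - 2 * (p + 1 + (p + 1 + r) + N + (p + 1) - (p + 1 + r) - l) + 1)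
      = ∑ l ∈ Finset.range (2 * p + 1), (2 * r + 1 + 2 * l) := by
    rw [show 2 * (p + 1) - 1 = 2 * p + 1 by omega, Finset.sum_range]
    exact Finset.sum_congr rfl fun l _ => by have := l.2; omega
  have hgauss := sum_range_add_two_mul (2 * r + 1) (2 * p + 1)
  rw [hsum, show p + 1 + (p + 1 + r) + N - (p + 1) - (p + 1 + r) = N by omega,
    show 2 * (p + 1 + (p + 1 + r) + N) - 2 * (p + 1) = 2 * (p + 1 + r + N) by omega,
    show 2 * (p + 1 + (p + 1 + r) + N) - 2 * (p + 1 + r) = 2 * (p + 1 + N) by omega]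
  refine Nat.add_right_cancel (m := 2 * p + 1) ?_
  rw [add_right_comm, hgauss]
  ring

namespace TensorGrid

variable [IsScalarTower k (U k n q) V] {p r J l : ℕ}

theorem isWeight_inv_pow_of_mem (hnq : Admissible k n q) {s t c e j m : ℕ}
    (D : TensorGrid n q V s t (q⁻¹ ^ c) ((-1) ^ J)) {v : V} (hv : v ∈ D.homogeneous m)
    (he : c + 2 * m ≡ e [MOD n ^ 2]) (hj : J + m ≡ j [MOD 2]) :
    IsWeight n q (q⁻¹ ^ e) ((-1) ^ j) v := by
  have hq : q⁻¹ ^ n ^ 2 = 1 := by rw [inv_pow, hnq.q_pow_sq, inv_one]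
  have h := D.isWeight_of_mem hv
  rwa [← pow_add, ← pow_add, pow_eq_pow_of_modEq he hq, add_comm m,
    pow_eq_pow_of_modEq hj (neg_one_pow_two (R := k))] at h

section

variable (hnq : Admissible k n q) (hpr : p ≤ r) (hN : p + r ≤ n ^ 2 / 2)
  (D : TensorGrid n q V (n ^ 2 - 2 * p + 1) (n ^ 2 - 2 * r + 1) (q⁻¹ ^ (2 * (p + r))) ((-1) ^ J))
include hnq hpr hN D

theorem exists_isLowestWeight (hl : l < 2 * p - 1) :
    ∃ v ∈ D.homogeneous (n ^ 2 - 2 * r - l), v ≠ 0 ∧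
      IsLowestWeight n q (q⁻¹ ^ (2 * (n ^ 2 / 2 + p - r - l))) ((-1) ^ ((J + l) % 2)) v ∧
      E k n q ^ (n ^ 2 - 2 * (n ^ 2 / 2 + p - r - l) + 1) • v = 0 := by
  have hn2 := Nat.mul_div_cancel' hnq.two_dvd_sq
  obtain ⟨v, hv, hv0, hF⟩ :=
    D.exists_ne_zero_F_smul_eq_zero (m := n ^ 2 - 2 * r - l) (by omega) (by omega)
  have hdeg : 2 * (p + r) + 2 * (n ^ 2 - 2 * r - l) = 2 * (n ^ 2 / 2 + p - r - l) + n ^ 2 := by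
    omega
  have hlow : IsLowestWeight n q (q⁻¹ ^ (2 * (n ^ 2 / 2 + p - r - l))) ((-1) ^ ((J + l) % 2)) v :=
    { toIsWeight := D.isWeight_inv_pow_of_mem hnq hv (hdeg ▸ Nat.add_modEq_right)
        (by simp only [Nat.ModEq]; omega)
      F_smul := hF }
  refine ⟨v, hv, hv0, hlow, D.eq_zero_of_F_smul_eq_zero (by omega) (D.E_pow_smul_mem hv _) ?_⟩
  rw [hlow.F_smul_E_pow_smul hnq, hnq.lowerCoeff_inv_pow_eq_zero (by omega), zero_smul]

theorem exists_isProjectivePair (hp : 1 ≤ p) (hl : l < n ^ 2 / 2 - p - r + 1) :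
    ∃ z ∈ D.homogeneous l, z ≠ 0 ∧ E k n q ^ (2 * (n ^ 2 / 2 - p - r + 1 - l) - 1) • z ≠ 0 ∧
      ∃ x, IsProjectivePair n q (n ^ 2 / 2 - p - r + 1 - l) ((J + l + 1) % 2) z x := by
  have hn2 := Nat.mul_div_cancel' hnq.two_dvd_sq
  obtain ⟨z, hz, hz0, hFz⟩ := D.exists_ne_zero_F_smul_eq_zero (m := l) (by omega) (by omega)
  set i := n ^ 2 / 2 - p - r + 1 - l
  obtain ⟨x, hx, -, hFx⟩ := D.exists_F_smul_eq (by omega) (D.E_pow_smul_mem hz (2 * i - 2))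
  have hdeg : 2 * (p + r) + 2 * (l + (2 * i - 2) + 1) = 2 * i + n ^ 2 := by omega
  have hwt : q ^ (2 * i - 2) = q⁻¹ ^ (2 * (p + r) + 2 * l) := by
    rw [hnq.inv_pow_eq_pow_sub (by omega)]
    congr 1
    omega
  have hsign : -(-1 : k) ^ ((J + l + 1) % 2) = (-1) ^ (J + l) := by
    rw [← neg_one_pow_eq_pow_mod_two, pow_succ, mul_neg_one, neg_neg]
  refine ⟨z, hz, hz0, D.E_pow_smul_ne_zero (by omega) hz hz0, x,
    { one_le := by omega
      two_mul_le := by omega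
      isLowestWeight := ⟨?_, hFz⟩
      isWeight := D.isWeight_inv_pow_of_mem hnq hx (hdeg ▸ Nat.add_modEq_right)
        (by simp only [Nat.ModEq]; omega)
      F_smul := hFx }⟩
  rw [hwt, hsign]
  exact D.isWeight_inv_pow_of_mem hnq hz rfl rfl

theorem nonempty_linearEquiv (hp : 1 ≤ p) :
    Nonempty (V ≃ₗ[U k n q]
      (∀ l : Fin (2 * p - 1), S k n q (n ^ 2 / 2 + p - r - l) ((J + l) % 2)) ×
      (∀ l : Fin (n ^ 2 / 2 - p - r + 1),
        P k n q (n ^ 2 / 2 - p - r + 1 - l) ((J + l + 1) % 2))) := by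
  have hn2 := Nat.mul_div_cancel' hnq.two_dvd_sq
  have : Module.Finite k V := Module.Finite.of_basis D.basis
  choose s hs using fun l : Fin (2 * p - 1) =>
    hnq.exists_isSimpleGenerator (i := n ^ 2 / 2 + p - r - l) (j := (J + l) % 2)
      (by omega) (by omega) (by omega)
  choose α γ hαγ using fun l : Fin (n ^ 2 / 2 - p - r + 1) =>
    hnq.exists_isProjectiveGenerator (i := n ^ 2 / 2 - p - r + 1 - l) (j := (J + l + 1) % 2)
      (by omega) (by omega) (by omega)
  choose v hv hv0 hlow hEv using fun l : Fin (2 * p - 1) =>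
    D.exists_isLowestWeight hnq hpr hN l.2
  choose z hz hz0 hEz x hzx using fun l : Fin (n ^ 2 / 2 - p - r + 1) =>
    D.exists_isProjectivePair hnq hpr hN hp l.2
  let degree : Fin (2 * p - 1) ⊕ Fin (n ^ 2 / 2 - p - r + 1) ⊕ Fin (n ^ 2 / 2 - p - r + 1) → ℕ :=
    Sum.elim (fun l => n ^ 2 - 2 * r - l) (Sum.elim (fun l => l)
      fun l => l + (2 * (n ^ 2 / 2 - p - r + 1 - l) - 1))
  have hdegree : Function.Injective degree := by
    rintro (a | a | a) (b | b | b) hab <;>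
      simp only [degree, Sum.elim_inl, Sum.elim_inr] at hab <;>
      first | (exfalso; omega) | (congr 1; omega) | (congr 2; omega)
  refine nonempty_linearEquiv_of_linearIndependent hnq hs hαγ hlow hEv hzx
    (D.linearIndependent_of_mem_homogeneous hdegree ?_ ?_) ?_
  · rintro (l | l | l)
    exacts [hv l, hz l, D.E_pow_smul_mem (hz l) _]
  · rintro (l | l | l)
    exacts [hv0 l, hz0 l, hEz l]
  · rw [Module.finrank_eq_card_basis D.basis, Fintype.card_prod, Fintype.card_fin, Fintype.card_fin,
      Fintype.card_fin]
    have hsum := sum_finrank_add_card_mul hp hpr hN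
    rw [hn2] at hsum
    exact hsum.symm

end

end TensorGrid

end Decomposition

section TensorProducts

variable {k : Type} [Field k] {n : ℕ} {q : k}

theorem Admissible.isUnit_flat (hnq : Admissible k n q) : IsUnit (flat k n q) := by
  have hflat : flat k n q =
      ∑ r ∈ Finset.range n, q⁻¹ ^ r • spectralIdempotent n (q ^ n) (K k n q) r :=
    Finset.sum_congr rfl fun r hr => by
      rw [hnq.oneIdem_eq_spectralIdempotent (Finset.mem_range.mp hr).le]
  rw [hflat]
  exact isUnit_sum_smul_spectralIdempotent hnq.natCast_ne_zero hnq.isPrimitiveRoot_q_pow K_pow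
    fun r => pow_ne_zero r (inv_ne_zero hnq.q_ne_zero)

theorem Admissible.exists_eigenvalueK_eq_pow (hnq : Admissible k n q) {a b : k}
    (ha : a ^ (n ^ 2 / 2) = 1) (hb : b ^ 2 = 1) : ∃ m < n, eigenvalueK n a b = (q ^ n) ^ m := by
  have : NeZero n := ⟨hnq.pos.ne'⟩
  obtain ⟨m, hm, h⟩ := hnq.isPrimitiveRoot_q_pow.eq_pow_of_pow_eq_one (hnq.eigenvalueK_pow ha hb)
  exact ⟨m, hm, h.symm⟩

section KEigenvectors

variable {M : Type*} [AddCommGroup M] [Module k M] [Module (U k n q) M]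
  [IsScalarTower k (U k n q) M] {r m : ℕ} {x : M} {κ : k}

namespace Admissible

variable (hnq : Admissible k n q)
include hnq

theorem Kinv_smul (hκ : κ ≠ 0) (hx : K k n q • x = κ • x) : Kinv k n q • x = κ⁻¹ • x := by
  rw [eq_inv_smul_iff₀ hκ, ← smul_comm, ← hx, ← mul_smul, hnq.Kinv_mul_K, one_smul]

variable (hm : m < n) (hx : K k n q • x = (q ^ n) ^ m • x)
include hm hx

theorem oneIdem_smul (hr : r < n) :
    oneIdem k n q r • x = (if r = m then 1 else 0 : k) • x := by
  have hq : q ^ n ≠ 0 := pow_ne_zero n hnq.q_ne_zero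
  have hqn := hnq.isPrimitiveRoot_q_pow
  rw [hnq.oneIdem_eq_spectralIdempotent hr.le]
  split_ifs with h
  · rw [one_smul, spectralIdempotent_smul_of_eq hnq.natCast_ne_zero hq (h ▸ hx)]
  · rw [zero_smul]
    refine spectralIdempotent_smul_of_ne hqn.pow_eq_one hq ?_ ?_ hx
    · rw [pow_right_comm, hqn.pow_eq_one, one_pow]
    · exact fun he => h (hqn.pow_inj hm hr he).symm

theorem sum_oneIdem_smul :
    (∑ r ∈ Finset.Icc 1 (n - 1), oneIdem k n q r) • x = (if m = 0 then 0 else 1 : k) • x := by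
  have hsum : ∀ r ∈ Finset.Icc 1 (n - 1),
      oneIdem k n q r • x = (if r = m then 1 else 0 : k) • x := fun r hr =>
    hnq.oneIdem_smul hm hx (by have := Finset.mem_Icc.mp hr; omega)
  rw [Finset.sum_smul, Finset.sum_congr rfl hsum, ← Finset.sum_smul, Finset.sum_ite_eq']
  simp only [Finset.mem_Icc, ← ite_not (m = 0)]
  congr 2
  exact propext (by omega)

theorem flat_smul : flat k n q • x = q⁻¹ ^ m • x := by
  rw [flat, Finset.sum_smul, Finset.sum_eq_single_of_mem m (Finset.mem_range.mpr hm), smul_assoc,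
    hnq.oneIdem_smul hm hx hm, if_pos rfl, one_smul]
  intro r hr hrm
  rw [smul_assoc, hnq.oneIdem_smul hm hx (Finset.mem_range.mp hr), if_neg hrm, zero_smul, smul_zero]

theorem inverse_flat_smul : Ring.inverse (flat k n q) • x = q ^ m • x := by
  have hflat := hnq.flat_smul hm hx
  rw [inv_pow, eq_comm, inv_smul_eq_iff₀ (pow_ne_zero m hnq.q_ne_zero)] at hflat
  nth_rw 1 [hflat]
  rw [smul_comm, ← mul_smul, Ring.inverse_mul_cancel _ hnq.isUnit_flat, one_smul]

end Admissible

end KEigenvectors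

/-- The `k`-module `M ⊗ N` with `U` acting through `Δ`, as a type of its own, so that this action
can be an instance. -/
def ComulTensor (_ : U k n q →ₐ[k] U k n q ⊗[k] U k n q) (M N : Type) [AddCommGroup M]
    [Module k M] [AddCommGroup N] [Module k N] : Type :=
  M ⊗[k] N

namespace ComulTensor

section VectorSpace

variable (Δ : U k n q →ₐ[k] U k n q ⊗[k] U k n q) (M N : Type) [AddCommGroup M] [Module k M]
  [AddCommGroup N] [Module k N]

instance : AddCommGroup (ComulTensor Δ M N) := inferInstanceAs (AddCommGroup (M ⊗[k] N))

instance : Module k (ComulTensor Δ M N) := inferInstanceAs (Module k (M ⊗[k] N))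

/-- The bilinear map `(x, y) ↦ x ⊗ y`. -/
def mk : M →ₗ[k] N →ₗ[k] ComulTensor Δ M N := TensorProduct.mk k M N

end VectorSpace

variable {Δ : U k n q →ₐ[k] U k n q ⊗[k] U k n q} {M N : Type}
  [AddCommGroup M] [Module k M] [Module (U k n q) M]
  [IsScalarTower k (U k n q) M] [SMulCommClass (U k n q) k M]
  [AddCommGroup N] [Module k N] [Module (U k n q) N]
  [IsScalarTower k (U k n q) N] [SMulCommClass (U k n q) k N]

instance : Module (U k n q) (ComulTensor Δ M N) := tensorModule k n q Δ M N

variable (Δ M N) in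
/-- The action of `U ⊗ U` on `M ⊗ N`, whose composite with `Δ` is the action of `U`. -/
def tensorAction : U k n q ⊗[k] U k n q →ₐ[k] Module.End k (ComulTensor Δ M N) :=
  Module.endTensorEndAlgHom.comp
    (Algebra.TensorProduct.map (Algebra.lsmul k k M) (Algebra.lsmul k k N))

theorem smul_eq_tensorAction (u : U k n q) (z : ComulTensor Δ M N) :
    u • z = tensorAction Δ M N (Δ u) z := rfl

theorem tensorAction_tmul (a b : U k n q) (x : M) (y : N) :
    tensorAction Δ M N (a ⊗ₜ b) (mk Δ M N x y) = mk Δ M N (a • x) (b • y) := rfl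

instance : IsScalarTower k (U k n q) (ComulTensor Δ M N) where
  smul_assoc c u z := by
    rw [smul_eq_tensorAction, smul_eq_tensorAction, map_smul, map_smul, LinearMap.smul_apply]

theorem smul_mk_of_eq_tmul {u a b : U k n q} (hu : Δ u = a ⊗ₜ b) (x : M) (y : N) :
    u • mk Δ M N x y = mk Δ M N (a • x) (b • y) := by
  rw [smul_eq_tensorAction, hu, tensorAction_tmul]

variable (hnq : Admissible k n q) (hΔ : IsComul k n q Δ) {x : M} {y : N} {a b a' b' : k} {l m : ℕ}

include hΔ in
theorem isWeight_mk (hx : IsWeight n q a b x) (hy : IsWeight n q a' b' y) :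
    IsWeight n q (a * a') (b * b') (mk Δ M N x y) where
  G_smul := by
    have hG : Δ (G k n q) = G k n q ⊗ₜ G k n q := by
      rw [G, Kinv, map_mul, map_pow, hΔ.1, hΔ.2.1, Algebra.TensorProduct.tmul_pow,
        Algebra.TensorProduct.tmul_mul_tmul]
    rw [smul_mk_of_eq_tmul hG, hx.G_smul, hy.G_smul, map_smul, map_smul, LinearMap.smul_apply,
      smul_smul, mul_comm]
  H_smul := by
    have hH : Δ (H k n q) = H k n q ⊗ₜ H k n q := by
      rw [H, map_mul, map_pow, hΔ.1, hΔ.2.1, Algebra.TensorProduct.tmul_pow,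
        Algebra.TensorProduct.tmul_mul_tmul]
    rw [smul_mk_of_eq_tmul hH, hx.H_smul, hy.H_smul, map_smul, map_smul, LinearMap.smul_apply,
      smul_smul, mul_comm]

include hnq hΔ

theorem E_smul_mk {m' : ℕ} (hm : m < n) (hm' : m' < n) (hx : K k n q • x = (q ^ n) ^ l • x)
    (hy : K k n q • y = (q ^ n) ^ m • y)
    (hEy : K k n q • E k n q • y = (q ^ n) ^ m' • E k n q • y) :
    E k n q • mk Δ M N x y = q ^ m • mk Δ M N (E k n q • x) y
      + (if m' = 0 then ((q ^ n) ^ l)⁻¹ else 1) • mk Δ M N x (E k n q • y) := by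
  have hκ : (q ^ n) ^ l ≠ 0 := pow_ne_zero l (pow_ne_zero n hnq.q_ne_zero)
  rw [smul_eq_tensorAction, hΔ.2.2.1, map_add, map_add, LinearMap.add_apply, LinearMap.add_apply,
    tensorAction_tmul, tensorAction_tmul, tensorAction_tmul, mul_smul, mul_smul, one_smul,
    hnq.inverse_flat_smul hm hy, hnq.Kinv_smul hκ hx, hnq.oneIdem_smul hm' hEy hnq.pos,
    hnq.sum_oneIdem_smul hm' hEy, add_assoc]
  by_cases h : m' = 0
  · simp [h]
  · simp [h, Ne.symm h]

theorem F_smul_mk (hm : m < n) (hGx : G k n q • x = a • x) (hx : K k n q • x = (q ^ n) ^ l • x)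
    (hy : K k n q • y = (q ^ n) ^ m • y) :
    F k n q • mk Δ M N x y = q⁻¹ ^ m • mk Δ M N (F k n q • x) y
      + (a * if m = 0 then (q ^ n) ^ l else 1) • mk Δ M N x (F k n q • y) := by
  have hKh : Kh k n q • x = (a * (q ^ n) ^ l) • x := by
    rw [← hnq.G_mul_K, mul_smul, hx, smul_comm, hGx, smul_smul, mul_comm]
  rw [smul_eq_tensorAction, hΔ.2.2.2, map_add, map_add, LinearMap.add_apply, LinearMap.add_apply,
    tensorAction_tmul, tensorAction_tmul, tensorAction_tmul, mul_smul (F k n q),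
    mul_smul (F k n q), hnq.flat_smul hm hy, hnq.oneIdem_smul hm hy hnq.pos,
    hnq.sum_oneIdem_smul hm hy, ← G, hGx, hKh, add_assoc]
  by_cases h : m = 0
  · simp [h]
  · simp [h, Ne.symm h]

section Strings

variable {v : M} {w : N} {l m : ℕ → ℕ} (hm : ∀ b, m b < n)
  (hv : ∀ a, K k n q • E k n q ^ a • v = (q ^ n) ^ l a • E k n q ^ a • v)
  (hw : ∀ b, K k n q • E k n q ^ b • w = (q ^ n) ^ m b • E k n q ^ b • w)
include hm hv hw

theorem E_smul_mk_E_pow_smul (a b : ℕ) :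
    E k n q • mk Δ M N (E k n q ^ a • v) (E k n q ^ b • w) =
      q ^ m b • mk Δ M N (E k n q ^ (a + 1) • v) (E k n q ^ b • w)
        + (if m (b + 1) = 0 then ((q ^ n) ^ l a)⁻¹ else 1) •
          mk Δ M N (E k n q ^ a • v) (E k n q ^ (b + 1) • w) := by
  simp only [pow_succ' _ a, pow_succ' _ b, mul_smul (E k n q)]
  exact E_smul_mk hnq hΔ (hm b) (hm (b + 1)) (hv a) (hw b)
    (by rw [← mul_smul (E k n q), ← pow_succ', hw])

theorem F_smul_mk_E_pow_smul (hxv : IsLowestWeight n q a b v) (hyw : IsLowestWeight n q a' b' w)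
    (c d : ℕ) :
    F k n q • mk Δ M N (E k n q ^ c • v) (E k n q ^ d • w) =
      (q⁻¹ ^ m d * lowerCoeff q c a) • mk Δ M N (E k n q ^ (c - 1) • v) (E k n q ^ d • w)
        + ((a * q⁻¹ ^ (2 * c) * if m d = 0 then (q ^ n) ^ l c else 1) * lowerCoeff q d a') •
          mk Δ M N (E k n q ^ c • v) (E k n q ^ (d - 1) • w) := by
  rw [F_smul_mk hnq hΔ (hm d) (hnq.isWeight_E_pow_smul hxv.toIsWeight c).G_smul (hv c) (hw d),
    hxv.F_smul_E_pow_smul hnq, hyw.F_smul_E_pow_smul hnq, (mk Δ M N).map_smul,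
    LinearMap.smul_apply, (mk Δ M N _).map_smul, smul_smul, smul_smul]

end Strings

end ComulTensor

namespace IsSimpleGenerator

variable {i j i' j' : ℕ} (hnq : Admissible k n q)
include hnq

theorem exists_K_smul_E_pow_smul {M : Type*} [AddCommGroup M] [Module k M] [Module (U k n q) M]
    [IsScalarTower k (U k n q) M] {v : M} (hv : IsSimpleGenerator n q i j v) (s : ℕ) :
    ∃ m < n, K k n q • E k n q ^ s • v = (q ^ n) ^ m • E k n q ^ s • v := by
  have hx := hnq.isWeight_E_pow_smul hv.isString.toIsWeight s
  have ha : (q⁻¹ ^ (2 * i) * q⁻¹ ^ (2 * s)) ^ (n ^ 2 / 2) = 1 := by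
    rw [← pow_add, ← mul_add, inv_pow, inv_pow, hnq.q_pow_two_mul_pow_half, inv_one]
  have hb : ((-1 : k) ^ s * (-1) ^ j) ^ 2 = 1 := by rw [← pow_add, neg_one_pow_sq]
  obtain ⟨m, hm, h⟩ := hnq.exists_eigenvalueK_eq_pow ha hb
  exact ⟨m, hm, h ▸ hnq.K_smul (hnq.ne_zero_of_pow_half_sq ha) hx⟩

theorem nonempty_tensorGrid {Δ : U k n q →ₐ[k] U k n q ⊗[k] U k n q} (hΔ : IsComul k n q Δ)
    {M N : Type} [AddCommGroup M] [Module k M] [Module (U k n q) M]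
    [IsScalarTower k (U k n q) M] [SMulCommClass (U k n q) k M]
    [AddCommGroup N] [Module k N] [Module (U k n q) N]
    [IsScalarTower k (U k n q) N] [SMulCommClass (U k n q) k N] {v : M} {w : N}
    (hv : IsSimpleGenerator n q i j v) (hw : IsSimpleGenerator n q i' j' w) :
    Nonempty (TensorGrid n q (ComulTensor Δ M N) (n ^ 2 - 2 * i + 1) (n ^ 2 - 2 * i' + 1)
      (q⁻¹ ^ (2 * (i + i'))) ((-1) ^ (j + j'))) := by
  choose l _ hKv using hv.exists_K_smul_E_pow_smul hnq
  choose m hm hKw using hw.exists_K_smul_E_pow_smul hnq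
  have hq := hnq.q_ne_zero
  have hweight (a : ℕ) := hnq.isWeight_E_pow_smul hv.isString.toIsWeight a
  have hqinv {e : ℕ} : q⁻¹ ^ e ≠ 0 := pow_ne_zero e (inv_ne_zero hq)
  exact ⟨{
    basis := (hv.isString.basis hnq hqinv hv.span_eq_top).tensorProduct
      (hw.isString.basis hnq hqinv hw.span_eq_top)
    vec a b := ComulTensor.mk Δ M N (E k n q ^ a • v) (E k n q ^ b • w)
    basis_apply p := by
      refine (Module.Basis.tensorProduct_apply' _ _ p).trans ?_
      rw [IsString.basis_apply, IsString.basis_apply]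
      rfl
    vec_eq_zero a b h := by
      rcases h with h | h
      · rw [E_pow_smul_eq_zero_of_le hv.isString.E_pow_succ_smul h, map_zero,
          LinearMap.zero_apply]
      · rw [E_pow_smul_eq_zero_of_le hw.isString.E_pow_succ_smul h, map_zero]
    raiseLeft _ b := q ^ m b
    raiseRight a b := if m (b + 1) = 0 then ((q ^ n) ^ l a)⁻¹ else 1
    lowerLeft a b := q⁻¹ ^ m b * lowerCoeff q a (q⁻¹ ^ (2 * i))
    lowerRight a b := q⁻¹ ^ (2 * i) * q⁻¹ ^ (2 * a) * (if m b = 0 then (q ^ n) ^ l a else 1) *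
      lowerCoeff q b (q⁻¹ ^ (2 * i'))
    E_smul_vec a b _ _ := ComulTensor.E_smul_mk_E_pow_smul hnq hΔ hm hKv hKw a b
    F_smul_vec a b _ _ := ComulTensor.F_smul_mk_E_pow_smul hnq hΔ hm hKv hKw
      hv.isString.toIsLowestWeight hw.isString.toIsLowestWeight a b
    raiseLeft_ne_zero a b _ _ := pow_ne_zero _ hq
    raiseRight_ne_zero a b _ _ := by split_ifs <;> simp [hq]
    lowerLeft_ne_zero a b ha ha' _ := mul_ne_zero hqinv (hv.lowerCoeff_ne_zero hnq ha ha')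
    lowerRight_ne_zero a b hb _ hb' := by
      refine mul_ne_zero (mul_ne_zero (mul_ne_zero hqinv hqinv) ?_)
        (hw.lowerCoeff_ne_zero hnq hb hb')
      split_ifs <;> simp [hq]
    lowerLeft_zero b := by rw [lowerCoeff_zero, mul_zero]
    lowerRight_zero a := by rw [lowerCoeff_zero, mul_zero]
    isWeight_vec a b _ _ := by
      convert ComulTensor.isWeight_mk hΔ (hweight a)
        (hnq.isWeight_E_pow_smul hw.isString.toIsWeight b) using 1 <;> ring }⟩

end IsSimpleGenerator

end TensorProducts

end QFL

open QFL DirectSum in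
theorem statement19_general (k : Type) [Field k]
    (n : ℕ) (hn : 0 < n) (h4 : 4 ∣ n) (q : k) (hq : IsPrimitiveRoot q (n ^ 2))
    (Δ : U k n q →ₐ[k] (U k n q ⊗[k] U k n q)) (hΔ : IsComul k n q Δ) :
    ∀ i₁ i₂ j₁ j₂ : ℕ, 1 ≤ i₁ → i₁ ≤ n ^ 2 / 2 → 1 ≤ i₂ → i₂ ≤ n ^ 2 / 2 →
      j₁ ≤ 1 → j₂ ≤ 1 → 2 * i₁ - 1 < n ^ 2 - 2 * i₂ + 1 →
      letI := tensorModule k n q Δ (S k n q i₁ j₁) (S k n q i₂ j₂)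
      (i₁ ≤ i₂ →
        Nonempty (((S k n q i₁ j₁) ⊗[k] (S k n q i₂ j₂)) ≃ₗ[U k n q]
          ((⨁ l : Fin (2 * i₁ - 1),
            (S k n q (n ^ 2 / 2 + i₁ - i₂ - l) ((j₁ + j₂ + l) % 2))) ×
          (⨁ l : Fin (n ^ 2 / 2 - i₁ - i₂ + 1),
            (P k n q (n ^ 2 / 2 - i₁ - i₂ + 1 - l) ((j₁ + j₂ + l + 1) % 2)))))) ∧
      (i₂ < i₁ →
        Nonempty (((S k n q i₁ j₁) ⊗[k] (S k n q i₂ j₂)) ≃ₗ[U k n q]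
          ((⨁ l : Fin (2 * i₂ - 1),
            (S k n q (n ^ 2 / 2 - i₁ + i₂ - l) ((j₁ + j₂ + l) % 2))) ×
          (⨁ l : Fin (n ^ 2 / 2 - i₁ - i₂ + 1),
            (P k n q (n ^ 2 / 2 - i₁ - i₂ + 1 - l) ((j₁ + j₂ + l + 1) % 2)))))) := by
  intro i₁ i₂ j₁ j₂ hi₁ hi₁' hi₂ hi₂' hj₁ hj₂ hlt
  have hnq : Admissible k n q := ⟨hn, h4, hq⟩
  have hn2 := Nat.mul_div_cancel' hnq.two_dvd_sq
  obtain ⟨v₁, hv₁⟩ := hnq.exists_isSimpleGenerator hi₁ hi₁' hj₁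
  obtain ⟨v₂, hv₂⟩ := hnq.exists_isSimpleGenerator hi₂ hi₂' hj₂
  obtain ⟨D⟩ := hv₁.nonempty_tensorGrid hnq hΔ hv₂
  refine ⟨fun h => ?_, fun h => ?_⟩
  · obtain ⟨e⟩ := D.nonempty_linearEquiv hnq h (by omega) hi₁
    exact ⟨e.trans (.prodCongr (linearEquivFunOnFintype _ _ _).symm
      (linearEquivFunOnFintype _ _ _).symm)⟩
  · rw [add_comm i₁ i₂] at D
    obtain ⟨e⟩ := D.swap.nonempty_linearEquiv hnq h.le (by omega) hi₂
    rw [← Nat.sub_add_comm hi₁', Nat.sub_right_comm (n ^ 2 / 2) i₁ i₂]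
    exact ⟨e.trans (.prodCongr (linearEquivFunOnFintype _ _ _).symm
      (linearEquivFunOnFintype _ _ _).symm)⟩

open QFL DirectSum in
/-- Theorem 4.8 (c), (d): decomposition of `S_{2i₁,j₁} ⊗ S_{2i₂,j₂}` into simples and
projectives when `2i₁-1 < n²-2i₂+1`.  (`\overline{j₁+j₂+l-1}` is encoded as
`(j₁+j₂+l+1) % 2`.) -/
theorem statement19 (k : Type) [Field k] [IsAlgClosed k] [CharZero k]
    (n : ℕ) (hn : 0 < n) (h4 : 4 ∣ n) (q : k) (hq : IsPrimitiveRoot q (n ^ 2))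
    (Δ : U k n q →ₐ[k] (U k n q ⊗[k] U k n q)) (hΔ : IsComul k n q Δ) :
    ∀ i₁ i₂ j₁ j₂ : ℕ, 1 ≤ i₁ → i₁ ≤ n ^ 2 / 2 → 1 ≤ i₂ → i₂ ≤ n ^ 2 / 2 →
      j₁ ≤ 1 → j₂ ≤ 1 → 2 * i₁ - 1 < n ^ 2 - 2 * i₂ + 1 →
      letI := tensorModule k n q Δ (S k n q i₁ j₁) (S k n q i₂ j₂)
      -- (c)
      (i₁ ≤ i₂ →
        Nonempty (((S k n q i₁ j₁) ⊗[k] (S k n q i₂ j₂)) ≃ₗ[U k n q]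
          ((⨁ l : Fin (2 * i₁ - 1),
            (S k n q (n ^ 2 / 2 + i₁ - i₂ - l) ((j₁ + j₂ + l) % 2))) ×
          (⨁ l : Fin (n ^ 2 / 2 - i₁ - i₂ + 1),
            (P k n q (n ^ 2 / 2 - i₁ - i₂ + 1 - l) ((j₁ + j₂ + l + 1) % 2)))))) ∧
      -- (d)
      (i₂ < i₁ →
        Nonempty (((S k n q i₁ j₁) ⊗[k] (S k n q i₂ j₂)) ≃ₗ[U k n q]
          ((⨁ l : Fin (2 * i₂ - 1),
            (S k n q (n ^ 2 / 2 - i₁ + i₂ - l) ((j₁ + j₂ + l) % 2))) ×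
          (⨁ l : Fin (n ^ 2 / 2 - i₁ - i₂ + 1),
            (P k n q (n ^ 2 / 2 - i₁ - i₂ + 1 - l) ((j₁ + j₂ + l + 1) % 2)))))) :=
  statement19_general k n hn h4 q hq Δ hΔ
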